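/- Let {X_i : i ∈ 𝒥} satisfy condition (LD4*) and put κ = max_{i∈𝒥} max(|D_i*|, |{j ∈ 𝒥 : i ∈ D_j*}|). For each i let ξ_i be a measurable function of X_i with E ξ_i = 0 and |ξ_i| ≤ 1/(4κ). Define ξ_{A_j} = Σ_{l∈A_j} ξ_l, ξ_{B_j} = Σ_{l∈B_j} ξ_l and T = Σ_{j∈𝒥} ξ_j, and assume 1/2 ≤ E T² ≤ 2. Fix i ∈ 𝒥 and let ζ = (ξ_i, ξ_{A_i}, ξ_{B_i}). Then there is an absolute constant C such that for any Borel measurable a, b : ℝ³ → ℝ with 0 ≤ a ≤ b pointwise, writing a_ζ = a(ζ), b_ζ = b(ζ) and α = 16 κ² Σ_{j∈𝒥} E|ξ_j|³, one has almost surely E[(1 + T)³ · 1{a_ζ ≤ T ≤ b_ζ} | σ(ζ)] ≤ C (b_ζ − a_ζ + α). -/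

import Mathlib

open MeasureTheory ProbabilityTheory Real

/-!
The proof is Stein's method with the concentration inequality used as its own a priori bound.

Write `W` for the part of `T` outside `C*_i`, so that `|T - W| ≤ 1/4` while `W` has a bounded fourth
moment and `|W|³` is essentially independent of `ζ`. On the event `a ≤ T ≤ b` the factor `(1 + T)³`
is comparable to `(1 + a₊)³` up to a term of size `(b - a) |W|³`, so it suffices to bound
`E[w (1 + a₊)³ 1{a ≤ T ≤ b}]` by a multiple of `E[w (b - a + α)]` for every bounded `w ≥ 0` that is
measurable with respect to `(ξ_k : k ∈ B_i)`.

Let `f` be the primitive of a trapezoid that dominates this weighted indicator and has slopes of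
width `α`. For `j ∉ C*_i` the variable `ξ_j` is independent of `T - ξ_{A_j}` and `ζ` jointly, whence
`E ξ_j f(T) = E ∫ f'(T + t) K_j(t) dt` with Stein's kernel `K_j` of the block `A_j`. The left side,
summed over `j`, is at most a multiple of the desired bound. On the right, the mean kernel has mass
at least `7/16`, its fluctuation has variance `O(α)` even when weighted by `|W|³`, by the
independence relations up to `D*`, and replacing `f'(T + t)` by `f'(T)` costs the probability that
`T` lies on one of the two slopes. That last probability is again of the form to be bounded, so any
admissible constant `L` improves to `c + L / 2`; iterating removes `L`. When `α` is not small the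
claim follows from the fourth moment of `W` alone.
-/

namespace SteinConcentration

open Finset (univ)

/-- `f` is a bounded real function, measurable for the σ-algebra `m`: the class of test functions
for which every integral below exists. -/
@[fun_prop]
def BddMeas {Ω : Type*} (m : MeasurableSpace Ω) (f : Ω → ℝ) : Prop :=
  Measurable[m] f ∧ ∃ C, ∀ ω, |f ω| ≤ C

namespace BddMeas

variable {Ω : Type*} {m m' : MeasurableSpace Ω} {f g : Ω → ℝ}

lemma mono (hf : BddMeas m f) (h : m ≤ m') : BddMeas m' f := ⟨hf.1.mono h le_rfl, hf.2⟩

lemma comp_measurable {Ω' : Type*} {m' : MeasurableSpace Ω'} (hf : BddMeas m f) {φ : Ω' → Ω}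
    (hφ : Measurable[m', m] φ) : BddMeas m' fun ω => f (φ ω) :=
  ⟨hf.1.comp hφ, hf.2.imp fun _ h _ => h _⟩

@[fun_prop]
lemma const (c : ℝ) : BddMeas m fun _ => c := ⟨measurable_const, |c|, fun _ => le_rfl⟩

lemma continuous_comp₂ (hf : BddMeas m f) (hg : BddMeas m g) {φ : ℝ × ℝ → ℝ}
    (hφ : Continuous φ) : BddMeas m fun ω => φ (f ω, g ω) := by
  obtain ⟨hfm, C, hC⟩ := hf
  obtain ⟨hgm, D, hD⟩ := hg
  obtain ⟨M, hM⟩ := ((isCompact_Icc (a := -C) (b := C)).prod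
    (isCompact_Icc (a := -D) (b := D))).exists_bound_of_continuousOn hφ.continuousOn
  exact ⟨hφ.measurable.comp (hfm.prodMk hgm), M,
    fun ω => hM _ ⟨abs_le.mp (hC ω), abs_le.mp (hD ω)⟩⟩

lemma continuous_comp (hf : BddMeas m f) {φ : ℝ → ℝ} (hφ : Continuous φ) :
    BddMeas m fun ω => φ (f ω) :=
  hf.continuous_comp₂ (const 0) (hφ.comp continuous_fst)

@[fun_prop]
lemma add (hf : BddMeas m f) (hg : BddMeas m g) : BddMeas m fun ω => f ω + g ω :=
  hf.continuous_comp₂ hg continuous_add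

@[fun_prop]
lemma mul (hf : BddMeas m f) (hg : BddMeas m g) : BddMeas m fun ω => f ω * g ω :=
  hf.continuous_comp₂ hg continuous_mul

@[fun_prop]
lemma sub (hf : BddMeas m f) (hg : BddMeas m g) : BddMeas m fun ω => f ω - g ω :=
  hf.continuous_comp₂ hg continuous_sub

@[fun_prop]
lemma abs (hf : BddMeas m f) : BddMeas m fun ω => |f ω| := hf.continuous_comp continuous_abs

@[fun_prop]
lemma pow (hf : BddMeas m f) (n : ℕ) : BddMeas m fun ω => f ω ^ n :=
  hf.continuous_comp (continuous_pow n)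

@[fun_prop]
lemma max (hf : BddMeas m f) (hg : BddMeas m g) : BddMeas m fun ω => max (f ω) (g ω) :=
  hf.continuous_comp₂ hg continuous_max

@[fun_prop]
lemma sum {ι : Type*} (s : Finset ι) {f : ι → Ω → ℝ} (hf : ∀ i ∈ s, BddMeas m (f i)) :
    BddMeas m fun ω => ∑ i ∈ s, f i ω := by
  classical
  induction s using Finset.induction_on with
  | empty => simpa using const (m := m) 0
  | insert a s ha ih =>
    simp only [Finset.sum_insert ha]
    exact (hf a (Finset.mem_insert_self a s)).add
      (ih fun i hi => hf i (Finset.mem_insert_of_mem hi))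

end BddMeas

section Integral

variable {Ω : Type*} {m0 : MeasurableSpace Ω} {μ : Measure Ω} {f g : Ω → ℝ}

namespace BddMeas

lemma integral_mul_of_indep {m₁ m₂ : MeasurableSpace Ω} (h : Indep m₁ m₂ μ) (h₁ : m₁ ≤ m0)
    (h₂ : m₂ ≤ m0) (hf : BddMeas m₁ f) (hg : BddMeas m₂ g) :
    ∫ ω, f ω * g ω ∂μ = (∫ ω, f ω ∂μ) * ∫ ω, g ω ∂μ :=
  ((IndepFun_iff_Indep f g μ).2
    (indep_of_indep_of_le h hf.1.comap_le hg.1.comap_le)).integral_fun_mul_eq_mul_integral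
    (hf.1.mono h₁ le_rfl).aestronglyMeasurable (hg.1.mono h₂ le_rfl).aestronglyMeasurable

variable [IsFiniteMeasure μ]

lemma integrable (hf : BddMeas m0 f) : Integrable f μ := by
  obtain ⟨hfm, C, hC⟩ := hf
  exact .of_bound hfm.aestronglyMeasurable C (.of_forall hC)

lemma integral_mono (hf : BddMeas m0 f) (hg : BddMeas m0 g) (h : ∀ ω, f ω ≤ g ω) :
    ∫ ω, f ω ∂μ ≤ ∫ ω, g ω ∂μ :=
  MeasureTheory.integral_mono hf.integrable hg.integrable h

lemma integral_add (hf : BddMeas m0 f) (hg : BddMeas m0 g) :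
    ∫ ω, (f ω + g ω) ∂μ = ∫ ω, f ω ∂μ + ∫ ω, g ω ∂μ :=
  MeasureTheory.integral_add hf.integrable hg.integrable

lemma integral_sub (hf : BddMeas m0 f) (hg : BddMeas m0 g) :
    ∫ ω, (f ω - g ω) ∂μ = ∫ ω, f ω ∂μ - ∫ ω, g ω ∂μ :=
  MeasureTheory.integral_sub hf.integrable hg.integrable

lemma integral_sum {ι : Type*} (s : Finset ι) {f : ι → Ω → ℝ} (hf : ∀ i, BddMeas m0 (f i)) :
    ∫ ω, ∑ i ∈ s, f i ω ∂μ = ∑ i ∈ s, ∫ ω, f i ω ∂μ :=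
  integral_finsetSum s fun i _ => (hf i).integrable

lemma abs_integral_le (hf : BddMeas m0 f) (hg : BddMeas m0 g) (h : ∀ ω, |f ω| ≤ g ω) :
    |∫ ω, f ω ∂μ| ≤ ∫ ω, g ω ∂μ :=
  abs_integral_le_integral_abs.trans (hf.abs.integral_mono hg h)

lemma sq_integral_mul_le (hf : BddMeas m0 f) (hg : BddMeas m0 g) :
    (∫ ω, f ω * g ω ∂μ) ^ 2 ≤ (∫ ω, f ω ^ 2 ∂μ) * ∫ ω, g ω ^ 2 ∂μ := by
  have quadratic_nonneg (t : ℝ) : 0 ≤ (∫ ω, g ω ^ 2 ∂μ) * (t * t)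
      + (2 * ∫ ω, f ω * g ω ∂μ) * t + ∫ ω, f ω ^ 2 ∂μ := by
    calc 0 ≤ ∫ ω, (f ω + t * g ω) ^ 2 ∂μ := integral_nonneg fun ω => sq_nonneg _
      _ = ∫ ω, (t * t * g ω ^ 2 + 2 * t * (f ω * g ω) + f ω ^ 2) ∂μ := by congr 1 with ω; ring
      _ = _ := by
        simp (disch := fun_prop) only [integral_add, integral_const_mul]
        ring
  have hdiscrim := discrim_le_zero quadratic_nonneg
  unfold discrim at hdiscrim
  linarith

end BddMeas

end Integral

lemma BddMeas.pow_integral_le {Ω : Type*} {m0 : MeasurableSpace Ω} {μ : Measure Ω}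
    [IsProbabilityMeasure μ] {f : Ω → ℝ} (hf : BddMeas m0 f) (h0 : ∀ ω, 0 ≤ f ω) (n : ℕ) :
    (∫ ω, f ω ∂μ) ^ n ≤ ∫ ω, f ω ^ n ∂μ :=
  (convexOn_pow n).map_integral_le (continuous_pow n).continuousOn isClosed_Ici
    (.of_forall h0) hf.integrable (hf.pow n).integrable

/-! ### Double counting over neighbourhoods -/

section DoubleCounting

variable {ι : Type*} {κ : ℕ}

lemma mul_mul_le_add_cubes {a b c : ℝ} (ha : 0 ≤ a) (hb : 0 ≤ b) (hc : 0 ≤ c) :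
    a * (b * c) ≤ (a ^ 3 + b ^ 3 + c ^ 3) / 3 := by
  nlinarith [mul_nonneg (add_nonneg (add_nonneg ha hb) hc) (add_nonneg (add_nonneg
    (sq_nonneg (a - b)) (sq_nonneg (b - c))) (sq_nonneg (a - c)))]

lemma mul_sum_mul_sum_le_cubes {s : Finset ι} (hs : s.card ≤ κ) {a : ℝ} {y z : ι → ℝ}
    (ha : 0 ≤ a) (hy : ∀ k, 0 ≤ y k) (hz : ∀ k, 0 ≤ z k) :
    a * ((∑ k ∈ s, y k) * ∑ l ∈ s, z l) ≤
      (κ ^ 2 * a ^ 3 + κ * ∑ k ∈ s, y k ^ 3 + κ * ∑ k ∈ s, z k ^ 3) / 3 := by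
  calc a * ((∑ k ∈ s, y k) * ∑ l ∈ s, z l)
      = ∑ k ∈ s, ∑ l ∈ s, a * (y k * z l) := by
        rw [Finset.sum_mul_sum]
        simp only [Finset.mul_sum]
    _ ≤ ∑ k ∈ s, ∑ l ∈ s, (a ^ 3 + y k ^ 3 + z l ^ 3) / 3 :=
        Finset.sum_le_sum fun k _ => Finset.sum_le_sum fun l _ =>
          mul_mul_le_add_cubes ha (hy k) (hz l)
    _ = (s.card ^ 2 * a ^ 3 + s.card * ∑ k ∈ s, y k ^ 3 + s.card * ∑ k ∈ s, z k ^ 3) / 3 := by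
        simp only [← Finset.sum_div, Finset.sum_add_distrib, Finset.sum_const, nsmul_eq_mul,
          ← Finset.mul_sum]
        ring
    _ ≤ _ := by
        have hy3 : 0 ≤ ∑ k ∈ s, y k ^ 3 := Finset.sum_nonneg fun k _ => pow_nonneg (hy k) 3
        have hz3 : 0 ≤ ∑ k ∈ s, z k ^ 3 := Finset.sum_nonneg fun k _ => pow_nonneg (hz k) 3
        have hcard : (s.card : ℝ) ≤ κ := by exact_mod_cast hs
        gcongr

variable [Fintype ι] [DecidableEq ι] {D : ι → Finset ι}

lemma sum_sum_neighborhood_le (hD : ∀ k, (Finset.univ.filter fun j => k ∈ D j).card ≤ κ)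
    {w : ι → ℝ} (hw : ∀ k, 0 ≤ w k) : ∑ j, ∑ k ∈ D j, w k ≤ κ * ∑ k, w k := by
  have swap : ∑ j, ∑ k ∈ D j, w k = ∑ k, ∑ j with k ∈ D j, w k :=
    Finset.sum_comm' fun j k => by simp
  rw [swap, Finset.mul_sum]
  refine Finset.sum_le_sum fun k _ => ?_
  rw [Finset.sum_const, nsmul_eq_mul]
  exact mul_le_mul_of_nonneg_right (by exact_mod_cast hD k) (hw k)

lemma sum_mul_sum_mul_sum_le (hcard : ∀ j, (D j).card ≤ κ)
    (hmult : ∀ k, (Finset.univ.filter fun j => k ∈ D j).card ≤ κ) {x y z : ι → ℝ}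
    (hx : ∀ j, 0 ≤ x j) (hy : ∀ j, 0 ≤ y j) (hz : ∀ j, 0 ≤ z j) :
    ∑ j, x j * ((∑ k ∈ D j, y k) * ∑ l ∈ D j, z l) ≤
      κ ^ 2 * ((∑ j, x j ^ 3 + ∑ j, y j ^ 3 + ∑ j, z j ^ 3) / 3) := by
  calc ∑ j, x j * ((∑ k ∈ D j, y k) * ∑ l ∈ D j, z l)
      ≤ ∑ j, (κ ^ 2 * x j ^ 3 + κ * ∑ k ∈ D j, y k ^ 3 + κ * ∑ k ∈ D j, z k ^ 3) / 3 :=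
        Finset.sum_le_sum fun j _ => mul_sum_mul_sum_le_cubes (hcard j) (hx j) hy hz
    _ = (κ ^ 2 * ∑ j, x j ^ 3 + κ * (∑ j, ∑ k ∈ D j, y k ^ 3)
          + κ * ∑ j, ∑ k ∈ D j, z k ^ 3) / 3 := by
        simp only [← Finset.sum_div, Finset.sum_add_distrib, ← Finset.mul_sum]
    _ ≤ (κ ^ 2 * ∑ j, x j ^ 3 + κ * (κ * ∑ k, y k ^ 3) + κ * (κ * ∑ k, z k ^ 3)) / 3 := by
        gcongr <;> exact sum_sum_neighborhood_le hmult fun k => pow_nonneg (by simp [hy, hz]) 3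
    _ = _ := by ring

end DoubleCounting

/-! ### Locally dependent families -/

section Families

variable {Ω ι : Type*}

/-- The σ-algebra generated by the variables `ξ k` with `k ∈ S`. -/
abbrev sigmaOf (ξ : ι → Ω → ℝ) (S : Finset ι) : MeasurableSpace Ω :=
  ⨆ k ∈ S, MeasurableSpace.comap (ξ k) inferInstance

/-- The partial sum `ξ_S`; the full sum `T` is `blockSum ξ Finset.univ`. -/
def blockSum (ξ : ι → Ω → ℝ) (S : Finset ι) (ω : Ω) : ℝ := ∑ k ∈ S, ξ k ω

/-- The absolute mass of the variables in the neighbourhood `D j`; it dominates `|ξ_S|` for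
every `S ⊆ D j`. -/
def localMass (ξ : ι → Ω → ℝ) (D : ι → Finset ι) (j : ι) (ω : Ω) : ℝ := ∑ k ∈ D j, |ξ k ω|

/-- The Lyapunov quantity `κ² ∑ E|ξ_j|³`; the error `α` of the theorem is `16` times this. -/
noncomputable def lyapunov [MeasurableSpace Ω] [Fintype ι] (μ : Measure Ω) (ξ : ι → Ω → ℝ)
    (κ : ℕ) : ℝ :=
  (κ : ℝ) ^ 2 * ∑ j, ∫ ω, |ξ j ω| ^ 3 ∂μ

variable {ξ : ι → Ω → ℝ} {D : ι → Finset ι} {S S' : Finset ι} {j k : ι}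

lemma comap_le_sigmaOf (hk : k ∈ S) : MeasurableSpace.comap (ξ k) inferInstance ≤ sigmaOf ξ S :=
  le_iSup₂ (f := fun k (_ : k ∈ S) => MeasurableSpace.comap (ξ k) inferInstance) k hk

lemma sigmaOf_mono (h : S ⊆ S') : sigmaOf ξ S ≤ sigmaOf ξ S' :=
  iSup₂_le fun _ hk => comap_le_sigmaOf (h hk)

lemma measurable_sigmaOf (hk : k ∈ S) : Measurable[sigmaOf ξ S] (ξ k) :=
  measurable_iff_comap_le.2 (comap_le_sigmaOf hk)

@[fun_prop]
lemma bddMeas_blockSum {m : MeasurableSpace Ω} (h : ∀ k, BddMeas m (ξ k)) :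
    BddMeas m fun ω => blockSum ξ S ω := by
  unfold blockSum; fun_prop

@[fun_prop]
lemma bddMeas_localMass {m : MeasurableSpace Ω} (h : ∀ k, BddMeas m (ξ k)) :
    BddMeas m fun ω => localMass ξ D j ω := by
  unfold localMass; fun_prop

lemma localMass_nonneg (j : ι) (ω : Ω) : 0 ≤ localMass ξ D j ω :=
  Finset.sum_nonneg fun _ _ => abs_nonneg _

lemma mul_blockSum (c : ℝ) (S : Finset ι) (ω : Ω) : c * blockSum ξ S ω = ∑ k ∈ S, c * ξ k ω :=
  Finset.mul_sum _ _ _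

lemma abs_blockSum_le_localMass (h : S ⊆ D j) (ω : Ω) : |blockSum ξ S ω| ≤ localMass ξ D j ω :=
  (Finset.abs_sum_le_sum_abs _ _).trans
    (Finset.sum_le_sum_of_subset_of_nonneg h fun _ _ _ => abs_nonneg _)

lemma blockSum_compl [Fintype ι] [DecidableEq ι] (S : Finset ι) (ω : Ω) :
    blockSum ξ Sᶜ ω = blockSum ξ Finset.univ ω - blockSum ξ S ω :=
  eq_sub_of_add_eq' (Finset.sum_add_sum_compl S _)

lemma blockSum_inter_add_blockSum_sdiff [DecidableEq ι] (S S' : Finset ι) (ω : Ω) :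
    blockSum ξ (S ∩ S') ω + blockSum ξ (S \ S') ω = blockSum ξ S ω :=
  Finset.sum_inter_add_sum_sdiff S S' _

lemma blockSum_sub_blockSum_sdiff [DecidableEq ι] (S S' : Finset ι) (ω : Ω) :
    blockSum ξ S ω - blockSum ξ (S \ S') ω = blockSum ξ (S ∩ S') ω :=
  sub_eq_of_eq_add (blockSum_inter_add_blockSum_sdiff S S' ω).symm

end Families

/-- The hypotheses of the theorem, expressed through the variables `ξ` themselves: the nested
neighbourhoods `A ⊆ B ⊆ B* ⊆ C* ⊆ D*` of condition (LD4*) with their independence relations,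
centring, the bound `1 / (4κ)`, and `κ` as a bound on the size and multiplicity of the `D*`. -/
structure LocalDependence {Ω ι : Type*} [MeasurableSpace Ω] [Fintype ι] [DecidableEq ι]
    (μ : Measure Ω) (ξ : ι → Ω → ℝ) (A B Bs Cs Ds : ι → Finset ι) (κ : ℕ) : Prop where
  measurable : ∀ j, Measurable (ξ j)
  mem_A : ∀ j, j ∈ A j
  A_subset_B : ∀ j, A j ⊆ B j
  B_subset_Bs : ∀ j, B j ⊆ Bs j
  Bs_subset_Cs : ∀ j, Bs j ⊆ Cs j
  Cs_subset_Ds : ∀ j, Cs j ⊆ Ds j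
  indep_single : ∀ j, Indep (sigmaOf ξ {j}) (sigmaOf ξ (A j)ᶜ) μ
  indep_A_B : ∀ j, Indep (sigmaOf ξ (A j)) (sigmaOf ξ (B j)ᶜ) μ
  indep_A_Bs : ∀ j, Indep (sigmaOf ξ (A j)) (sigmaOf ξ ((Bs j)ᶜ.biUnion A)) μ
  indep_Bs_Cs : ∀ j, Indep (sigmaOf ξ ((Bs j).biUnion A)) (sigmaOf ξ ((Cs j)ᶜ.biUnion A)) μ
  indep_Cs_Ds : ∀ j, Indep (sigmaOf ξ ((Cs j).biUnion A)) (sigmaOf ξ ((Ds j)ᶜ.biUnion A)) μ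
  integral_eq_zero : ∀ j, ∫ ω, ξ j ω ∂μ = 0
  abs_le : ∀ j ω, |ξ j ω| ≤ 1 / (4 * (κ : ℝ))
  card_Ds_le : ∀ j, (Ds j).card ≤ κ
  multiplicity_Ds_le : ∀ k, (Finset.univ.filter fun j => k ∈ Ds j).card ≤ κ

namespace LocalDependence

variable {Ω ι : Type*} [m0 : MeasurableSpace Ω] {μ : Measure Ω} [Fintype ι] [DecidableEq ι]
  {ξ : ι → Ω → ℝ} {A B Bs Cs Ds : ι → Finset ι} {κ : ℕ}

section Basic

variable (H : LocalDependence μ ξ A B Bs Cs Ds κ)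
include H

lemma A_subset_Bs (j : ι) : A j ⊆ Bs j := (H.A_subset_B j).trans (H.B_subset_Bs j)

lemma Bs_subset_Ds (j : ι) : Bs j ⊆ Ds j := (H.Bs_subset_Cs j).trans (H.Cs_subset_Ds j)

lemma A_subset_Ds (j : ι) : A j ⊆ Ds j := (H.A_subset_Bs j).trans (H.Bs_subset_Ds j)

lemma B_subset_Ds (j : ι) : B j ⊆ Ds j := (H.B_subset_Bs j).trans (H.Bs_subset_Ds j)

lemma mem_Ds (j : ι) : j ∈ Ds j := H.A_subset_Ds j (H.mem_A j)

lemma subset_biUnion_A (S : Finset ι) : S ⊆ S.biUnion A :=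
  fun k hk => Finset.mem_biUnion.2 ⟨k, hk, H.mem_A k⟩

lemma sigmaOf_le (S : Finset ι) : sigmaOf ξ S ≤ m0 := iSup₂_le fun k _ => (H.measurable k).comap_le

lemma bddMeas_sigmaOf {S : Finset ι} {k : ι} (hk : k ∈ S) : BddMeas (sigmaOf ξ S) (ξ k) :=
  ⟨measurable_sigmaOf hk, _, H.abs_le k⟩

lemma bddMeas (k : ι) : BddMeas m0 (ξ k) := ⟨H.measurable k, _, H.abs_le k⟩

lemma bddMeas_blockSum_sigmaOf {S S' : Finset ι} (h : S ⊆ S') :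
    BddMeas (sigmaOf ξ S') (blockSum ξ S) :=
  .sum S fun _ hk => H.bddMeas_sigmaOf (h hk)

lemma kappa_pos (j : ι) : (0 : ℝ) < κ := by
  exact_mod_cast (Finset.card_pos.2 ⟨j, H.mem_Ds j⟩).trans_le (H.card_Ds_le j)

lemma localMass_le (j : ι) (ω : Ω) : localMass ξ Ds j ω ≤ 1 / 4 := by
  have hcard : ((Ds j).card : ℝ) ≤ κ := by exact_mod_cast H.card_Ds_le j
  have hκ := H.kappa_pos j
  calc localMass ξ Ds j ω ≤ ∑ _k ∈ Ds j, 1 / (4 * (κ : ℝ)) :=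
        Finset.sum_le_sum fun k _ => H.abs_le k ω
    _ = (Ds j).card * (1 / (4 * (κ : ℝ))) := by rw [Finset.sum_const, nsmul_eq_mul]
    _ ≤ κ * (1 / (4 * (κ : ℝ))) := by gcongr
    _ = 1 / 4 := by field_simp

lemma abs_blockSum_le {S : Finset ι} {j : ι} (h : S ⊆ Ds j) (ω : Ω) : |blockSum ξ S ω| ≤ 1 / 4 :=
  (abs_blockSum_le_localMass h ω).trans (H.localMass_le j ω)

end Basic

section LyapunovBounds

variable [IsProbabilityMeasure μ] (H : LocalDependence μ ξ A B Bs Cs Ds κ)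
include H

lemma sum_integral_mul_sum_mul_sum_le {x y z : ι → Ω → ℝ} {c : ι → ℝ}
    (hx : ∀ j, BddMeas m0 (x j)) (hy : ∀ j, BddMeas m0 (y j)) (hz : ∀ j, BddMeas m0 (z j))
    (hx0 : ∀ j ω, 0 ≤ x j ω) (hy0 : ∀ j ω, 0 ≤ y j ω) (hz0 : ∀ j ω, 0 ≤ z j ω)
    (hxc : ∀ j, ∫ ω, x j ω ^ 3 ∂μ ≤ c j) (hyc : ∀ j, ∫ ω, y j ω ^ 3 ∂μ ≤ c j)
    (hzc : ∀ j, ∫ ω, z j ω ^ 3 ∂μ ≤ c j) :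
    ∑ j, ∫ ω, x j ω * ((∑ k ∈ Ds j, y k ω) * ∑ k ∈ Ds j, z k ω) ∂μ ≤ κ ^ 2 * ∑ j, c j := by
  have pointwise (ω : Ω) := sum_mul_sum_mul_sum_le H.card_Ds_le H.multiplicity_Ds_le
    (fun j => hx0 j ω) (fun j => hy0 j ω) (fun j => hz0 j ω)
  rw [← BddMeas.integral_sum _ fun j => by fun_prop]
  refine (BddMeas.integral_mono (by fun_prop) ?_ pointwise).trans ?_
  · simp only [div_eq_mul_inv]
    fun_prop
  · simp (disch := fun_prop) only [integral_const_mul, integral_div, BddMeas.integral_add,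
      BddMeas.integral_sum]
    have hxs := Finset.sum_le_sum fun j (_ : j ∈ Finset.univ) => hxc j
    have hys := Finset.sum_le_sum fun j (_ : j ∈ Finset.univ) => hyc j
    have hzs := Finset.sum_le_sum fun j (_ : j ∈ Finset.univ) => hzc j
    gcongr
    linarith

lemma sum_integral_abs_mul_sq_localMass_le :
    ∑ j, ∫ ω, |ξ j ω| * (localMass ξ Ds j ω * localMass ξ Ds j ω) ∂μ ≤ lyapunov μ ξ κ :=
  H.sum_integral_mul_sum_mul_sum_le (fun j => (H.bddMeas j).abs) (fun j => (H.bddMeas j).abs)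
    (fun j => (H.bddMeas j).abs) (fun _ _ => abs_nonneg _) (fun _ _ => abs_nonneg _)
    (fun _ _ => abs_nonneg _) (fun _ => le_rfl) (fun _ => le_rfl) (fun _ => le_rfl)

lemma integral_localMass (j : ι) :
    ∫ ω, localMass ξ Ds j ω ∂μ = ∑ k ∈ Ds j, ∫ ω, |ξ k ω| ∂μ :=
  BddMeas.integral_sum _ fun k => (H.bddMeas k).abs

lemma integral_cube_integral_abs_le (j : ι) :
    ∫ _, (∫ ω, |ξ j ω| ∂μ) ^ 3 ∂μ ≤ ∫ ω, |ξ j ω| ^ 3 ∂μ := by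
  simpa using (H.bddMeas j).abs.pow_integral_le (fun _ => abs_nonneg _) 3

lemma sum_integral_abs_mul_localMass_mul_integral_localMass_le :
    ∑ j, (∫ ω, |ξ j ω| * localMass ξ Ds j ω ∂μ) * ∫ ω, localMass ξ Ds j ω ∂μ
      ≤ lyapunov μ ξ κ := by
  simp only [H.integral_localMass, ← integral_mul_const, mul_assoc]
  exact H.sum_integral_mul_sum_mul_sum_le (z := fun k _ => ∫ ω, |ξ k ω| ∂μ)
    (fun j => (H.bddMeas j).abs) (fun j => (H.bddMeas j).abs) (fun _ => .const _)
    (fun _ _ => abs_nonneg _) (fun _ _ => abs_nonneg _)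
    (fun _ _ => integral_nonneg fun _ => abs_nonneg _)
    (fun _ => le_rfl) (fun _ => le_rfl) H.integral_cube_integral_abs_le

lemma sum_integral_abs_mul_integral_sq_localMass_le :
    ∑ j, (∫ ω, |ξ j ω| ∂μ) * ∫ ω, localMass ξ Ds j ω * localMass ξ Ds j ω ∂μ
      ≤ lyapunov μ ξ κ := by
  simp only [← integral_const_mul]
  exact H.sum_integral_mul_sum_mul_sum_le (x := fun k _ => ∫ ω, |ξ k ω| ∂μ)
    (fun _ => .const _) (fun j => (H.bddMeas j).abs) (fun j => (H.bddMeas j).abs)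
    (fun _ _ => integral_nonneg fun _ => abs_nonneg _)
    (fun _ _ => abs_nonneg _) (fun _ _ => abs_nonneg _)
    H.integral_cube_integral_abs_le (fun _ => le_rfl) (fun _ => le_rfl)

end LyapunovBounds

end LocalDependence

/-! ### Fourth moments of partial sums -/

section FourthMoment

lemma abs_cube_expansion_le {t u a b : ℝ} (ha : |a| ≤ 1 / 4) (hb : |b| ≤ 1 / 4)
    (ht : |t - u| ≤ 1 / 4) :
    |t ^ 3 - (t - a) ^ 3 - 3 * a * (t - b) ^ 2| ≤
      (|a| * |a| + |a| * |b|) * (6 * |u| + 3) := by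
  have ht' : |t| ≤ |u| + 1 / 4 := by linarith [abs_sub_abs_le_abs_sub t u]
  have hb2 : |6 * t - 3 * b| ≤ 6 * |u| + 3 := by
    calc |6 * t - 3 * b| ≤ 6 * |t| + 3 * |b| := by
          simpa [abs_mul] using abs_sub (6 * t) (3 * b)
      _ ≤ 6 * |u| + 3 := by linarith
  have ha2 : |a - 3 * t| ≤ 6 * |u| + 3 := by
    calc |a - 3 * t| ≤ |a| + 3 * |t| := by simpa [abs_mul] using abs_sub a (3 * t)
      _ ≤ 6 * |u| + 3 := by linarith [abs_nonneg u]
  calc |t ^ 3 - (t - a) ^ 3 - 3 * a * (t - b) ^ 2|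
      = |a * a * (a - 3 * t) + a * b * (6 * t - 3 * b)| := by congr 1; ring
    _ ≤ |a| * |a| * |a - 3 * t| + |a| * |b| * |6 * t - 3 * b| := by
        simpa only [abs_mul] using abs_add_le (a * a * (a - 3 * t)) (a * b * (6 * t - 3 * b))
    _ ≤ |a| * |a| * (6 * |u| + 3) + |a| * |b| * (6 * |u| + 3) := by gcongr
    _ = _ := by ring

lemma abs_sq_sub_sq_le {t u b : ℝ} (hb : |b| ≤ 1 / 4) (ht : |t - u| ≤ 1 / 4) :
    |(t - b) ^ 2 - t ^ 2| ≤ |b| * (2 * |u| + 1) := by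
  have ht' : |t| ≤ |u| + 1 / 4 := by linarith [abs_sub_abs_le_abs_sub t u]
  calc |(t - b) ^ 2 - t ^ 2| = |b| * |b - 2 * t| := by rw [← abs_mul]; congr 1; ring
    _ ≤ |b| * (|b| + 2 * |t|) := by
        gcongr
        simpa [abs_mul] using abs_sub b (2 * t)
    _ ≤ |b| * (2 * |u| + 1) := mul_le_mul_of_nonneg_left (by linarith) (abs_nonneg b)

lemma abs_le_half_sq_add {s t : ℝ} (h : |s - t| ≤ 1 / 4) : |t| ≤ 1 / 2 * s ^ 2 + 3 / 4 := by
  have ht : |t| ≤ |s| + 1 / 4 := by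
    have := abs_sub_abs_le_abs_sub t s
    rw [abs_sub_comm] at this
    linarith
  nlinarith [sq_nonneg (|s| - 1), sq_abs s]

end FourthMoment

namespace LocalDependence

variable {Ω ι : Type*} [m0 : MeasurableSpace Ω] {μ : Measure Ω} [Fintype ι] [DecidableEq ι]
  {ξ : ι → Ω → ℝ} {A B Bs Cs Ds : ι → Finset ι} {κ : ℕ}

section FourthMoment

variable [IsProbabilityMeasure μ] (H : LocalDependence μ ξ A B Bs Cs Ds κ)
include H

lemma sum_integral_mul_blockSum_A :
    ∑ j, ∫ ω, ξ j ω * blockSum ξ (A j) ω ∂μ = ∫ ω, blockSum ξ univ ω ^ 2 ∂μ := by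
  have hξ := H.bddMeas
  have orthogonal (j : ι) : ∫ ω, ξ j ω * blockSum ξ (A j)ᶜ ω ∂μ = 0 := by
    rw [BddMeas.integral_mul_of_indep (H.indep_single j) (H.sigmaOf_le _) (H.sigmaOf_le _)
      (H.bddMeas_sigmaOf (Finset.mem_singleton_self j)) (H.bddMeas_blockSum_sigmaOf subset_rfl),
      H.integral_eq_zero, zero_mul]
  have local_eq (j : ι) :
      ∫ ω, ξ j ω * blockSum ξ (A j) ω ∂μ = ∫ ω, ξ j ω * blockSum ξ univ ω ∂μ := by
    have h := orthogonal j
    simp (disch := fun_prop) only [blockSum_compl, mul_sub, BddMeas.integral_sub] at h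
    linarith
  rw [Finset.sum_congr rfl fun j _ => local_eq j, ← BddMeas.integral_sum _ fun j => by fun_prop]
  simp only [← Finset.sum_mul, sq]
  rfl

/-- `T` and its part outside `C*_j` differ by at most `1/4`, so the latter, which is independent of
`P`, has a bounded first moment. -/
lemma integral_mul_far_le (hT : ∫ ω, blockSum ξ univ ω ^ 2 ∂μ ≤ 2) (j : ι) {P : Ω → ℝ}
    (hP : BddMeas (sigmaOf ξ ((Bs j).biUnion A)) P) (hP0 : ∀ ω, 0 ≤ P ω) {c : ℝ} (hc : 0 ≤ c)
    (d : ℝ) :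
    ∫ ω, P ω * (c * |blockSum ξ (Cs j)ᶜ ω| + d) ∂μ ≤ (2 * c + d) * ∫ ω, P ω ∂μ := by
  have hξ := H.bddMeas
  have hfar : BddMeas (sigmaOf ξ ((Cs j)ᶜ.biUnion A)) (blockSum ξ (Cs j)ᶜ) :=
    H.bddMeas_blockSum_sigmaOf (H.subset_biUnion_A _)
  have first_moment : ∫ ω, |blockSum ξ (Cs j)ᶜ ω| ∂μ ≤ 2 := by
    calc ∫ ω, |blockSum ξ (Cs j)ᶜ ω| ∂μ
        ≤ ∫ ω, (1 / 2 * blockSum ξ univ ω ^ 2 + 3 / 4) ∂μ := by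
          refine BddMeas.integral_mono (by fun_prop) (by fun_prop) fun ω => abs_le_half_sq_add ?_
          rw [blockSum_compl, sub_sub_cancel]
          exact H.abs_blockSum_le (H.Cs_subset_Ds j) ω
      _ ≤ 2 := by
          simp (disch := fun_prop) only [BddMeas.integral_add, integral_const_mul]
          simp only [integral_const, probReal_univ, one_smul]
          linarith
  have hP_int : 0 ≤ ∫ ω, P ω ∂μ := integral_nonneg hP0
  rw [BddMeas.integral_mul_of_indep (H.indep_Bs_Cs j) (H.sigmaOf_le _) (H.sigmaOf_le _) hP
    (by fun_prop), mul_comm]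
  simp (disch := fun_prop) only [BddMeas.integral_add, integral_const_mul]
  simp only [integral_const, probReal_univ, one_smul]
  exact mul_le_mul_of_nonneg_right (by nlinarith) hP_int

lemma abs_integral_sq_sub_le (hT : ∫ ω, blockSum ξ univ ω ^ 2 ∂μ ≤ 2) (j : ι) :
    |∫ ω, blockSum ξ (B j)ᶜ ω ^ 2 ∂μ - ∫ ω, blockSum ξ univ ω ^ 2 ∂μ| ≤
      5 * ∫ ω, localMass ξ Ds j ω ∂μ := by
  have hξ := H.bddMeas
  have hB : BddMeas (sigmaOf ξ ((Bs j).biUnion A)) (blockSum ξ (B j)) :=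
    H.bddMeas_blockSum_sigmaOf ((H.B_subset_Bs j).trans (H.subset_biUnion_A _))
  calc |∫ ω, blockSum ξ (B j)ᶜ ω ^ 2 ∂μ - ∫ ω, blockSum ξ univ ω ^ 2 ∂μ|
      = |∫ ω, (blockSum ξ (B j)ᶜ ω ^ 2 - blockSum ξ univ ω ^ 2) ∂μ| := by
        rw [BddMeas.integral_sub (by fun_prop) (by fun_prop)]
    _ ≤ ∫ ω, |blockSum ξ (B j) ω| * (2 * |blockSum ξ (Cs j)ᶜ ω| + 1) ∂μ := by
        refine BddMeas.abs_integral_le (by fun_prop) (by fun_prop) fun ω => ?_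
        rw [blockSum_compl (B j)]
        refine abs_sq_sub_sq_le (H.abs_blockSum_le (H.B_subset_Ds j) ω) ?_
        rw [blockSum_compl, sub_sub_cancel]
        exact H.abs_blockSum_le (H.Cs_subset_Ds j) ω
    _ ≤ (2 * 2 + 1) * ∫ ω, |blockSum ξ (B j) ω| ∂μ :=
        H.integral_mul_far_le hT j hB.abs (fun _ => abs_nonneg _) zero_le_two 1
    _ ≤ 5 * ∫ ω, localMass ξ Ds j ω ∂μ := by
        norm_num
        exact BddMeas.integral_mono (by fun_prop) (by fun_prop)
          (abs_blockSum_le_localMass (H.B_subset_Ds j))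

lemma integral_cube_remainder_le (hT : ∫ ω, blockSum ξ univ ω ^ 2 ∂μ ≤ 2) (j : ι) :
    ∫ ω, ξ j ω * (blockSum ξ univ ω ^ 3 - blockSum ξ (A j)ᶜ ω ^ 3
        - 3 * blockSum ξ (A j) ω * blockSum ξ (B j)ᶜ ω ^ 2) ∂μ ≤
      30 * ∫ ω, |ξ j ω| * (localMass ξ Ds j ω * localMass ξ Ds j ω) ∂μ := by
  have hξ := H.bddMeas
  let P (ω : Ω) : ℝ := |ξ j ω| * (|blockSum ξ (A j) ω| * |blockSum ξ (A j) ω|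
    + |blockSum ξ (A j) ω| * |blockSum ξ (B j) ω|)
  have hP : BddMeas (sigmaOf ξ ((Bs j).biUnion A)) P := by
    have hξBs := H.bddMeas_sigmaOf (H.subset_biUnion_A _ (H.A_subset_Bs j (H.mem_A j)))
    have hA := H.bddMeas_blockSum_sigmaOf ((H.A_subset_Bs j).trans (H.subset_biUnion_A _))
    have hB := H.bddMeas_blockSum_sigmaOf ((H.B_subset_Bs j).trans (H.subset_biUnion_A _))
    exact hξBs.abs.mul ((hA.abs.mul hA.abs).add (hA.abs.mul hB.abs))
  have hP_le (ω : Ω) : P ω ≤ 2 * (|ξ j ω| * (localMass ξ Ds j ω * localMass ξ Ds j ω)) := by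
    have hA := abs_blockSum_le_localMass (ξ := ξ) (H.A_subset_Ds j) ω
    have hB := abs_blockSum_le_localMass (ξ := ξ) (H.B_subset_Ds j) ω
    have h0 := localMass_nonneg (ξ := ξ) (D := Ds) j ω
    calc P ω ≤ |ξ j ω| * (localMass ξ Ds j ω * localMass ξ Ds j ω
          + localMass ξ Ds j ω * localMass ξ Ds j ω) := by simp only [P]; gcongr
      _ = _ := by ring
  calc _ ≤ ∫ ω, P ω * (6 * |blockSum ξ (Cs j)ᶜ ω| + 3) ∂μ := by
        refine BddMeas.integral_mono (by fun_prop) ?_ fun ω => ?_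
        · have := hP.mono (H.sigmaOf_le _)
          fun_prop
        · refine (le_abs_self _).trans ?_
          rw [abs_mul, mul_assoc |ξ j ω|, blockSum_compl (A j), blockSum_compl (B j)]
          refine mul_le_mul_of_nonneg_left (abs_cube_expansion_le
            (H.abs_blockSum_le (H.A_subset_Ds j) ω) (H.abs_blockSum_le (H.B_subset_Ds j) ω) ?_)
            (abs_nonneg _)
          rw [blockSum_compl, sub_sub_cancel]
          exact H.abs_blockSum_le (H.Cs_subset_Ds j) ω
    _ ≤ (2 * 6 + 3) * ∫ ω, P ω ∂μ :=
        H.integral_mul_far_le hT j hP (fun ω => by positivity) (by norm_num) 3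
    _ ≤ (2 * 6 + 3) * ∫ ω, 2 * (|ξ j ω| * (localMass ξ Ds j ω * localMass ξ Ds j ω)) ∂μ :=
        mul_le_mul_of_nonneg_left
          ((hP.mono (H.sigmaOf_le _)).integral_mono (by fun_prop) hP_le) (by norm_num)
    _ = _ := by rw [integral_const_mul]; ring

lemma integral_mul_cube_le (hT : ∫ ω, blockSum ξ univ ω ^ 2 ∂μ ≤ 2) (j : ι) :
    ∫ ω, ξ j ω * blockSum ξ univ ω ^ 3 ∂μ ≤
      3 * (∫ ω, ξ j ω * blockSum ξ (A j) ω ∂μ) * (∫ ω, blockSum ξ univ ω ^ 2 ∂μ)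
      + 15 * ((∫ ω, |ξ j ω| * localMass ξ Ds j ω ∂μ) * ∫ ω, localMass ξ Ds j ω ∂μ)
      + 30 * ∫ ω, |ξ j ω| * (localMass ξ Ds j ω * localMass ξ Ds j ω) ∂μ := by
  have hξ := H.bddMeas
  have cube_term : ∫ ω, ξ j ω * blockSum ξ (A j)ᶜ ω ^ 3 ∂μ = 0 := by
    rw [BddMeas.integral_mul_of_indep (H.indep_single j) (H.sigmaOf_le _) (H.sigmaOf_le _)
      (H.bddMeas_sigmaOf (Finset.mem_singleton_self j))
      ((H.bddMeas_blockSum_sigmaOf subset_rfl).pow 3), H.integral_eq_zero, zero_mul]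
  have square_term : ∫ ω, ξ j ω * blockSum ξ (A j) ω * blockSum ξ (B j)ᶜ ω ^ 2 ∂μ
      = (∫ ω, ξ j ω * blockSum ξ (A j) ω ∂μ) * ∫ ω, blockSum ξ (B j)ᶜ ω ^ 2 ∂μ :=
    BddMeas.integral_mul_of_indep (H.indep_A_B j) (H.sigmaOf_le _) (H.sigmaOf_le _)
      ((H.bddMeas_sigmaOf (H.mem_A j)).mul (H.bddMeas_blockSum_sigmaOf subset_rfl))
      ((H.bddMeas_blockSum_sigmaOf subset_rfl).pow 2)
  have expansion : ∫ ω, ξ j ω * blockSum ξ univ ω ^ 3 ∂μ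
      = ∫ ω, (ξ j ω * blockSum ξ (A j)ᶜ ω ^ 3
        + 3 * (ξ j ω * blockSum ξ (A j) ω * blockSum ξ (B j)ᶜ ω ^ 2)
        + ξ j ω * (blockSum ξ univ ω ^ 3 - blockSum ξ (A j)ᶜ ω ^ 3
          - 3 * blockSum ξ (A j) ω * blockSum ξ (B j)ᶜ ω ^ 2)) ∂μ := by
    congr 1 with ω; ring
  have cov_le : |∫ ω, ξ j ω * blockSum ξ (A j) ω ∂μ| ≤ ∫ ω, |ξ j ω| * localMass ξ Ds j ω ∂μ := by
    refine BddMeas.abs_integral_le (by fun_prop) (by fun_prop) fun ω => ?_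
    rw [abs_mul]
    exact mul_le_mul_of_nonneg_left (abs_blockSum_le_localMass (H.A_subset_Ds j) ω) (abs_nonneg _)
  have square_error := (le_abs_self _).trans_eq (abs_mul
    (∫ ω, ξ j ω * blockSum ξ (A j) ω ∂μ)
    (∫ ω, blockSum ξ (B j)ᶜ ω ^ 2 ∂μ - ∫ ω, blockSum ξ univ ω ^ 2 ∂μ)) |>.trans
    (mul_le_mul cov_le (H.abs_integral_sq_sub_le hT j) (abs_nonneg _)
      ((abs_nonneg _).trans cov_le))
  rw [expansion]
  simp (disch := fun_prop) only [BddMeas.integral_add, integral_const_mul]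
  rw [cube_term, square_term]
  linarith [H.integral_cube_remainder_le hT j]

lemma integral_pow_four_le (hT : ∫ ω, blockSum ξ univ ω ^ 2 ∂μ ≤ 2) :
    ∫ ω, blockSum ξ univ ω ^ 4 ∂μ ≤ 12 + 45 * lyapunov μ ξ κ := by
  have hξ := H.bddMeas
  have split : ∫ ω, blockSum ξ univ ω ^ 4 ∂μ = ∑ j, ∫ ω, ξ j ω * blockSum ξ univ ω ^ 3 ∂μ := by
    rw [← BddMeas.integral_sum _ fun j => by fun_prop]
    congr 1 with ω
    rw [← Finset.sum_mul, pow_succ']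
    rfl
  have hT0 : 0 ≤ ∫ ω, blockSum ξ univ ω ^ 2 ∂μ := integral_nonneg fun ω => sq_nonneg _
  have hsum := Finset.sum_le_sum fun j (_ : j ∈ univ) => H.integral_mul_cube_le hT j
  simp only [Finset.sum_add_distrib, ← Finset.sum_mul, ← Finset.mul_sum,
    H.sum_integral_mul_blockSum_A, ← split] at hsum
  nlinarith [H.sum_integral_abs_mul_sq_localMass_le,
    H.sum_integral_abs_mul_localMass_mul_integral_localMass_le]

end FourthMoment

end LocalDependence

/-! ### Weighted second moments of local families -/

section AbsoluteCube

/-- The derivative of `z ↦ |z| ^ 3`. -/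
def dcube (z : ℝ) : ℝ := 3 * (z * |z|)

lemma hasDerivAt_abs_cube (x : ℝ) : HasDerivAt (fun y : ℝ => |y| ^ 3) (dcube x) x := by
  have h := hasDerivAt_abs_rpow x (p := 3) (by norm_num)
  have natCast_pow : (fun y : ℝ => |y| ^ (3 : ℝ)) = fun y : ℝ => |y| ^ 3 := by
    funext y; exact_mod_cast Real.rpow_natCast |y| 3
  rw [natCast_pow] at h
  convert h using 1
  rw [show (3 : ℝ) - 2 = 1 by norm_num, Real.rpow_one, dcube]
  ring

lemma abs_dcube (x : ℝ) : |dcube x| = 3 * x ^ 2 := by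
  simp only [dcube, abs_mul, abs_abs, abs_mul_abs_self, Nat.abs_ofNat, sq]

@[fun_prop]
lemma bddMeas_dcube {Ω : Type*} {m : MeasurableSpace Ω} {f : Ω → ℝ} (hf : BddMeas m f) :
    BddMeas m fun ω => dcube (f ω) := by
  unfold dcube; fun_prop

lemma abs_dcube_sub_le (x z : ℝ) : |dcube x - dcube z| ≤ 3 * |x - z| * (2 * |z| + |x - z|) := by
  have hx : |x| ≤ |z| + |x - z| := by linarith [abs_sub_abs_le_abs_sub x z]
  calc |dcube x - dcube z| = |3 * ((x - z) * |x| + z * (|x| - |z|))| := by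
        congr 1; unfold dcube; ring
    _ = 3 * |(x - z) * |x| + z * (|x| - |z|)| := by rw [abs_mul, Nat.abs_ofNat]
    _ ≤ 3 * (|x - z| * |x| + |z| * |(|x| - |z|)|) := by
        gcongr
        simpa only [abs_mul, abs_abs] using abs_add_le ((x - z) * |x|) (z * (|x| - |z|))
    _ ≤ 3 * (|x - z| * (|z| + |x - z|) + |z| * |x - z|) := by
        have habs := abs_abs_sub_abs_le x z
        gcongr
    _ = _ := by ring

lemma abs_cube_sub_sub_dcube_le {x y z r : ℝ} (hx : |x - z| ≤ r) (hy : |y - z| ≤ r) :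
    |(|x| ^ 3 - |y| ^ 3 - (x - y) * dcube z)| ≤ |x - y| * (3 * r * (2 * |z| + r)) := by
  have hr : 0 ≤ r := (abs_nonneg _).trans hx
  have h := (convex_closedBall z r).norm_image_sub_le_of_norm_hasDerivWithin_le
    (f := fun c : ℝ => |c| ^ 3 - c * dcube z) (f' := fun c => dcube c - 1 * dcube z)
    (C := 3 * r * (2 * |z| + r)) (x := y) (y := x)
    (fun c _ => ((hasDerivAt_abs_cube c).sub ((hasDerivAt_id c).mul_const _)).hasDerivWithinAt)
    (fun c hc => by
      have hc' : |c - z| ≤ r := by simpa [Real.dist_eq] using hc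
      rw [one_mul, Real.norm_eq_abs]
      refine (abs_dcube_sub_le c z).trans ?_
      gcongr)
    (by simpa [Real.dist_eq] using hy) (by simpa [Real.dist_eq] using hx)
  calc |(|x| ^ 3 - |y| ^ 3 - (x - y) * dcube z)|
      = |(|x| ^ 3 - x * dcube z) - (|y| ^ 3 - y * dcube z)| := by congr 1; ring
    _ ≤ _ := h.trans_eq (mul_comm _ _)

end AbsoluteCube

section Moments

lemma abs_pow_le_one_add_pow_four {n : ℕ} (hn : n ≤ 4) (x : ℝ) : |x| ^ n ≤ 1 + x ^ 4 := by
  have hx4 : |x| ^ 4 = x ^ 4 := (Even.pow_abs ⟨2, rfl⟩ x)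
  rcases le_total |x| 1 with h | h
  · linarith [pow_le_one₀ (n := n) (abs_nonneg x) h, hx4 ▸ pow_nonneg (abs_nonneg x) 4]
  · linarith [pow_le_pow_right₀ h hn]

lemma pow_four_le_of_abs_sub_le {x y : ℝ} (h : |x - y| ≤ 1 / 2) : x ^ 4 ≤ 8 * y ^ 4 + 1 := by
  have hmean : (y + (x - y)) ^ 4 ≤ 8 * (y ^ 4 + (x - y) ^ 4) := by
    nlinarith [sq_nonneg (y ^ 2 - (x - y) ^ 2), sq_nonneg (y - (x - y)),
      sq_nonneg (y * (y - (x - y))), sq_nonneg ((x - y) * (y - (x - y))),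
      sq_nonneg (y ^ 2 - 2 * y * (x - y) + (x - y) ^ 2)]
  have hsmall : (x - y) ^ 4 ≤ (1 / 2) ^ 4 := by
    rw [← Even.pow_abs ⟨2, rfl⟩ (x - y)]
    exact pow_le_pow_left₀ (abs_nonneg _) h 4
  calc x ^ 4 = (y + (x - y)) ^ 4 := by ring
    _ ≤ 8 * y ^ 4 + 1 := by linarith

variable {Ω : Type*} {m0 : MeasurableSpace Ω} {μ : Measure Ω} [IsProbabilityMeasure μ]
  {f g : Ω → ℝ} {c : ℝ}

lemma BddMeas.integral_abs_pow_le (hf : BddMeas m0 f) (h : ∫ ω, f ω ^ 4 ∂μ ≤ c) {n : ℕ}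
    (hn : n ≤ 4) : ∫ ω, |f ω| ^ n ∂μ ≤ 1 + c := by
  calc ∫ ω, |f ω| ^ n ∂μ ≤ ∫ ω, (1 + f ω ^ 4) ∂μ :=
        BddMeas.integral_mono (by fun_prop) (by fun_prop)
          fun ω => abs_pow_le_one_add_pow_four hn _
    _ ≤ 1 + c := by
        rw [BddMeas.integral_add (by fun_prop) (by fun_prop)]
        simpa using h

lemma BddMeas.integral_pow_four_le_of_abs_sub_le (hf : BddMeas m0 f) (hg : BddMeas m0 g)
    (h : ∀ ω, |f ω - g ω| ≤ 1 / 2) (hc : ∫ ω, g ω ^ 4 ∂μ ≤ c) :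
    ∫ ω, f ω ^ 4 ∂μ ≤ 8 * c + 1 := by
  calc ∫ ω, f ω ^ 4 ∂μ ≤ ∫ ω, (8 * g ω ^ 4 + 1) ∂μ :=
        BddMeas.integral_mono (by fun_prop) (by fun_prop) fun ω => pow_four_le_of_abs_sub_le (h ω)
    _ ≤ 8 * c + 1 := by
        rw [BddMeas.integral_add (by fun_prop) (by fun_prop), integral_const_mul]
        simpa using hc

end Moments

section LocalFamilies

variable {Ω ι : Type*} [m0 : MeasurableSpace Ω] {μ : Measure Ω}
  {ξ : ι → Ω → ℝ} {D : ι → Finset ι}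

/-- `∑_{k ∈ D j} (|ξ_k| + E|ξ_k|)`, which dominates partial sums over `D j` of a `LocalFamily`. -/
noncomputable def augmentedMass (μ : Measure Ω) (ξ : ι → Ω → ℝ) (D : ι → Finset ι) (j : ι)
    (ω : Ω) : ℝ := localMass ξ D j ω + ∫ ω', localMass ξ D j ω' ∂μ

/-- The `j`-th contribution to a bound for the variance of the partial sums of `Y`. -/
noncomputable def varianceProxy (μ : Measure Ω) (ξ : ι → Ω → ℝ) (D : ι → Finset ι)
    (Y : ι → Ω → ℝ) (j : ι) : ℝ := ∫ ω, |Y j ω| * augmentedMass μ ξ D j ω ∂μ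

/-- The `j`-th contribution to the third order error made when decoupling `Y j` from the sums. -/
noncomputable def thirdOrderProxy (μ : Measure Ω) (ξ : ι → Ω → ℝ) (D : ι → Finset ι)
    (Y : ι → Ω → ℝ) (j : ι) : ℝ :=
  ∫ ω, |Y j ω| * (localMass ξ D j ω * augmentedMass μ ξ D j ω) ∂μ

/-- Centred variables `Y j`, each a function of the block `A j` and of size comparable to `ξ j`. -/
structure LocalFamily (μ : Measure Ω) (ξ : ι → Ω → ℝ) (A : ι → Finset ι) (Y : ι → Ω → ℝ) :
    Prop where
  bddMeas_sigmaOf : ∀ j, BddMeas (sigmaOf ξ (A j)) (Y j)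
  integral_eq_zero : ∀ j, ∫ ω, Y j ω ∂μ = 0
  abs_le : ∀ j ω, |Y j ω| ≤ |ξ j ω| + ∫ ω', |ξ j ω'| ∂μ

@[fun_prop]
lemma bddMeas_augmentedMass {j : ι} (h : ∀ k, BddMeas m0 (ξ k)) :
    BddMeas m0 fun ω => augmentedMass μ ξ D j ω := by
  unfold augmentedMass; fun_prop

lemma integral_localMass_nonneg (j : ι) : 0 ≤ ∫ ω, localMass ξ D j ω ∂μ :=
  integral_nonneg fun ω => localMass_nonneg j ω

lemma localMass_le_augmentedMass (j : ι) (ω : Ω) : localMass ξ D j ω ≤ augmentedMass μ ξ D j ω :=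
  le_add_of_nonneg_right (integral_localMass_nonneg j)

lemma augmentedMass_nonneg (j : ι) (ω : Ω) : 0 ≤ augmentedMass μ ξ D j ω :=
  (localMass_nonneg j ω).trans (localMass_le_augmentedMass j ω)

lemma varianceProxy_nonneg (Y : ι → Ω → ℝ) (j : ι) : 0 ≤ varianceProxy μ ξ D Y j :=
  integral_nonneg fun ω => mul_nonneg (abs_nonneg _) (augmentedMass_nonneg j ω)

lemma thirdOrderProxy_nonneg (Y : ι → Ω → ℝ) (j : ι) : 0 ≤ thirdOrderProxy μ ξ D Y j :=
  integral_nonneg fun ω =>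
    mul_nonneg (abs_nonneg _) (mul_nonneg (localMass_nonneg j ω) (augmentedMass_nonneg j ω))

end LocalFamilies

namespace LocalFamily

variable {Ω ι : Type*} [m0 : MeasurableSpace Ω] {μ : Measure Ω} [DecidableEq ι]
  {ξ Y : ι → Ω → ℝ} {A B Bs Cs Ds : ι → Finset ι} {κ : ℕ}

section SigmaAlgebra

lemma bddMeas_biUnion (hY : LocalFamily μ ξ A Y) {S : Finset ι} {j : ι} (h : j ∈ S) :
    BddMeas (sigmaOf ξ (S.biUnion A)) (Y j) :=
  (hY.bddMeas_sigmaOf j).mono (sigmaOf_mono (Finset.subset_biUnion_of_mem A h))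

lemma bddMeas_blockSum_biUnion (hY : LocalFamily μ ξ A Y) {S S' : Finset ι} (h : S ⊆ S') :
    BddMeas (sigmaOf ξ (S'.biUnion A)) (blockSum Y S) :=
  .sum S fun _ hk => hY.bddMeas_biUnion (h hk)

end SigmaAlgebra

section Bounds

variable [Fintype ι] (hY : LocalFamily μ ξ A Y) (H : LocalDependence μ ξ A B Bs Cs Ds κ)
include hY H

lemma bddMeas (j : ι) : BddMeas m0 (Y j) := (hY.bddMeas_sigmaOf j).mono (H.sigmaOf_le _)

lemma integral_mul_eq_zero (j : ι) {f : Ω → ℝ}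
    (hf : BddMeas (sigmaOf ξ ((Bs j)ᶜ.biUnion A)) f) : ∫ ω, Y j ω * f ω ∂μ = 0 := by
  rw [BddMeas.integral_mul_of_indep (H.indep_A_Bs j) (H.sigmaOf_le _) (H.sigmaOf_le _)
    (hY.bddMeas_sigmaOf j) hf, hY.integral_eq_zero, zero_mul]

variable [IsProbabilityMeasure μ]

lemma abs_blockSum_le_augmentedMass {S : Finset ι} {j : ι} (h : S ⊆ Ds j) (ω : Ω) :
    |blockSum Y S ω| ≤ augmentedMass μ ξ Ds j ω := by
  calc |blockSum Y S ω| ≤ ∑ k ∈ Ds j, |Y k ω| := abs_blockSum_le_localMass h ω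
    _ ≤ ∑ k ∈ Ds j, (|ξ k ω| + ∫ ω', |ξ k ω'| ∂μ) := Finset.sum_le_sum fun k _ => hY.abs_le k ω
    _ = _ := by rw [augmentedMass, H.integral_localMass, Finset.sum_add_distrib]; rfl

lemma abs_blockSum_le {S : Finset ι} {j : ι} (h : S ⊆ Ds j) (ω : Ω) :
    |blockSum Y S ω| ≤ 1 / 2 := by
  have hξ := H.bddMeas
  have hmean : ∫ ω', localMass ξ Ds j ω' ∂μ ≤ ∫ _, 1 / 4 ∂μ :=
    BddMeas.integral_mono (by fun_prop) (by fun_prop) (H.localMass_le j)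
  rw [integral_const, probReal_univ, one_smul] at hmean
  refine (hY.abs_blockSum_le_augmentedMass H h ω).trans ?_
  unfold augmentedMass
  linarith [H.localMass_le j ω]

lemma integral_sq_blockSum_le (G : Finset ι) :
    ∫ ω, blockSum Y G ω ^ 2 ∂μ ≤ ∑ j, varianceProxy μ ξ Ds Y j := by
  have hξ := H.bddMeas
  have hYb := hY.bddMeas H
  have near (j : ι) : ∫ ω, Y j ω * blockSum Y G ω ∂μ ≤ varianceProxy μ ξ Ds Y j := by
    have far : ∫ ω, Y j ω * blockSum Y (G \ Bs j) ω ∂μ = 0 :=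
      hY.integral_mul_eq_zero H j (hY.bddMeas_blockSum_biUnion (by grind [Finset.mem_compl]))
    calc ∫ ω, Y j ω * blockSum Y G ω ∂μ
        = ∫ ω, Y j ω * blockSum Y (G ∩ Bs j) ω ∂μ := by
          rw [← add_zero (∫ ω, Y j ω * blockSum Y (G ∩ Bs j) ω ∂μ), ← far,
            ← BddMeas.integral_add (by fun_prop) (by fun_prop)]
          simp only [← mul_add, blockSum_inter_add_blockSum_sdiff]
      _ ≤ varianceProxy μ ξ Ds Y j := by
          refine BddMeas.integral_mono (by fun_prop) (by fun_prop) fun ω =>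
            (le_abs_self _).trans ?_
          rw [abs_mul]
          exact mul_le_mul_of_nonneg_left (hY.abs_blockSum_le_augmentedMass H
            (Finset.inter_subset_right.trans (H.Bs_subset_Ds j)) ω) (abs_nonneg _)
  calc ∫ ω, blockSum Y G ω ^ 2 ∂μ = ∑ j ∈ G, ∫ ω, Y j ω * blockSum Y G ω ∂μ := by
        rw [← BddMeas.integral_sum _ fun j => by fun_prop]
        simp only [← Finset.sum_mul, sq]
        rfl
    _ ≤ ∑ j ∈ G, varianceProxy μ ξ Ds Y j := Finset.sum_le_sum fun j _ => near j
    _ ≤ _ := Finset.sum_le_sum_of_subset_of_nonneg (Finset.subset_univ G)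
        fun j _ _ => varianceProxy_nonneg Y j

lemma thirdOrderProxy_le (j : ι) :
    thirdOrderProxy μ ξ Ds Y j ≤ ∫ ω, |ξ j ω| * (localMass ξ Ds j ω * localMass ξ Ds j ω) ∂μ
      + (∫ ω, |ξ j ω| * localMass ξ Ds j ω ∂μ) * (∫ ω, localMass ξ Ds j ω ∂μ)
      + 2 * ((∫ ω, |ξ j ω| ∂μ) * ∫ ω, localMass ξ Ds j ω * localMass ξ Ds j ω ∂μ) := by
  have hξ := H.bddMeas
  have hYb := hY.bddMeas H
  set e := ∫ ω, localMass ξ Ds j ω ∂μ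
  set c := ∫ ω, |ξ j ω| ∂μ
  have jensen : e * e ≤ ∫ ω, localMass ξ Ds j ω * localMass ξ Ds j ω ∂μ := by
    simpa only [sq] using BddMeas.pow_integral_le (μ := μ) (f := localMass ξ Ds j)
      (by fun_prop) (localMass_nonneg j) 2
  calc thirdOrderProxy μ ξ Ds Y j
      ≤ ∫ ω, (|ξ j ω| * (localMass ξ Ds j ω * localMass ξ Ds j ω)
          + |ξ j ω| * localMass ξ Ds j ω * e
          + c * (localMass ξ Ds j ω * localMass ξ Ds j ω + localMass ξ Ds j ω * e)) ∂μ := by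
        refine BddMeas.integral_mono (by fun_prop) (by fun_prop) fun ω => ?_
        calc _ ≤ (|ξ j ω| + c) * (localMass ξ Ds j ω * augmentedMass μ ξ Ds j ω) :=
              mul_le_mul_of_nonneg_right (hY.abs_le j ω)
                (mul_nonneg (localMass_nonneg j ω) (augmentedMass_nonneg j ω))
          _ = _ := by unfold augmentedMass; ring
    _ = ∫ ω, |ξ j ω| * (localMass ξ Ds j ω * localMass ξ Ds j ω) ∂μ
          + (∫ ω, |ξ j ω| * localMass ξ Ds j ω ∂μ) * e
          + c * (∫ ω, localMass ξ Ds j ω * localMass ξ Ds j ω ∂μ + e * e) := by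
        simp (disch := fun_prop) only [BddMeas.integral_add, integral_const_mul,
          integral_mul_const]
        rfl
    _ ≤ _ := by
        linarith [mul_le_mul_of_nonneg_left jensen
          (integral_nonneg fun ω => abs_nonneg (ξ j ω) : 0 ≤ c)]

lemma sum_thirdOrderProxy_le : ∑ j, thirdOrderProxy μ ξ Ds Y j ≤ 4 * lyapunov μ ξ κ := by
  refine (Finset.sum_le_sum fun j _ => hY.thirdOrderProxy_le H j).trans ?_
  rw [Finset.sum_add_distrib, Finset.sum_add_distrib, ← Finset.mul_sum]
  linarith [H.sum_integral_abs_mul_sq_localMass_le,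
    H.sum_integral_abs_mul_localMass_mul_integral_localMass_le,
    H.sum_integral_abs_mul_integral_sq_localMass_le]

end Bounds

end LocalFamily

namespace LocalDependence

variable {Ω ι : Type*} [m0 : MeasurableSpace Ω] {μ : Measure Ω} [Fintype ι] [DecidableEq ι]
  {ξ : ι → Ω → ℝ} {A B Bs Cs Ds : ι → Finset ι} {κ : ℕ}

section FarPart

variable (H : LocalDependence μ ξ A B Bs Cs Ds κ)
include H

lemma localMass_Cs_le_localMass (j : ι) (ω : Ω) : localMass ξ Cs j ω ≤ localMass ξ Ds j ω :=
  Finset.sum_le_sum_of_subset_of_nonneg (H.Cs_subset_Ds j) fun _ _ _ => abs_nonneg _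

lemma bddMeas_localMass_Cs (j : ι) :
    BddMeas (sigmaOf ξ ((Cs j).biUnion A)) (localMass ξ Cs j) :=
  .sum _ fun _ hk => (H.bddMeas_sigmaOf (H.subset_biUnion_A _ hk)).abs

lemma two_mul_abs_blockSum_sdiff_Cs_add_le (G : Finset ι) (j : ι) (ω : Ω) :
    2 * |blockSum ξ (G \ Cs j) ω| + localMass ξ Cs j ω ≤ 2 * |blockSum ξ (G \ Ds j) ω| + 1 := by
  have hsub : (G \ Cs j) \ Ds j = G \ Ds j := by
    have := H.Cs_subset_Ds j
    grind
  have hnear := H.abs_blockSum_le (Finset.inter_subset_right (s₁ := G \ Cs j) (s₂ := Ds j)) ω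
  rw [← blockSum_sub_blockSum_sdiff, hsub] at hnear
  linarith [abs_sub_abs_le_abs_sub (blockSum ξ (G \ Cs j) ω) (blockSum ξ (G \ Ds j) ω),
    H.localMass_le j ω, H.localMass_Cs_le_localMass j ω]

lemma abs_cube_sub_sub_dcube_far_le (G : Finset ι) (j : ι) (ω : Ω) :
    |(|blockSum ξ G ω| ^ 3 - |blockSum ξ (G \ Bs j) ω| ^ 3
        - blockSum ξ (G ∩ Bs j) ω * dcube (blockSum ξ (G \ Cs j) ω))| ≤
      localMass ξ Cs j ω * (3 * localMass ξ Cs j ω * (2 * |blockSum ξ (G \ Ds j) ω| + 1)) := by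
  have hsub : (G \ Bs j) \ Cs j = G \ Cs j := by
    have := H.Bs_subset_Cs j
    grind
  have hL := localMass_nonneg (ξ := ξ) (D := Cs) j ω
  rw [← blockSum_sub_blockSum_sdiff]
  calc _ ≤ |blockSum ξ G ω - blockSum ξ (G \ Bs j) ω| *
          (3 * localMass ξ Cs j ω * (2 * |blockSum ξ (G \ Cs j) ω| + localMass ξ Cs j ω)) := by
        refine abs_cube_sub_sub_dcube_le ?_ ?_
        · rw [blockSum_sub_blockSum_sdiff]
          exact abs_blockSum_le_localMass Finset.inter_subset_right ω
        · rw [← hsub, blockSum_sub_blockSum_sdiff]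
          exact abs_blockSum_le_localMass Finset.inter_subset_right ω
    _ ≤ _ := by
        have hu : |blockSum ξ G ω - blockSum ξ (G \ Bs j) ω| ≤ localMass ξ Cs j ω := by
          rw [blockSum_sub_blockSum_sdiff]
          exact abs_blockSum_le_localMass
            (Finset.inter_subset_right.trans (H.Bs_subset_Cs j)) ω
        have hWC := H.two_mul_abs_blockSum_sdiff_Cs_add_le G j ω
        refine mul_le_mul hu (mul_le_mul_of_nonneg_left hWC ?_) ?_ hL <;> positivity

variable [IsProbabilityMeasure μ]

lemma integral_abs_pow_far_le {G : Finset ι}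
    (hW : ∫ ω, blockSum ξ G ω ^ 4 ∂μ ≤ 105) (j : ι) {n : ℕ} (hn : n ≤ 4) :
    ∫ ω, |blockSum ξ (G \ Ds j) ω| ^ n ∂μ ≤ 842 := by
  have hξ := H.bddMeas
  have h4 := BddMeas.integral_pow_four_le_of_abs_sub_le (f := blockSum ξ (G \ Ds j))
    (g := blockSum ξ G) (by fun_prop) (by fun_prop) (fun ω => by
      rw [abs_sub_comm, blockSum_sub_blockSum_sdiff]
      linarith [H.abs_blockSum_le (Finset.inter_subset_right (s₁ := G) (s₂ := Ds j)) ω]) hW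
  norm_num at h4
  linarith [BddMeas.integral_abs_pow_le (f := blockSum ξ (G \ Ds j)) (by fun_prop) h4 hn]

lemma integral_mul_far_cube_le {G : Finset ι}
    (hW : ∫ ω, blockSum ξ G ω ^ 4 ∂μ ≤ 105) (j : ι) {P : Ω → ℝ}
    (hP : BddMeas (sigmaOf ξ ((Cs j).biUnion A)) P) (hP0 : ∀ ω, 0 ≤ P ω) :
    ∫ ω, P ω * (4 * |blockSum ξ (G \ Ds j) ω| ^ 3 + 1) ∂μ ≤ 3369 * ∫ ω, P ω ∂μ := by
  have hξ := H.bddMeas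
  have hfar : BddMeas (sigmaOf ξ ((Ds j)ᶜ.biUnion A)) (blockSum ξ (G \ Ds j)) :=
    H.bddMeas_blockSum_sigmaOf (Finset.Subset.trans (by grind [Finset.mem_compl])
      (H.subset_biUnion_A (Ds j)ᶜ))
  rw [BddMeas.integral_mul_of_indep (H.indep_Cs_Ds j) (H.sigmaOf_le _) (H.sigmaOf_le _) hP
    (by fun_prop), mul_comm]
  refine mul_le_mul_of_nonneg_right ?_ (integral_nonneg hP0)
  simp (disch := fun_prop) only [BddMeas.integral_add, integral_const_mul]
  simp only [integral_const, probReal_univ, one_smul]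
  linarith [H.integral_abs_pow_far_le hW j (n := 3) (by norm_num)]

end FarPart

end LocalDependence

namespace LocalFamily

variable {Ω ι : Type*} [m0 : MeasurableSpace Ω] {μ : Measure Ω} [DecidableEq ι]
  {ξ Y : ι → Ω → ℝ} {A B Bs Cs Ds : ι → Finset ι} {κ : ℕ}

section WeightedSecondMoment

variable [Fintype ι] [IsProbabilityMeasure μ] (hY : LocalFamily μ ξ A Y)
  (H : LocalDependence μ ξ A B Bs Cs Ds κ)
include hY H

lemma integral_mul_far_product_le {G : Finset ι} (hW : ∫ ω, blockSum ξ G ω ^ 4 ∂μ ≤ 105)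
    (j : ι) {P : Ω → ℝ} (hP : BddMeas (sigmaOf ξ ((Cs j).biUnion A)) P) (hP0 : ∀ ω, 0 ≤ P ω) :
    ∫ ω, P ω * ((|blockSum Y (G \ Ds j) ω| + 1 / 2) * (2 * |blockSum ξ (G \ Ds j) ω| + 1)) ∂μ ≤
      (2 * ∑ k, varianceProxy μ ξ Ds Y k + 1685) * ∫ ω, P ω ∂μ := by
  have hξ := H.bddMeas
  have hYb := hY.bddMeas H
  have hsub : G \ Ds j ⊆ (Ds j)ᶜ := by grind [Finset.mem_compl]
  have hfar : BddMeas (sigmaOf ξ ((Ds j)ᶜ.biUnion A)) (blockSum ξ (G \ Ds j)) :=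
    H.bddMeas_blockSum_sigmaOf (hsub.trans (H.subset_biUnion_A _))
  have hfarY : BddMeas (sigmaOf ξ ((Ds j)ᶜ.biUnion A)) (blockSum Y (G \ Ds j)) :=
    hY.bddMeas_blockSum_biUnion hsub
  rw [BddMeas.integral_mul_of_indep (H.indep_Cs_Ds j) (H.sigmaOf_le _) (H.sigmaOf_le _) hP
    (by fun_prop), mul_comm]
  refine mul_le_mul_of_nonneg_right ?_ (integral_nonneg hP0)
  calc _ ≤ ∫ ω, (2 * blockSum Y (G \ Ds j) ω ^ 2 + 2 * |blockSum ξ (G \ Ds j) ω| ^ 2 + 1) ∂μ := by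
        refine BddMeas.integral_mono (by fun_prop) (by fun_prop) fun ω => ?_
        rw [← sq_abs (blockSum Y _ ω)]
        nlinarith [sq_nonneg (|blockSum Y (G \ Ds j) ω| - |blockSum ξ (G \ Ds j) ω|),
          sq_nonneg (|blockSum Y (G \ Ds j) ω| - 1 / 2),
          sq_nonneg (|blockSum ξ (G \ Ds j) ω| - 1 / 2)]
    _ ≤ _ := by
        simp (disch := fun_prop) only [BddMeas.integral_add, integral_const_mul]
        simp only [integral_const, probReal_univ, one_smul]
        linarith [H.integral_abs_pow_far_le hW j (n := 2) (by norm_num),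
          hY.integral_sq_blockSum_le H (G \ Ds j)]

lemma integral_mul_near_le {G : Finset ι} (hW : ∫ ω, blockSum ξ G ω ^ 4 ∂μ ≤ 105) (j : ι) :
    ∫ ω, Y j ω * blockSum Y (G ∩ Cs j) ω * |blockSum ξ G ω| ^ 3 ∂μ ≤
      3369 * varianceProxy μ ξ Ds Y j := by
  have hξ := H.bddMeas
  have hYb := hY.bddMeas H
  have hP : BddMeas (sigmaOf ξ ((Cs j).biUnion A))
      fun ω => |Y j ω| * |blockSum Y (G ∩ Cs j) ω| :=
    (hY.bddMeas_biUnion (H.Bs_subset_Cs j (H.A_subset_Bs j (H.mem_A j)))).abs.mul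
      (hY.bddMeas_blockSum_biUnion Finset.inter_subset_right).abs
  have cube_le (ω : Ω) :
      |blockSum ξ G ω| ^ 3 ≤ 4 * |blockSum ξ (G \ Ds j) ω| ^ 3 + 1 := by
    have hsub := H.abs_blockSum_le (Finset.inter_subset_right (s₁ := G) (s₂ := Ds j)) ω
    rw [← blockSum_sub_blockSum_sdiff] at hsub
    have hle := (abs_sub_abs_le_abs_sub _ _).trans hsub
    have h0 := abs_nonneg (blockSum ξ (G \ Ds j) ω)
    calc |blockSum ξ G ω| ^ 3 ≤ (|blockSum ξ (G \ Ds j) ω| + 1 / 4) ^ 3 := by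
          gcongr; linarith
      _ ≤ _ := by
          nlinarith [mul_nonneg h0 (sq_nonneg (|blockSum ξ (G \ Ds j) ω| - 1 / 4)),
            sq_nonneg (|blockSum ξ (G \ Ds j) ω| - 1 / 4)]
  calc _ ≤ ∫ ω, |Y j ω| * |blockSum Y (G ∩ Cs j) ω| *
          (4 * |blockSum ξ (G \ Ds j) ω| ^ 3 + 1) ∂μ := by
        refine BddMeas.integral_mono (by fun_prop) (by fun_prop) fun ω => ?_
        refine (le_abs_self _).trans ?_
        simp only [abs_mul, abs_pow, abs_abs]
        exact mul_le_mul_of_nonneg_left (cube_le ω) (by positivity)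
    _ ≤ 3369 * ∫ ω, |Y j ω| * |blockSum Y (G ∩ Cs j) ω| ∂μ :=
        H.integral_mul_far_cube_le hW j hP fun ω => by positivity
    _ ≤ 3369 * varianceProxy μ ξ Ds Y j := by
        refine mul_le_mul_of_nonneg_left (BddMeas.integral_mono (by fun_prop) (by fun_prop)
          fun ω => ?_) (by norm_num)
        exact mul_le_mul_of_nonneg_left (hY.abs_blockSum_le_augmentedMass H
          (Finset.inter_subset_right.trans (H.Cs_subset_Ds j)) ω) (abs_nonneg _)

lemma abs_blockSum_sdiff_Cs_le (G : Finset ι) (j : ι) (ω : Ω) :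
    |blockSum Y (G \ Cs j) ω| ≤ |blockSum Y (G \ Ds j) ω| + 1 / 2 := by
  have hsub : (G \ Cs j) \ Ds j = G \ Ds j := by
    have := H.Cs_subset_Ds j
    grind
  have hnear := hY.abs_blockSum_le H
    (Finset.inter_subset_right (s₁ := G \ Cs j) (s₂ := Ds j)) ω
  rw [← blockSum_sub_blockSum_sdiff, hsub] at hnear
  linarith [abs_sub_abs_le_abs_sub (blockSum Y (G \ Cs j) ω) (blockSum Y (G \ Ds j) ω)]

lemma integral_mul_taylor_remainder_le {G : Finset ι}
    (hW : ∫ ω, blockSum ξ G ω ^ 4 ∂μ ≤ 105) (j : ι) :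
    ∫ ω, Y j ω * blockSum Y (G \ Cs j) ω * (|blockSum ξ G ω| ^ 3 - |blockSum ξ (G \ Bs j) ω| ^ 3
        - blockSum ξ (G ∩ Bs j) ω * dcube (blockSum ξ (G \ Cs j) ω)) ∂μ ≤
      3 * (2 * ∑ k, varianceProxy μ ξ Ds Y k + 1685) * thirdOrderProxy μ ξ Ds Y j := by
  have hξ := H.bddMeas
  have hYb := hY.bddMeas H
  let P (ω : Ω) : ℝ := 3 * (|Y j ω| * (localMass ξ Cs j ω * localMass ξ Cs j ω))
  have hP : BddMeas (sigmaOf ξ ((Cs j).biUnion A)) P := by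
    have hYj := hY.bddMeas_biUnion (H.Bs_subset_Cs j (H.A_subset_Bs j (H.mem_A j)))
    have hL := H.bddMeas_localMass_Cs j
    fun_prop
  have hP0 (ω : Ω) : 0 ≤ P ω :=
    mul_nonneg zero_le_three (mul_nonneg (abs_nonneg _) (mul_self_nonneg _))
  have hP_int : ∫ ω, P ω ∂μ ≤ 3 * thirdOrderProxy μ ξ Ds Y j := by
    rw [integral_const_mul]
    refine mul_le_mul_of_nonneg_left (BddMeas.integral_mono (by fun_prop) (by fun_prop)
      fun ω => ?_) (by norm_num)
    have hCD := H.localMass_Cs_le_localMass j ω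
    have hC := localMass_nonneg (ξ := ξ) (D := Cs) j ω
    have hD := localMass_nonneg (ξ := ξ) (D := Ds) j ω
    have hDe := localMass_le_augmentedMass (μ := μ) (ξ := ξ) (D := Ds) j ω
    gcongr
    exact hCD.trans hDe
  have hQ : 0 ≤ ∑ k, varianceProxy μ ξ Ds Y k :=
    Finset.sum_nonneg fun k _ => varianceProxy_nonneg Y k
  calc _ ≤ ∫ ω, P ω * ((|blockSum Y (G \ Ds j) ω| + 1 / 2) *
          (2 * |blockSum ξ (G \ Ds j) ω| + 1)) ∂μ := by
        have hP' := hP.mono (H.sigmaOf_le _)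
        refine BddMeas.integral_mono (by fun_prop) (by fun_prop) fun ω => (le_abs_self _).trans ?_
        rw [abs_mul, abs_mul]
        calc _ ≤ |Y j ω| * (|blockSum Y (G \ Ds j) ω| + 1 / 2) * _ :=
              mul_le_mul (mul_le_mul_of_nonneg_left (hY.abs_blockSum_sdiff_Cs_le H G j ω)
                (abs_nonneg _)) (H.abs_cube_sub_sub_dcube_far_le G j ω) (abs_nonneg _)
                (by positivity)
          _ = _ := by simp only [P]; ring
    _ ≤ _ := (hY.integral_mul_far_product_le H hW j hP hP0).trans
        ((mul_le_mul_of_nonneg_left hP_int (by linarith)).trans_eq (by ring))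

lemma integral_mul_blockSum_eq (G : Finset ι) (j : ι) :
    ∫ ω, Y j ω * blockSum ξ G ω ∂μ = ∫ ω, Y j ω * blockSum ξ (G ∩ Bs j) ω ∂μ := by
  have hξ := H.bddMeas
  have hYb := hY.bddMeas H
  have far : ∫ ω, Y j ω * blockSum ξ (G \ Bs j) ω ∂μ = 0 :=
    hY.integral_mul_eq_zero H j (H.bddMeas_blockSum_sigmaOf
      (Finset.Subset.trans (by grind [Finset.mem_compl]) (H.subset_biUnion_A (Bs j)ᶜ)))
  rw [← add_zero (∫ ω, Y j ω * blockSum ξ (G ∩ Bs j) ω ∂μ), ← far,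
    ← BddMeas.integral_add (by fun_prop) (by fun_prop)]
  simp only [← mul_add, blockSum_inter_add_blockSum_sdiff]

lemma integral_mul_dcube_far_eq (G : Finset ι) (j : ι) :
    ∫ ω, Y j ω * blockSum ξ (G ∩ Bs j) ω *
        (blockSum Y (G \ Cs j) ω * dcube (blockSum ξ (G \ Cs j) ω)) ∂μ =
      (∫ ω, Y j ω * blockSum ξ G ω ∂μ) *
        ∫ ω, blockSum Y (G \ Cs j) ω * dcube (blockSum ξ (G \ Cs j) ω) ∂μ := by
  have hsub : G \ Cs j ⊆ (Cs j)ᶜ := by grind [Finset.mem_compl]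
  rw [hY.integral_mul_blockSum_eq H]
  exact BddMeas.integral_mul_of_indep (H.indep_Bs_Cs j) (H.sigmaOf_le _) (H.sigmaOf_le _)
    ((hY.bddMeas_biUnion (H.A_subset_Bs j (H.mem_A j))).mul
      (H.bddMeas_blockSum_sigmaOf (Finset.inter_subset_right.trans (H.subset_biUnion_A _))))
    ((hY.bddMeas_blockSum_biUnion hsub).mul
      (bddMeas_dcube (H.bddMeas_blockSum_sigmaOf (hsub.trans (H.subset_biUnion_A _)))))

lemma abs_mul_dcube_sub_far_le (G : Finset ι) (j : ι) (ω : Ω) :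
    |blockSum Y (G \ Cs j) ω * (dcube (blockSum ξ G ω) - dcube (blockSum ξ (G \ Cs j) ω))| ≤
      3 * localMass ξ Cs j ω * ((|blockSum Y (G \ Ds j) ω| + 1 / 2) *
        (2 * |blockSum ξ (G \ Ds j) ω| + 1)) := by
  have hL := localMass_nonneg (ξ := ξ) (D := Cs) j ω
  have hv : |blockSum ξ G ω - blockSum ξ (G \ Cs j) ω| ≤ localMass ξ Cs j ω := by
    rw [blockSum_sub_blockSum_sdiff]
    exact abs_blockSum_le_localMass Finset.inter_subset_right ω
  have hWC := H.two_mul_abs_blockSum_sdiff_Cs_add_le G j ω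
  rw [abs_mul]
  calc _ ≤ (|blockSum Y (G \ Ds j) ω| + 1 / 2) * (3 * localMass ξ Cs j ω *
        (2 * |blockSum ξ (G \ Ds j) ω| + 1)) := by
        refine mul_le_mul (hY.abs_blockSum_sdiff_Cs_le H G j ω)
          ((abs_dcube_sub_le _ _).trans ?_) (abs_nonneg _) (by positivity)
        exact mul_le_mul (mul_le_mul_of_nonneg_left hv zero_le_three) (by linarith)
          (by positivity) (by positivity)
    _ = _ := by ring

lemma abs_integral_mul_dcube_sub_le {G : Finset ι}
    (hW : ∫ ω, blockSum ξ G ω ^ 4 ∂μ ≤ 105) (j : ι) :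
    |∫ ω, blockSum Y G ω * dcube (blockSum ξ G ω) ∂μ
        - ∫ ω, blockSum Y (G \ Cs j) ω * dcube (blockSum ξ (G \ Cs j) ω) ∂μ| ≤
      159 + 3 * (2 * ∑ k, varianceProxy μ ξ Ds Y k + 1685) * ∫ ω, localMass ξ Ds j ω ∂μ := by
  have hξ := H.bddMeas
  have hYb := hY.bddMeas H
  have near (ω : Ω) : |blockSum Y (G ∩ Cs j) ω * dcube (blockSum ξ G ω)| ≤
      3 / 2 * |blockSum ξ G ω| ^ 2 := by
    rw [abs_mul, abs_dcube, sq_abs]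
    nlinarith [hY.abs_blockSum_le H (Finset.inter_subset_right.trans (H.Cs_subset_Ds j) :
      G ∩ Cs j ⊆ Ds j) ω, sq_nonneg (blockSum ξ G ω)]
  have hL : ∫ ω, 3 * localMass ξ Cs j ω ∂μ ≤ 3 * ∫ ω, localMass ξ Ds j ω ∂μ := by
    rw [← integral_const_mul]
    exact BddMeas.integral_mono (by fun_prop) (by fun_prop) fun ω =>
      mul_le_mul_of_nonneg_left (H.localMass_Cs_le_localMass j ω) zero_le_three
  have hQ : 0 ≤ ∑ k, varianceProxy μ ξ Ds Y k :=
    Finset.sum_nonneg fun k _ => varianceProxy_nonneg Y k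
  have hP : BddMeas (sigmaOf ξ ((Cs j).biUnion A)) fun ω => 3 * localMass ξ Cs j ω :=
    (BddMeas.const 3).mul (H.bddMeas_localMass_Cs j)
  have far := hY.integral_mul_far_product_le H hW j hP
    fun ω => mul_nonneg zero_le_three (localMass_nonneg j ω)
  rw [← BddMeas.integral_sub (by fun_prop) (by fun_prop)]
  refine (BddMeas.abs_integral_le (g := fun ω => 3 / 2 * |blockSum ξ G ω| ^ 2
    + 3 * localMass ξ Cs j ω * ((|blockSum Y (G \ Ds j) ω| + 1 / 2) *
        (2 * |blockSum ξ (G \ Ds j) ω| + 1))) (by fun_prop) (by fun_prop) fun ω => ?_).trans ?_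
  · refine le_of_eq_of_le (congrArg _ ?_) ((abs_add_le _ _).trans
      (add_le_add (near ω) (hY.abs_mul_dcube_sub_far_le H G j ω)))
    rw [← blockSum_inter_add_blockSum_sdiff G (Cs j) (ξ := Y)]
    ring
  · rw [BddMeas.integral_add (by fun_prop) (by fun_prop), integral_const_mul]
    have hW2 := BddMeas.integral_abs_pow_le (f := blockSum ξ G) (by fun_prop) hW (n := 2)
      (by norm_num)
    nlinarith [mul_le_mul_of_nonneg_left hL
      (by linarith : 0 ≤ 2 * ∑ k, varianceProxy μ ξ Ds Y k + 1685)]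

lemma integral_abs_mul_localMass_le_varianceProxy (j : ι) :
    ∫ ω, |Y j ω| * localMass ξ Ds j ω ∂μ ≤ varianceProxy μ ξ Ds Y j := by
  have hξ := H.bddMeas
  have hYb := hY.bddMeas H
  exact BddMeas.integral_mono (by fun_prop) (by fun_prop) fun ω =>
    mul_le_mul_of_nonneg_left (localMass_le_augmentedMass j ω) (abs_nonneg _)

lemma integral_abs_mul_localMass_mul_integral_le_thirdOrderProxy (j : ι) :
    (∫ ω, |Y j ω| * localMass ξ Ds j ω ∂μ) * ∫ ω, localMass ξ Ds j ω ∂μ ≤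
      thirdOrderProxy μ ξ Ds Y j := by
  have hξ := H.bddMeas
  have hYb := hY.bddMeas H
  rw [← integral_mul_const]
  refine BddMeas.integral_mono (by fun_prop) (by fun_prop) fun ω => ?_
  rw [mul_assoc]
  refine mul_le_mul_of_nonneg_left (mul_le_mul_of_nonneg_left ?_ (localMass_nonneg j ω))
    (abs_nonneg _)
  exact le_add_of_nonneg_left (localMass_nonneg j ω)

lemma thirdOrderProxy_le_varianceProxy (j : ι) :
    thirdOrderProxy μ ξ Ds Y j ≤ 1 / 4 * varianceProxy μ ξ Ds Y j := by
  have hξ := H.bddMeas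
  have hYb := hY.bddMeas H
  rw [varianceProxy, ← integral_const_mul]
  refine BddMeas.integral_mono (by fun_prop) (by fun_prop) fun ω => ?_
  calc _ = localMass ξ Ds j ω * (|Y j ω| * augmentedMass μ ξ Ds j ω) := by ring
    _ ≤ _ := mul_le_mul_of_nonneg_right (H.localMass_le j ω)
        (mul_nonneg (abs_nonneg _) (augmentedMass_nonneg j ω))

lemma abs_integral_mul_blockSum_le (G : Finset ι) (j : ι) :
    |∫ ω, Y j ω * blockSum ξ G ω ∂μ| ≤ ∫ ω, |Y j ω| * localMass ξ Ds j ω ∂μ := by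
  have hξ := H.bddMeas
  have hYb := hY.bddMeas H
  rw [hY.integral_mul_blockSum_eq H]
  refine BddMeas.abs_integral_le (by fun_prop) (by fun_prop) fun ω => ?_
  rw [abs_mul]
  exact mul_le_mul_of_nonneg_left (abs_blockSum_le_localMass
    (Finset.inter_subset_right.trans (H.Bs_subset_Ds j)) ω) (abs_nonneg _)

lemma integral_mul_dcube_far_le {G : Finset ι}
    (hW : ∫ ω, blockSum ξ G ω ^ 4 ∂μ ≤ 105) (j : ι) :
    ∫ ω, Y j ω * blockSum ξ (G ∩ Bs j) ω *
        (blockSum Y (G \ Cs j) ω * dcube (blockSum ξ (G \ Cs j) ω)) ∂μ ≤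
      (∫ ω, Y j ω * blockSum ξ G ω ∂μ) * (∫ ω, blockSum Y G ω * dcube (blockSum ξ G ω) ∂μ)
        + 159 * varianceProxy μ ξ Ds Y j
        + 3 * (2 * ∑ k, varianceProxy μ ξ Ds Y k + 1685) * thirdOrderProxy μ ξ Ds Y j := by
  rw [hY.integral_mul_dcube_far_eq H]
  have hcov := hY.abs_integral_mul_blockSum_le H G j
  have herr := hY.abs_integral_mul_dcube_sub_le H hW j
  have hQ : 0 ≤ ∑ k, varianceProxy μ ξ Ds Y k :=
    Finset.sum_nonneg fun k _ => varianceProxy_nonneg Y k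
  have hprod := mul_le_mul hcov herr (abs_nonneg _) ((abs_nonneg _).trans hcov)
  rw [← abs_mul, mul_sub] at hprod
  nlinarith [neg_abs_le ((∫ ω, Y j ω * blockSum ξ G ω ∂μ) *
      (∫ ω, blockSum Y G ω * dcube (blockSum ξ G ω) ∂μ) - (∫ ω, Y j ω * blockSum ξ G ω ∂μ) *
      ∫ ω, blockSum Y (G \ Cs j) ω * dcube (blockSum ξ (G \ Cs j) ω) ∂μ),
    hY.integral_abs_mul_localMass_le_varianceProxy H j,
    mul_le_mul_of_nonneg_left (hY.integral_abs_mul_localMass_mul_integral_le_thirdOrderProxy H j)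
      (by linarith : 0 ≤ 2 * ∑ k, varianceProxy μ ξ Ds Y k + 1685)]

lemma integral_mul_mul_abs_cube_le {G : Finset ι}
    (hW : ∫ ω, blockSum ξ G ω ^ 4 ∂μ ≤ 105) (j : ι) :
    ∫ ω, Y j ω * blockSum Y G ω * |blockSum ξ G ω| ^ 3 ∂μ ≤
      (∫ ω, Y j ω * blockSum ξ G ω ∂μ) * (∫ ω, blockSum Y G ω * dcube (blockSum ξ G ω) ∂μ)
        + 6100 * varianceProxy μ ξ Ds Y j
        + 12 * (∑ k, varianceProxy μ ξ Ds Y k) * thirdOrderProxy μ ξ Ds Y j := by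
  have hξ := H.bddMeas
  have hYb := hY.bddMeas H
  have vanishing :
      ∫ ω, Y j ω * (blockSum Y (G \ Cs j) ω * |blockSum ξ (G \ Bs j) ω| ^ 3) ∂μ = 0 := by
    have hC : G \ Cs j ⊆ (Bs j)ᶜ := by
      have := H.Bs_subset_Cs j
      grind [Finset.mem_compl]
    have hB : G \ Bs j ⊆ (Bs j)ᶜ := by grind [Finset.mem_compl]
    exact hY.integral_mul_eq_zero H j ((hY.bddMeas_blockSum_biUnion hC).mul
      ((H.bddMeas_blockSum_sigmaOf (hB.trans (H.subset_biUnion_A _))).abs.pow 3))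
  have decomposition : ∫ ω, Y j ω * blockSum Y G ω * |blockSum ξ G ω| ^ 3 ∂μ
      = ∫ ω, (Y j ω * blockSum Y (G ∩ Cs j) ω * |blockSum ξ G ω| ^ 3
        + Y j ω * (blockSum Y (G \ Cs j) ω * |blockSum ξ (G \ Bs j) ω| ^ 3)
        + Y j ω * blockSum ξ (G ∩ Bs j) ω *
            (blockSum Y (G \ Cs j) ω * dcube (blockSum ξ (G \ Cs j) ω))
        + Y j ω * blockSum Y (G \ Cs j) ω *
            (|blockSum ξ G ω| ^ 3 - |blockSum ξ (G \ Bs j) ω| ^ 3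
              - blockSum ξ (G ∩ Bs j) ω * dcube (blockSum ξ (G \ Cs j) ω))) ∂μ := by
    congr 1 with ω
    rw [← blockSum_inter_add_blockSum_sdiff G (Cs j) (ξ := Y)]
    ring
  rw [decomposition]
  simp (disch := fun_prop) only [BddMeas.integral_add]
  linarith [hY.integral_mul_near_le H hW j, hY.integral_mul_dcube_far_le H hW j,
    hY.integral_mul_taylor_remainder_le H hW j, hY.thirdOrderProxy_le_varianceProxy H j,
    varianceProxy_nonneg (μ := μ) (ξ := ξ) (D := Ds) Y j]

lemma integral_mul_mul_integral_mul_dcube_le {G : Finset ι}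
    (hW : ∫ ω, blockSum ξ G ω ^ 4 ∂μ ≤ 105) :
    (∫ ω, blockSum Y G ω * blockSum ξ G ω ∂μ) *
        (∫ ω, blockSum Y G ω * dcube (blockSum ξ G ω) ∂μ) ≤
      320 * ∑ j, varianceProxy μ ξ Ds Y j := by
  have hξ := H.bddMeas
  have hYb := hY.bddMeas H
  have hQ : 0 ≤ ∑ k, varianceProxy μ ξ Ds Y k :=
    Finset.sum_nonneg fun k _ => varianceProxy_nonneg Y k
  have hS := hY.integral_sq_blockSum_le H G
  have hW2 := BddMeas.integral_abs_pow_le (f := blockSum ξ G) (by fun_prop) hW (n := 2)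
    (by norm_num)
  simp only [sq_abs] at hW2
  have dcube_sq : ∫ ω, dcube (blockSum ξ G ω) ^ 2 ∂μ ≤ 945 := by
    simp only [← sq_abs (dcube _), abs_dcube, mul_pow, ← pow_mul]
    rw [integral_const_mul]
    linarith
  have first : (∫ ω, blockSum Y G ω * blockSum ξ G ω ∂μ) ^ 2 ≤
      (∑ k, varianceProxy μ ξ Ds Y k) * 106 :=
    (BddMeas.sq_integral_mul_le (by fun_prop) (by fun_prop)).trans
      (mul_le_mul hS (by linarith) (integral_nonneg fun ω => sq_nonneg _) hQ)
  have second : (∫ ω, blockSum Y G ω * dcube (blockSum ξ G ω) ∂μ) ^ 2 ≤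
      (∑ k, varianceProxy μ ξ Ds Y k) * 945 :=
    (BddMeas.sq_integral_mul_le (by fun_prop) (by fun_prop)).trans
      (mul_le_mul hS dcube_sq (integral_nonneg fun ω => sq_nonneg _) hQ)
  refine (abs_le_of_sq_le_sq' ?_ (by positivity)).2
  rw [mul_pow]
  nlinarith [mul_le_mul first second (sq_nonneg _) (by positivity), mul_nonneg hQ hQ]

lemma integral_sq_mul_abs_cube_le {G : Finset ι} (hW : ∫ ω, blockSum ξ G ω ^ 4 ∂μ ≤ 105)
    (hτ : lyapunov μ ξ κ ≤ 1) :
    ∫ ω, blockSum Y G ω ^ 2 * |blockSum ξ G ω| ^ 3 ∂μ ≤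
      6500 * ∑ j, varianceProxy μ ξ Ds Y j := by
  have hξ := H.bddMeas
  have hYb := hY.bddMeas H
  set Q := ∑ k, varianceProxy μ ξ Ds Y k
  have hQ : 0 ≤ Q := Finset.sum_nonneg fun k _ => varianceProxy_nonneg Y k
  have sum_variance : ∑ j ∈ G, varianceProxy μ ξ Ds Y j ≤ Q :=
    Finset.sum_le_sum_of_subset_of_nonneg (Finset.subset_univ G)
      fun j _ _ => varianceProxy_nonneg Y j
  have sum_third : ∑ j ∈ G, thirdOrderProxy μ ξ Ds Y j ≤ 4 :=
    (Finset.sum_le_sum_of_subset_of_nonneg (Finset.subset_univ G)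
      fun j _ _ => thirdOrderProxy_nonneg Y j).trans
      ((hY.sum_thirdOrderProxy_le H).trans (by linarith))
  calc ∫ ω, blockSum Y G ω ^ 2 * |blockSum ξ G ω| ^ 3 ∂μ
      = ∑ j ∈ G, ∫ ω, Y j ω * blockSum Y G ω * |blockSum ξ G ω| ^ 3 ∂μ := by
        rw [← BddMeas.integral_sum _ fun j => by fun_prop]
        simp only [← Finset.sum_mul, sq]
        rfl
    _ ≤ _ := Finset.sum_le_sum fun j _ => hY.integral_mul_mul_abs_cube_le H hW j
    _ = (∫ ω, blockSum Y G ω * blockSum ξ G ω ∂μ) *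
          (∫ ω, blockSum Y G ω * dcube (blockSum ξ G ω) ∂μ)
        + 6100 * ∑ j ∈ G, varianceProxy μ ξ Ds Y j
        + 12 * Q * ∑ j ∈ G, thirdOrderProxy μ ξ Ds Y j := by
        rw [Finset.sum_add_distrib, Finset.sum_add_distrib, ← Finset.sum_mul,
          ← Finset.mul_sum, ← Finset.mul_sum, ← BddMeas.integral_sum _ fun j => by fun_prop]
        simp only [← Finset.sum_mul]
        rfl
    _ ≤ 6500 * Q := by
        nlinarith [hY.integral_mul_mul_integral_mul_dcube_le H hW]

lemma integral_weight_mul_sq_blockSum_le {G : Finset ι}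
    (hW : ∫ ω, blockSum ξ G ω ^ 4 ∂μ ≤ 105) (hτ : lyapunov μ ξ κ ≤ 1) :
    ∫ ω, (32 + 4 * |blockSum ξ G ω| ^ 3) * blockSum Y G ω ^ 2 ∂μ ≤
      30000 * ∑ j, varianceProxy μ ξ Ds Y j := by
  have hξ := H.bddMeas
  have hYb := hY.bddMeas H
  have hQ : 0 ≤ ∑ k, varianceProxy μ ξ Ds Y k :=
    Finset.sum_nonneg fun k _ => varianceProxy_nonneg Y k
  have expand (ω : Ω) : (32 + 4 * |blockSum ξ G ω| ^ 3) * blockSum Y G ω ^ 2 =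
      32 * blockSum Y G ω ^ 2 + 4 * (blockSum Y G ω ^ 2 * |blockSum ξ G ω| ^ 3) := by ring
  simp only [expand]
  simp (disch := fun_prop) only [BddMeas.integral_add, integral_const_mul]
  linarith [hY.integral_sq_blockSum_le H G, hY.integral_sq_mul_abs_cube_le H hW hτ]

end WeightedSecondMoment

end LocalFamily

/-! ### Trapezoidal test functions -/

section Trapezoid

/-- The trapezoidal test function: it equals `1` on `[0, l]`, vanishes off `[-δ, l + δ]` and has
slopes `± 1 / δ` in between. -/
noncomputable def trapezoid (δ l p : ℝ) : ℝ :=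
  max 0 (min 1 (min (1 + p / δ) (1 + (l - p) / δ)))

/-- The primitive of `trapezoid δ l` that vanishes on `(-∞, -δ]`; it is the solution `f` of the
Stein argument. -/
noncomputable def trapezoidPrimitive (δ l p : ℝ) : ℝ := ∫ u in -δ..p, trapezoid δ l u

/-- The indicator of `[x, x + l]`. -/
noncomputable def window (x l y : ℝ) : ℝ := (Set.Icc x (x + l)).indicator (fun _ => 1) y

/-- The weight `(1 + x₊)³`, which dominates `(1 + x)³` and is nonnegative. -/
noncomputable def cubeWeight (x : ℝ) : ℝ := (1 + max x 0) ^ 3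

variable {δ l p x y : ℝ}

lemma window_nonneg (x l y : ℝ) : 0 ≤ window x l y :=
  Set.indicator_nonneg (fun _ _ => zero_le_one) _

lemma window_of_mem (h : y ∈ Set.Icc x (x + l)) : window x l y = 1 := Set.indicator_of_mem h _

lemma window_of_notMem (h : y ∉ Set.Icc x (x + l)) : window x l y = 0 :=
  Set.indicator_of_notMem h _

lemma window_le_of_imp {c : ℝ} (hc : 0 ≤ c) (h : y ∈ Set.Icc x (x + l) → 1 ≤ c) :
    window x l y ≤ c :=
  Set.indicator_apply_le' h fun _ => hc

lemma cubeWeight_nonneg (x : ℝ) : 0 ≤ cubeWeight x := by unfold cubeWeight; positivity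

lemma one_add_pow_three_le_cubeWeight (x : ℝ) : (1 + x) ^ 3 ≤ cubeWeight x :=
  (Odd.strictMono_pow (by decide)).monotone (by gcongr; exact le_max_left _ _)

lemma cubeWeight_mono (h : x ≤ y) : cubeWeight x ≤ cubeWeight y := by
  unfold cubeWeight; gcongr

lemma cubeWeight_le_of_le_add_one (h : x ≤ y + 1) : cubeWeight x ≤ 32 + 4 * |y| ^ 3 := by
  have hx : max x 0 ≤ 1 + |y| :=
    max_le (by linarith [le_abs_self y]) (by linarith [abs_nonneg y])
  calc cubeWeight x ≤ (1 + (1 + |y|)) ^ 3 := by unfold cubeWeight; gcongr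
    _ ≤ 32 + 4 * |y| ^ 3 := by
      nlinarith [mul_nonneg (add_nonneg (abs_nonneg y) zero_le_two) (sq_nonneg (|y| - 2))]

lemma cubeWeight_le_eight_mul (h : x ≤ y + 1) : cubeWeight x ≤ 8 * cubeWeight y := by
  have hx : max x 0 ≤ 1 + 2 * max y 0 :=
    max_le (by linarith [le_max_left y 0, le_max_right y 0]) (by linarith [le_max_right y 0])
  calc cubeWeight x ≤ (1 + (1 + 2 * max y 0)) ^ 3 := by unfold cubeWeight; gcongr
    _ = 8 * cubeWeight y := by unfold cubeWeight; ring

lemma cubeWeight_mul_le {p c : ℝ} (hp : 0 ≤ p) (hpc : p ≤ c) (h : y + 1 < x → p = 0) :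
    cubeWeight x * p ≤ (32 + 4 * |y| ^ 3) * c := by
  rcases le_or_gt x (y + 1) with hx | hx
  · exact mul_le_mul (cubeWeight_le_of_le_add_one hx) hpc hp (by positivity)
  · rw [h hx, mul_zero]
    exact mul_nonneg (by positivity) (hp.trans hpc)

lemma trapezoid_nonneg (δ l p : ℝ) : 0 ≤ trapezoid δ l p := le_max_left _ _

lemma trapezoid_le_one (δ l p : ℝ) : trapezoid δ l p ≤ 1 :=
  max_le zero_le_one (min_le_left _ _)

lemma abs_trapezoid_le_one (δ l p : ℝ) : |trapezoid δ l p| ≤ 1 := by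
  rw [abs_of_nonneg (trapezoid_nonneg δ l p)]
  exact trapezoid_le_one δ l p

lemma continuous_trapezoid (δ : ℝ) : Continuous fun q : ℝ × ℝ => trapezoid δ q.1 q.2 := by
  unfold trapezoid
  fun_prop

lemma continuous_trapezoid_right (δ l : ℝ) : Continuous (trapezoid δ l) :=
  (continuous_trapezoid δ).comp (Continuous.prodMk_right l)

lemma continuous_trapezoidPrimitive (δ : ℝ) :
    Continuous fun q : ℝ × ℝ => trapezoidPrimitive δ q.1 q.2 :=
  intervalIntegral.continuous_parametric_intervalIntegral_of_continuous
    (f := fun (q : ℝ × ℝ) u => trapezoid δ q.1 u)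
    ((continuous_trapezoid δ).comp (g := fun q : ℝ × ℝ => trapezoid δ q.1 q.2)
      (f := fun q : (ℝ × ℝ) × ℝ => (q.1.1, q.2)) (by fun_prop)) continuous_snd

lemma hasDerivAt_trapezoidPrimitive (δ l p : ℝ) :
    HasDerivAt (trapezoidPrimitive δ l) (trapezoid δ l p) p :=
  (continuous_trapezoid_right δ l).integral_hasStrictDerivAt (-δ) p |>.hasDerivAt

section Width

variable (hδ : 0 < δ)
include hδ

lemma trapezoid_eq_one (h₀ : 0 ≤ p) (h₁ : p ≤ l) : trapezoid δ l p = 1 := by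
  have h₀' : 0 ≤ p / δ := by positivity
  have h₁' : 0 ≤ (l - p) / δ := div_nonneg (by linarith) hδ.le
  rw [trapezoid, min_eq_left (le_min (by linarith) (by linarith)), max_eq_right zero_le_one]

lemma trapezoid_eq_zero_of_le (h : p ≤ -δ) : trapezoid δ l p = 0 := by
  have hp : p / δ ≤ -1 := by rwa [div_le_iff₀ hδ, neg_one_mul]
  exact max_eq_left ((min_le_right _ _).trans ((min_le_left _ _).trans (by linarith)))

lemma trapezoid_eq_zero_of_ge (h : l + δ ≤ p) : trapezoid δ l p = 0 := by
  have hp : (l - p) / δ ≤ -1 := by rw [div_le_iff₀ hδ]; linarith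
  exact max_eq_left ((min_le_right _ _).trans ((min_le_right _ _).trans (by linarith)))

lemma abs_trapezoid_sub_le (p q : ℝ) : |trapezoid δ l p - trapezoid δ l q| ≤ |p - q| / δ := by
  have left : |1 + p / δ - (1 + q / δ)| = |p - q| / δ := by
    rw [add_sub_add_left_eq_sub, ← sub_div, abs_div, abs_of_pos hδ]
  have right : |1 + (l - p) / δ - (1 + (l - q) / δ)| = |p - q| / δ := by
    rw [add_sub_add_left_eq_sub, ← sub_div, abs_div, abs_of_pos hδ, sub_sub_sub_cancel_left,
      abs_sub_comm]
  unfold trapezoid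
  rw [max_comm 0, max_comm 0, min_comm 1, min_comm 1]
  calc _ ≤ |min (min (1 + p / δ) (1 + (l - p) / δ)) 1 -
          min (min (1 + q / δ) (1 + (l - q) / δ)) 1| :=
        abs_max_sub_max_le_abs _ _ _
    _ ≤ |min (1 + p / δ) (1 + (l - p) / δ) - min (1 + q / δ) (1 + (l - q) / δ)| := by
        simpa using abs_min_sub_min_le_max (min (1 + p / δ) (1 + (l - p) / δ)) 1
          (min (1 + q / δ) (1 + (l - q) / δ)) 1
    _ ≤ |p - q| / δ := by
        simpa only [left, right, max_self] using abs_min_sub_min_le_max (1 + p / δ)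
          (1 + (l - p) / δ) (1 + q / δ) (1 + (l - q) / δ)

lemma abs_trapezoid_add_sub_le (l x y t : ℝ) :
    |trapezoid δ l (y - x + t) - trapezoid δ l (y - x)| ≤
      min 1 (|t| / δ) * (window (x - δ - |t|) (δ + 2 * |t|) y +
        window (x + l - |t|) (δ + 2 * |t|) y) := by
  have upper : |trapezoid δ l (y - x + t) - trapezoid δ l (y - x)| ≤ min 1 (|t| / δ) := by
    refine le_min ?_ ?_
    · rw [abs_le]
      constructor <;> linarith [trapezoid_nonneg δ l (y - x), trapezoid_nonneg δ l (y - x + t),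
        trapezoid_le_one δ l (y - x), trapezoid_le_one δ l (y - x + t)]
    · simpa using abs_trapezoid_sub_le (l := l) hδ (y - x + t) (y - x)
  have hmin : 0 ≤ min 1 (|t| / δ) := (abs_nonneg _).trans upper
  have ht := abs_le.1 (le_refl |t|)
  by_cases h₁ : y ∈ Set.Icc (x - δ - |t|) (x - δ - |t| + (δ + 2 * |t|))
  · rw [window_of_mem h₁]
    nlinarith [window_nonneg (x + l - |t|) (δ + 2 * |t|) y]
  by_cases h₂ : y ∈ Set.Icc (x + l - |t|) (x + l - |t| + (δ + 2 * |t|))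
  · rw [window_of_mem h₂]
    nlinarith [window_nonneg (x - δ - |t|) (δ + 2 * |t|) y]
  have unchanged : trapezoid δ l (y - x + t) = trapezoid δ l (y - x) := by
    rcases lt_or_ge y (x - δ - |t|) with below | h
    · rw [trapezoid_eq_zero_of_le hδ (by linarith), trapezoid_eq_zero_of_le hδ (by linarith)]
    have after_left : x + |t| < y := by
      by_contra! hy
      exact h₁ ⟨h, by linarith⟩
    rcases lt_or_ge y (x + l - |t|) with inside | h
    · rw [trapezoid_eq_one hδ (by linarith) (by linarith),
        trapezoid_eq_one hδ (by linarith) (by linarith)]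
    have after_right : x + l + δ + |t| < y := by
      by_contra! hy
      exact h₂ ⟨h, by linarith⟩
    rw [trapezoid_eq_zero_of_ge hδ (by linarith), trapezoid_eq_zero_of_ge hδ (by linarith)]
  rw [unchanged, sub_self, abs_zero]
  exact mul_nonneg hmin (add_nonneg (window_nonneg _ _ _) (window_nonneg _ _ _))

lemma integral_trapezoid_le (hl : 0 ≤ l) {a b : ℝ} (hab : a ≤ b) :
    ∫ u in a..b, trapezoid δ l u ≤ l + 2 * δ := by
  have bound (u : ℝ) :
      trapezoid δ l u ≤ (Set.Icc (-δ) (l + δ)).indicator (fun _ => (1 : ℝ)) u := by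
    by_cases hu : u ∈ Set.Icc (-δ) (l + δ)
    · rw [Set.indicator_of_mem hu]
      exact trapezoid_le_one δ l u
    · rw [Set.indicator_of_notMem hu]
      rcases lt_or_ge u (-δ) with h | h
      · rw [trapezoid_eq_zero_of_le hδ h.le]
      · rw [trapezoid_eq_zero_of_ge hδ (not_lt.1 fun h' => hu ⟨h, h'.le⟩)]
  have hint : Integrable ((Set.Icc (-δ) (l + δ)).indicator (fun _ => (1 : ℝ))) :=
    (integrable_indicator_iff measurableSet_Icc).2 (integrableOn_const (by simp))
  calc ∫ u in a..b, trapezoid δ l u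
      = ∫ u in Set.Ioc a b, trapezoid δ l u := intervalIntegral.integral_of_le hab
    _ ≤ ∫ u in Set.Ioc a b, (Set.Icc (-δ) (l + δ)).indicator (fun _ => (1 : ℝ)) u :=
        integral_mono ((continuous_trapezoid_right δ l).integrableOn_Ioc) hint.integrableOn bound
    _ ≤ ∫ u, (Set.Icc (-δ) (l + δ)).indicator (fun _ => (1 : ℝ)) u :=
        setIntegral_le_integral hint
          (.of_forall fun u => Set.indicator_nonneg (fun _ _ => zero_le_one) u)
    _ = l + 2 * δ := by
        rw [integral_indicator measurableSet_Icc, setIntegral_const, smul_eq_mul, mul_one,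
          Real.volume_real_Icc_of_le (by linarith)]
        ring

lemma trapezoidPrimitive_eq_zero (h : p ≤ -δ) : trapezoidPrimitive δ l p = 0 := by
  rw [trapezoidPrimitive, intervalIntegral.integral_symm, neg_eq_zero]
  refine intervalIntegral.integral_zero_ae (.of_forall fun u hu => ?_)
  rw [Set.uIoc_of_le h] at hu
  exact trapezoid_eq_zero_of_le hδ hu.2

lemma trapezoidPrimitive_nonneg (l p : ℝ) : 0 ≤ trapezoidPrimitive δ l p := by
  rcases le_total p (-δ) with h | h
  · rw [trapezoidPrimitive_eq_zero hδ h]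
  · exact intervalIntegral.integral_nonneg h fun u _ => trapezoid_nonneg δ l u

lemma trapezoidPrimitive_le (hl : 0 ≤ l) (p : ℝ) : trapezoidPrimitive δ l p ≤ l + 2 * δ := by
  rcases le_total p (-δ) with h | h
  · rw [trapezoidPrimitive_eq_zero hδ h]
    positivity
  · exact integral_trapezoid_le hδ hl h

end Width

section Measurability

variable {Ω : Type*} {m : MeasurableSpace Ω} {f g h : Ω → ℝ}

@[fun_prop]
lemma bddMeas_cubeWeight (hf : BddMeas m f) : BddMeas m fun ω => cubeWeight (f ω) := by
  unfold cubeWeight; fun_prop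

@[fun_prop]
lemma bddMeas_window (hf : BddMeas m f) (hg : BddMeas m g) (hh : BddMeas m h) :
    BddMeas m fun ω => window (f ω) (g ω) (h ω) := by
  refine ⟨?_, 1, fun ω => ?_⟩
  · exact measurable_const.indicator ((measurableSet_le hf.1 hh.1).inter
      (measurableSet_le hh.1 (hf.1.add hg.1)))
  · rw [abs_of_nonneg (window_nonneg _ _ _)]
    exact window_le_of_imp zero_le_one fun _ => le_rfl

@[fun_prop]
lemma bddMeas_trapezoid (hf : BddMeas m f) (hg : BddMeas m g) :
    BddMeas m fun ω => trapezoid δ (f ω) (g ω) :=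
  hf.continuous_comp₂ hg (continuous_trapezoid δ)

@[fun_prop]
lemma bddMeas_trapezoidPrimitive (hf : BddMeas m f) (hg : BddMeas m g) :
    BddMeas m fun ω => trapezoidPrimitive δ (f ω) (g ω) :=
  hf.continuous_comp₂ hg (continuous_trapezoidPrimitive δ)

lemma bddMeas_trapezoid_add_snd (hf : BddMeas m f) (hg : BddMeas m g) :
    BddMeas (m.prod inferInstance) fun p : Ω × ℝ => trapezoid δ (f p.1) (g p.1 + p.2) :=
  ⟨(continuous_trapezoid δ).measurable.comp ((hf.1.comp measurable_fst).prodMk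
    ((hg.1.comp measurable_fst).add measurable_snd)), 1, fun _ => abs_trapezoid_le_one _ _ _⟩

end Measurability

end Trapezoid

namespace BddMeas

section Product

variable {Ω E : Type*} {m0 : MeasurableSpace Ω} {mE : MeasurableSpace E} {μ : Measure Ω}
  {ν : Measure E} [IsFiniteMeasure μ] [IsFiniteMeasure ν] {f : Ω → ℝ} {F : Ω → E → ℝ}

lemma comp_fst (hf : BddMeas m0 f) : BddMeas (m0.prod mE) fun p => f p.1 :=
  hf.comp_measurable measurable_fst

lemma left_section (hF : BddMeas (m0.prod mE) (Function.uncurry F)) (t : E) :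
    BddMeas m0 fun ω => F ω t :=
  hF.comp_measurable measurable_prodMk_right

lemma integral_left (hF : BddMeas (m0.prod mE) (Function.uncurry F)) :
    BddMeas mE fun t => ∫ ω, F ω t ∂μ := by
  obtain ⟨hFm, C, hC⟩ := hF
  exact ⟨(hFm.stronglyMeasurable.integral_prod_left' (μ := μ)).measurable, C * μ.real Set.univ,
    fun t => norm_integral_le_of_norm_le_const (f := fun ω => F ω t)
      (.of_forall fun ω => hC (ω, t))⟩

lemma integral_right (hF : BddMeas (m0.prod mE) (Function.uncurry F)) :
    BddMeas m0 fun ω => ∫ t, F ω t ∂ν := by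
  obtain ⟨hFm, C, hC⟩ := hF
  exact ⟨(hFm.stronglyMeasurable.integral_prod_right' (ν := ν)).measurable, C * ν.real Set.univ,
    fun ω => norm_integral_le_of_norm_le_const (f := F ω) (.of_forall fun t => hC (ω, t))⟩

lemma integral_comm (hF : BddMeas (m0.prod mE) (Function.uncurry F)) :
    ∫ t, (∫ ω, F ω t ∂μ) ∂ν = ∫ ω, (∫ t, F ω t ∂ν) ∂μ :=
  (integral_integral_swap (hF.integrable (μ := μ.prod ν))).symm

end Product

end BddMeas

/-! ### Stein kernels -/

section Kernel

/-- The deterministic kernel of Stein's method: `∫ steinKernel s t * h t dt = ∫_{-s}^0 h`. -/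
noncomputable def steinKernel (s t : ℝ) : ℝ :=
  (Set.Ioc (-s) 0).indicator (fun _ => 1) t - (Set.Ioc 0 (-s)).indicator (fun _ => 1) t

/-- Lebesgue measure on `[-1/4, 1/4]`, the range of the increments `ξ_{A_j}`. -/
noncomputable def incrementMeasure : Measure ℝ := volume.restrict (Set.Icc (-1 / 4) (1 / 4))

instance : IsFiniteMeasure incrementMeasure := by unfold incrementMeasure; infer_instance

lemma ae_incrementMeasure_abs_le : ∀ᵐ t ∂incrementMeasure, |t| ≤ 1 / 4 := by
  filter_upwards [ae_restrict_mem measurableSet_Icc] with t ht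
  exact abs_le.2 ⟨by linarith [ht.1], ht.2⟩

lemma abs_steinKernel_le_one (s t : ℝ) : |steinKernel s t| ≤ 1 := by
  unfold steinKernel
  simp only [Set.indicator_apply]
  split_ifs <;> simp

lemma steinKernel_eq_zero {s t : ℝ} (h : |s| < |t|) : steinKernel s t = 0 := by
  rw [lt_abs, abs_lt, abs_lt] at h
  rw [steinKernel, Set.indicator_of_notMem, Set.indicator_of_notMem, sub_self] <;>
    · rintro ⟨_, _⟩
      rcases h with h | h <;> linarith

lemma abs_steinKernel (s t : ℝ) : |steinKernel s t| = SignType.sign s * steinKernel s t := by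
  unfold steinKernel
  rcases lt_trichotomy s 0 with h | rfl | h
  · rw [sign_neg h, Set.Ioc_eq_empty (show ¬-s < 0 by linarith)]
    simp only [Set.indicator_apply, Set.mem_empty_iff_false, if_false]
    split_ifs <;> simp
  · simp
  · rw [sign_pos h, Set.Ioc_eq_empty (show ¬0 < -s by linarith)]
    simp only [Set.indicator_apply, Set.mem_empty_iff_false, if_false]
    split_ifs <;> simp

lemma abs_mul_abs_steinKernel_le (s t : ℝ) : |t| * |steinKernel s t| ≤ |s| * |steinKernel s t| := by
  rcases lt_or_ge |s| |t| with h | h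
  · simp [steinKernel_eq_zero h]
  · gcongr

lemma measurable_steinKernel : Measurable fun p : ℝ × ℝ => steinKernel p.1 p.2 :=
  (measurable_const.indicator ((measurableSet_lt measurable_fst.neg measurable_snd).inter
      (measurableSet_le measurable_snd measurable_const))).sub
    (measurable_const.indicator ((measurableSet_lt measurable_const measurable_snd).inter
      (measurableSet_le measurable_snd measurable_fst.neg)))

section Integral

variable {s : ℝ} (hs : |s| ≤ 1 / 4)
include hs

lemma integral_steinKernel_mul {h : ℝ → ℝ} (hh : Continuous h) :
    ∫ t, steinKernel s t * h t ∂incrementMeasure = ∫ t in -s..0, h t := by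
  rw [abs_le] at hs
  have expand (t : ℝ) : steinKernel s t * h t =
      (Set.Ioc (-s) 0).indicator h t - (Set.Ioc 0 (-s)).indicator h t := by
    simp only [steinKernel, Set.indicator_apply]
    split_ifs <;> simp
  have hint : Integrable h incrementMeasure := hh.integrableOn_Icc
  simp only [expand]
  rw [integral_sub (hint.indicator measurableSet_Ioc) (hint.indicator measurableSet_Ioc),
    integral_indicator measurableSet_Ioc, integral_indicator measurableSet_Ioc, incrementMeasure,
    Measure.restrict_restrict measurableSet_Ioc, Measure.restrict_restrict measurableSet_Ioc,
    Set.inter_eq_left.2, Set.inter_eq_left.2, intervalIntegral]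
  · exact fun t ht => ⟨by linarith [ht.1], by linarith [ht.2]⟩
  · exact fun t ht => ⟨by linarith [ht.1], by linarith [ht.2]⟩

lemma integral_steinKernel : ∫ t, steinKernel s t ∂incrementMeasure = s := by
  simpa using integral_steinKernel_mul hs (h := fun _ => 1) continuous_const

lemma integral_abs_steinKernel : ∫ t, |steinKernel s t| ∂incrementMeasure = |s| := by
  simp only [abs_steinKernel]
  rw [integral_const_mul, integral_steinKernel hs, sign_mul_self]

lemma integral_steinKernel_mul_trapezoid (δ l p : ℝ) :
    ∫ t, steinKernel s t * trapezoid δ l (p + t) ∂incrementMeasure =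
      trapezoidPrimitive δ l p - trapezoidPrimitive δ l (p - s) := by
  have hcont : Continuous fun t => trapezoid δ l (p + t) :=
    (continuous_trapezoid_right δ l).comp (continuous_const_add p)
  rw [integral_steinKernel_mul hs hcont, intervalIntegral.integral_eq_sub_of_hasDerivAt
    (fun t _ => (hasDerivAt_trapezoidPrimitive δ l (p + t)).comp_const_add p t)
    (hcont.intervalIntegrable _ _), add_zero, sub_eq_add_neg p s]

end Integral

lemma integral_trapezoid_add_le {δ l : ℝ} (hδ : 0 < δ) (hl : 0 ≤ l) (p : ℝ) :
    ∫ t, trapezoid δ l (p + t) ∂incrementMeasure ≤ l + 2 * δ := by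
  rw [incrementMeasure, integral_Icc_eq_integral_Ioc,
    ← intervalIntegral.integral_of_le (by norm_num), intervalIntegral.integral_comp_add_left]
  exact integral_trapezoid_le hδ hl (by linarith)

variable {Ω : Type*} {m0 : MeasurableSpace Ω} {μ : Measure Ω} {f s : Ω → ℝ}

lemma bddMeas_steinKernel_left {m : MeasurableSpace Ω} (hs : BddMeas m s) (t : ℝ) :
    BddMeas m fun ω => steinKernel (s ω) t :=
  ⟨measurable_steinKernel.comp (hs.1.prodMk measurable_const), 1,
    fun _ => abs_steinKernel_le_one _ _⟩

lemma bddMeas_steinKernel (hs : BddMeas m0 s) :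
    BddMeas (m0.prod inferInstance) fun p : Ω × ℝ => steinKernel (s p.1) p.2 :=
  ⟨measurable_steinKernel.comp ((hs.1.comp measurable_fst).prodMk measurable_snd), 1,
    fun _ => abs_steinKernel_le_one _ _⟩

section Averaging

variable [IsFiniteMeasure μ] (hf : BddMeas m0 f) (hs : BddMeas m0 s) (hs4 : ∀ ω, |s ω| ≤ 1 / 4)
include hf hs hs4

lemma integral_integral_mul_steinKernel :
    ∫ t, (∫ ω, f ω * steinKernel (s ω) t ∂μ) ∂incrementMeasure = ∫ ω, f ω * s ω ∂μ := by
  rw [BddMeas.integral_comm (hf.comp_fst.mul (bddMeas_steinKernel hs))]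
  simp only [integral_const_mul, integral_steinKernel (hs4 _)]

lemma integral_integral_mul_abs_steinKernel :
    ∫ t, (∫ ω, f ω * |steinKernel (s ω) t| ∂μ) ∂incrementMeasure = ∫ ω, f ω * |s ω| ∂μ := by
  rw [BddMeas.integral_comm (hf.comp_fst.mul (bddMeas_steinKernel hs).abs)]
  simp only [integral_const_mul, integral_abs_steinKernel (hs4 _)]

end Averaging

end Kernel

section Kernels

variable {Ω ι : Type*} {m0 : MeasurableSpace Ω} {μ : Measure Ω} {ξ : ι → Ω → ℝ}
  {A D : ι → Finset ι} {t : ℝ} {j : ι}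

/-- Stein's kernel `ξ_j (1{-ξ_{A_j} < t ≤ 0} - 1{0 < t ≤ -ξ_{A_j}})` of the block `A j`. -/
noncomputable def randomKernel (ξ : ι → Ω → ℝ) (A : ι → Finset ι) (t : ℝ) (j : ι) (ω : Ω) : ℝ :=
  ξ j ω * steinKernel (blockSum ξ (A j) ω) t

/-- The fluctuation of `randomKernel` about its mean. -/
noncomputable def centredKernel (μ : Measure Ω) (ξ : ι → Ω → ℝ) (A : ι → Finset ι) (t : ℝ)
    (j : ι) (ω : Ω) : ℝ :=
  randomKernel ξ A t j ω - ∫ ω', randomKernel ξ A t j ω' ∂μ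

/-- The expected kernel `∑_{j ∈ G} E K_j(t)`. -/
noncomputable def meanKernel (μ : Measure Ω) (ξ : ι → Ω → ℝ) (A : ι → Finset ι) (G : Finset ι)
    (t : ℝ) : ℝ :=
  ∑ j ∈ G, ∫ ω, randomKernel ξ A t j ω ∂μ

/-- A bound for the `varianceProxy` of `centredKernel` whose integral in `t` is explicit. -/
noncomputable def kernelMajorant (μ : Measure Ω) (ξ : ι → Ω → ℝ) (A D : ι → Finset ι) (j : ι)
    (t : ℝ) : ℝ :=
  ∫ ω, |randomKernel ξ A t j ω| * (localMass ξ D j ω + 3 * ∫ ω', localMass ξ D j ω' ∂μ) ∂μ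

lemma abs_randomKernel_le (t : ℝ) (j : ι) (ω : Ω) : |randomKernel ξ A t j ω| ≤ |ξ j ω| := by
  rw [randomKernel, abs_mul]
  exact mul_le_of_le_one_right (abs_nonneg _) (abs_steinKernel_le_one _ _)

lemma blockSum_randomKernel (G : Finset ι) (ω : Ω) :
    blockSum (randomKernel ξ A t) G ω =
      meanKernel μ ξ A G t + blockSum (centredKernel μ ξ A t) G ω := by
  simp only [blockSum, meanKernel, centredKernel, Finset.sum_sub_distrib, add_sub_cancel]

@[fun_prop]
lemma bddMeas_randomKernel (h : ∀ k, BddMeas m0 (ξ k)) : BddMeas m0 (randomKernel ξ A t j) :=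
  (h j).mul (bddMeas_steinKernel_left (bddMeas_blockSum h) t)

lemma bddMeas_uncurry_randomKernel (h : ∀ k, BddMeas m0 (ξ k)) :
    BddMeas (m0.prod inferInstance) (Function.uncurry fun ω t => randomKernel ξ A t j ω) :=
  (h j).comp_fst.mul (bddMeas_steinKernel (bddMeas_blockSum h))

lemma bddMeas_meanKernel [IsFiniteMeasure μ] (h : ∀ k, BddMeas m0 (ξ k)) (G : Finset ι) :
    BddMeas inferInstance (meanKernel μ ξ A G) :=
  .sum G fun _ _ => (bddMeas_uncurry_randomKernel h).integral_left

lemma bddMeas_kernelMajorant [IsFiniteMeasure μ] (h : ∀ k, BddMeas m0 (ξ k)) (j : ι) :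
    BddMeas inferInstance (kernelMajorant μ ξ A D j) := by
  have hmass : BddMeas m0 fun ω => localMass ξ D j ω + 3 * ∫ ω', localMass ξ D j ω' ∂μ := by
    fun_prop
  exact BddMeas.integral_left
    (F := fun ω t => |randomKernel ξ A t j ω| *
      (localMass ξ D j ω + 3 * ∫ ω', localMass ξ D j ω' ∂μ))
    ((bddMeas_uncurry_randomKernel h).abs.mul hmass.comp_fst)

end Kernels

namespace LocalDependence

variable {Ω ι : Type*} [m0 : MeasurableSpace Ω] {μ : Measure Ω} [Fintype ι] [DecidableEq ι]
  {ξ : ι → Ω → ℝ} {A B Bs Cs Ds : ι → Finset ι} {κ : ℕ} [IsProbabilityMeasure μ]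
  (H : LocalDependence μ ξ A B Bs Cs Ds κ)
include H

lemma localFamily_centredKernel (t : ℝ) : LocalFamily μ ξ A (centredKernel μ ξ A t) where
  bddMeas_sigmaOf j := ((H.bddMeas_sigmaOf (H.mem_A j)).mul
    (bddMeas_steinKernel_left (H.bddMeas_blockSum_sigmaOf subset_rfl) t)).sub (.const _)
  integral_eq_zero j := by
    have hξ := H.bddMeas
    simp only [centredKernel]
    rw [BddMeas.integral_sub (by fun_prop) (by fun_prop), integral_const, probReal_univ, one_smul,
      sub_self]
  abs_le j ω := by
    have hξ := H.bddMeas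
    exact (abs_sub _ _).trans (add_le_add (abs_randomKernel_le t j ω)
      (BddMeas.abs_integral_le (by fun_prop) (by fun_prop) (abs_randomKernel_le t j)))

lemma varianceProxy_centredKernel_le (j : ι) (t : ℝ) :
    varianceProxy μ ξ Ds (centredKernel μ ξ A t) j ≤ kernelMajorant μ ξ A Ds j t := by
  have hξ := H.bddMeas
  have hY := (H.localFamily_centredKernel t).bddMeas H
  set e := ∫ ω, localMass ξ Ds j ω ∂μ with he
  set c := ∫ ω, |randomKernel ξ A t j ω| ∂μ with hc
  have mean_le : |∫ ω, randomKernel ξ A t j ω ∂μ| ≤ c :=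
    BddMeas.abs_integral_le (by fun_prop) (by fun_prop) fun _ => le_rfl
  have pointwise (ω : Ω) : |centredKernel μ ξ A t j ω| * augmentedMass μ ξ Ds j ω ≤
      (|randomKernel ξ A t j ω| + c) * (localMass ξ Ds j ω + e) :=
    mul_le_mul_of_nonneg_right ((abs_sub _ _).trans (add_le_add le_rfl mean_le))
      (augmentedMass_nonneg j ω)
  calc _ ≤ ∫ ω, (|randomKernel ξ A t j ω| + c) * (localMass ξ Ds j ω + e) ∂μ :=
        BddMeas.integral_mono (by fun_prop) (by fun_prop) pointwise
    _ = kernelMajorant μ ξ A Ds j t := by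
      simp only [kernelMajorant, add_mul, mul_add, ← he]
      simp (disch := fun_prop) only [BddMeas.integral_add, integral_const_mul, integral_mul_const]
      simp only [integral_const, probReal_univ, one_smul, ← he, ← hc]
      ring

lemma integral_kernelMajorant_le (j : ι) :
    ∫ t, kernelMajorant μ ξ A Ds j t ∂incrementMeasure ≤
      ∫ ω, |ξ j ω| * (localMass ξ Ds j ω * localMass ξ Ds j ω) ∂μ
        + 3 * ((∫ ω, |ξ j ω| * localMass ξ Ds j ω ∂μ) * ∫ ω, localMass ξ Ds j ω ∂μ) := by
  have hξ := H.bddMeas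
  set e := ∫ ω, localMass ξ Ds j ω ∂μ with he
  have factor (t : ℝ) : kernelMajorant μ ξ A Ds j t =
      ∫ ω, |ξ j ω| * (localMass ξ Ds j ω + 3 * e) * |steinKernel (blockSum ξ (A j) ω) t| ∂μ := by
    simp only [kernelMajorant, randomKernel, abs_mul, mul_right_comm, he]
  calc _ = ∫ ω, |ξ j ω| * (localMass ξ Ds j ω + 3 * e) * |blockSum ξ (A j) ω| ∂μ := by
        simp only [factor]
        exact integral_integral_mul_abs_steinKernel (by fun_prop) (by fun_prop)
          (H.abs_blockSum_le (H.A_subset_Ds j))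
    _ ≤ ∫ ω, |ξ j ω| * (localMass ξ Ds j ω + 3 * e) * localMass ξ Ds j ω ∂μ := by
        refine BddMeas.integral_mono (by fun_prop) (by fun_prop) fun ω => ?_
        have := localMass_nonneg (ξ := ξ) (D := Ds) j ω
        have := integral_localMass_nonneg (μ := μ) (ξ := ξ) (D := Ds) j
        exact mul_le_mul_of_nonneg_left (abs_blockSum_le_localMass (H.A_subset_Ds j) ω)
          (by positivity)
    _ = ∫ ω, (|ξ j ω| * (localMass ξ Ds j ω * localMass ξ Ds j ω)
          + 3 * e * (|ξ j ω| * localMass ξ Ds j ω)) ∂μ := by congr 1 with ω; ring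
    _ = _ := by
        rw [BddMeas.integral_add (by fun_prop) (by fun_prop), integral_const_mul]
        ring

lemma sum_integral_kernelMajorant_le :
    ∑ j, ∫ t, kernelMajorant μ ξ A Ds j t ∂incrementMeasure ≤ 4 * lyapunov μ ξ κ := by
  refine (Finset.sum_le_sum fun j _ => H.integral_kernelMajorant_le j).trans ?_
  rw [Finset.sum_add_distrib, ← Finset.mul_sum]
  linarith [H.sum_integral_abs_mul_sq_localMass_le,
    H.sum_integral_abs_mul_localMass_mul_integral_localMass_le]

lemma sum_Cs_integral_mul_blockSum_A_le (i : ι) :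
    ∑ j ∈ Cs i, ∫ ω, ξ j ω * blockSum ξ (A j) ω ∂μ ≤ 1 / 16 := by
  have hξ := H.bddMeas
  have term_le (j : ι) : ∫ ω, ξ j ω * blockSum ξ (A j) ω ∂μ ≤ 1 / 4 * ∫ ω, |ξ j ω| ∂μ := by
    rw [← integral_const_mul]
    refine BddMeas.integral_mono (by fun_prop) (by fun_prop) fun ω => ?_
    rw [mul_comm]
    refine (le_abs_self _).trans ?_
    rw [abs_mul]
    exact mul_le_mul_of_nonneg_right (H.abs_blockSum_le (H.A_subset_Ds j) ω) (abs_nonneg _)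
  calc _ ≤ ∑ j ∈ Cs i, 1 / 4 * ∫ ω, |ξ j ω| ∂μ := Finset.sum_le_sum fun j _ => term_le j
    _ ≤ ∑ j ∈ Ds i, 1 / 4 * ∫ ω, |ξ j ω| ∂μ :=
        Finset.sum_le_sum_of_subset_of_nonneg (H.Cs_subset_Ds i) fun _ _ _ => by positivity
    _ = 1 / 4 * ∫ ω, localMass ξ Ds i ω ∂μ := by rw [H.integral_localMass, Finset.mul_sum]
    _ ≤ 1 / 4 * ∫ _, 1 / 4 ∂μ := mul_le_mul_of_nonneg_left
        (BddMeas.integral_mono (by fun_prop) (by fun_prop) (H.localMass_le i)) (by norm_num)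
    _ = 1 / 16 := by norm_num

lemma le_integral_meanKernel (i : ι) (hT : 1 / 2 ≤ ∫ ω, blockSum ξ univ ω ^ 2 ∂μ) :
    7 / 16 ≤ ∫ t, meanKernel μ ξ A (Cs i)ᶜ t ∂incrementMeasure := by
  have hξ := H.bddMeas
  have block (j : ι) : ∫ t, (∫ ω, randomKernel ξ A t j ω ∂μ) ∂incrementMeasure =
      ∫ ω, ξ j ω * blockSum ξ (A j) ω ∂μ :=
    integral_integral_mul_steinKernel (hξ j) (by fun_prop) (H.abs_blockSum_le (H.A_subset_Ds j))
  simp only [meanKernel]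
  rw [BddMeas.integral_sum _ fun j => (bddMeas_uncurry_randomKernel (j := j) hξ).integral_left]
  simp only [block]
  rw [← H.sum_integral_mul_blockSum_A, ← Finset.sum_add_sum_compl (Cs i)] at hT
  linarith [H.sum_Cs_integral_mul_blockSum_A_le i]

lemma abs_mul_abs_integral_randomKernel_le (j : ι) (t : ℝ) :
    |t| * |∫ ω, randomKernel ξ A t j ω ∂μ| ≤
      ∫ ω, |ξ j ω| * |blockSum ξ (A j) ω| * |steinKernel (blockSum ξ (A j) ω) t| ∂μ := by
  have hξ := H.bddMeas
  rw [← abs_abs t, ← abs_mul, ← integral_const_mul]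
  refine BddMeas.abs_integral_le (by fun_prop)
    ((by fun_prop : BddMeas m0 fun ω => |ξ j ω| * |blockSum ξ (A j) ω|).mul
      (bddMeas_steinKernel_left (by fun_prop) t).abs) fun ω => ?_
  rw [randomKernel, abs_mul, abs_mul, abs_abs, mul_left_comm, mul_assoc]
  exact mul_le_mul_of_nonneg_left (abs_mul_abs_steinKernel_le _ t) (abs_nonneg _)

lemma abs_mul_abs_meanKernel_le (G : Finset ι) (t : ℝ) : |t| * |meanKernel μ ξ A G t| ≤
    ∑ j, ∫ ω, |ξ j ω| * |blockSum ξ (A j) ω| * |steinKernel (blockSum ξ (A j) ω) t| ∂μ :=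
  calc _ ≤ |t| * ∑ j, |∫ ω, randomKernel ξ A t j ω ∂μ| :=
        mul_le_mul_of_nonneg_left ((Finset.abs_sum_le_sum_abs _ _).trans
          (Finset.sum_le_sum_of_subset_of_nonneg (Finset.subset_univ G) fun _ _ _ =>
            abs_nonneg _)) (abs_nonneg _)
    _ ≤ _ := by
        rw [Finset.mul_sum]
        exact Finset.sum_le_sum fun j _ => H.abs_mul_abs_integral_randomKernel_le j t

lemma integral_abs_mul_abs_meanKernel_le (G : Finset ι) :
    ∫ t, |t| * |meanKernel μ ξ A G t| ∂incrementMeasure ≤ lyapunov μ ξ κ := by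
  have hξ := H.bddMeas
  have hjoint (j : ι) : BddMeas inferInstance fun t : ℝ =>
      ∫ ω, |ξ j ω| * |blockSum ξ (A j) ω| * |steinKernel (blockSum ξ (A j) ω) t| ∂μ :=
    BddMeas.integral_left (F := fun ω t =>
        |ξ j ω| * |blockSum ξ (A j) ω| * |steinKernel (blockSum ξ (A j) ω) t|)
      ((((hξ j).abs.mul (bddMeas_blockSum hξ).abs).comp_fst).mul
        (bddMeas_steinKernel (bddMeas_blockSum hξ)).abs)
  calc _ ≤ ∫ t, ∑ j, (∫ ω, |ξ j ω| * |blockSum ξ (A j) ω| *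
          |steinKernel (blockSum ξ (A j) ω) t| ∂μ) ∂incrementMeasure :=
        integral_mono_of_nonneg (.of_forall fun t => by positivity)
          (BddMeas.sum _ fun j _ => hjoint j).integrable
          (.of_forall (H.abs_mul_abs_meanKernel_le G))
    _ = ∑ j, ∫ ω, |ξ j ω| * |blockSum ξ (A j) ω| * |blockSum ξ (A j) ω| ∂μ := by
        rw [BddMeas.integral_sum _ hjoint]
        exact Finset.sum_congr rfl fun j _ => integral_integral_mul_abs_steinKernel (by fun_prop)
          (by fun_prop) (H.abs_blockSum_le (H.A_subset_Ds j))
    _ ≤ ∑ j, ∫ ω, |ξ j ω| * (localMass ξ Ds j ω * localMass ξ Ds j ω) ∂μ := by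
        refine Finset.sum_le_sum fun j _ =>
          BddMeas.integral_mono (by fun_prop) (by fun_prop) fun ω => ?_
        rw [mul_assoc]
        exact mul_le_mul_of_nonneg_left (mul_self_le_mul_self (abs_nonneg _)
          (abs_blockSum_le_localMass (H.A_subset_Ds j) ω)) (abs_nonneg _)
    _ ≤ lyapunov μ ξ κ := H.sum_integral_abs_mul_sq_localMass_le

lemma ae_eq_zero_of_mem_B_of_mem_A {i j k : ι} (hj : j ∉ Cs i) (hB : k ∈ B i) (hA : k ∈ A j) :
    ξ k =ᵐ[μ] 0 := by
  have near : BddMeas (sigmaOf ξ ((Bs i).biUnion A)) (ξ k) :=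
    H.bddMeas_sigmaOf (H.subset_biUnion_A _ (H.B_subset_Bs i hB))
  have far : BddMeas (sigmaOf ξ ((Cs i)ᶜ.biUnion A)) (ξ k) :=
    H.bddMeas_sigmaOf (Finset.mem_biUnion.2 ⟨j, by simpa using hj, hA⟩)
  have hsq := BddMeas.integral_mul_of_indep (H.indep_Bs_Cs i) (H.sigmaOf_le _) (H.sigmaOf_le _)
    near far
  rw [H.integral_eq_zero, zero_mul] at hsq
  have hξ := H.bddMeas
  filter_upwards [(integral_eq_zero_iff_of_nonneg (fun ω => mul_self_nonneg (ξ k ω))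
    (BddMeas.integrable (by fun_prop))).1 hsq] with ω hω
  exact mul_self_eq_zero.1 hω

-- `B i` and `A j` may overlap, but only in variables that vanish almost surely.
lemma indep_singleton_sup {i j : ι} (hj : j ∉ Cs i) :
    Indep (sigmaOf ξ {j}) (sigmaOf ξ (B i) ⊔ sigmaOf ξ (A j)ᶜ) μ := by
  have hle : sigmaOf ξ (B i) ⊔ sigmaOf ξ (A j)ᶜ ≤
      eventuallyMeasurableSpace (sigmaOf ξ (A j)ᶜ) (ae μ) := by
    refine sup_le (iSup₂_le fun k hB => ?_) le_eventuallyMeasurableSpace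
    by_cases hA : k ∈ A j
    · have hk : @EventuallyMeasurable Ω (sigmaOf ξ (A j)ᶜ) (ae μ) _ ℝ _ (ξ k) :=
        Measurable.eventuallyMeasurable_of_eventuallyEq (m := sigmaOf ξ (A j)ᶜ)
          (@measurable_zero ℝ Ω _ (sigmaOf ξ (A j)ᶜ) _) (H.ae_eq_zero_of_mem_B_of_mem_A hj hB hA)
      exact measurable_iff_comap_le.1 hk
    · exact (comap_le_sigmaOf (by simpa using hA)).trans le_eventuallyMeasurableSpace
  rw [Indep_iff]
  intro s t hs ht
  obtain ⟨t', ht', hae⟩ := hle t ht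
  rw [measure_congr hae, ← (Indep_iff _ _ _).1 (H.indep_single j) s t' hs ht']
  exact measure_congr ((Filter.EventuallyEq.refl _ s).inter hae)

lemma integral_mul_eq_zero_of_notMem_Cs {i j : ι} (hj : j ∉ Cs i) {g : Ω → ℝ}
    (hg : BddMeas (sigmaOf ξ (B i) ⊔ sigmaOf ξ (A j)ᶜ) g) : ∫ ω, ξ j ω * g ω ∂μ = 0 := by
  rw [BddMeas.integral_mul_of_indep (H.indep_singleton_sup hj) (H.sigmaOf_le _)
    (sup_le (H.sigmaOf_le _) (H.sigmaOf_le _)) (H.bddMeas_sigmaOf (Finset.mem_singleton_self j))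
    hg, H.integral_eq_zero, zero_mul]

end LocalDependence

/-! ### Random windows and concentration -/

section Windows

variable {Ω : Type*} {m m0 : MeasurableSpace Ω} {μ : Measure Ω} {T : Ω → ℝ} {δ L t : ℝ}

/-- A random interval `[left, left + length]` carrying a nonnegative random weight, all three
determined by the σ-algebra `m`. -/
structure RandomWindow (m : MeasurableSpace Ω) where
  weight : Ω → ℝ
  left : Ω → ℝ
  length : Ω → ℝ
  bddMeas_weight : BddMeas m weight
  bddMeas_left : BddMeas m left
  bddMeas_length : BddMeas m length
  weight_nonneg : ∀ ω, 0 ≤ weight ω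
  length_nonneg : ∀ ω, 0 ≤ length ω

namespace RandomWindow

/-- The weighted indicator that `y` lies in the window. -/
noncomputable def hit (R : RandomWindow m) (y : ℝ) (ω : Ω) : ℝ :=
  R.weight ω * (cubeWeight (R.left ω) * window (R.left ω) (R.length ω) y)

/-- `hit` with the indicator replaced by a trapezoid of slope `1 / δ`. -/
noncomputable def smoothHit (R : RandomWindow m) (δ y : ℝ) (ω : Ω) : ℝ :=
  R.weight ω * (cubeWeight (R.left ω) * trapezoid δ (R.length ω) (y - R.left ω))

/-- The primitive of `smoothHit` in `y`; this is the test function of Stein's method. -/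
noncomputable def primitive (R : RandomWindow m) (δ y : ℝ) (ω : Ω) : ℝ :=
  R.weight ω * (cubeWeight (R.left ω) * trapezoidPrimitive δ (R.length ω) (y - R.left ω))

/-- The expected weighted length of the window, enlarged by `δ`. -/
noncomputable def mass (R : RandomWindow m) (μ : Measure Ω) (δ : ℝ) : ℝ :=
  ∫ ω, R.weight ω * (R.length ω + δ) ∂μ

/-- A window of length `δ + 2|t|` around the left slope of `smoothHit δ`, on which translation by
`t` can change it. -/
def leftEdge (R : RandomWindow m) (hδ : 0 < δ) (t : ℝ) : RandomWindow m where
  __ := R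
  left ω := R.left ω - δ - |t|
  length _ := δ + 2 * |t|
  bddMeas_left := (R.bddMeas_left.sub (.const δ)).sub (.const |t|)
  bddMeas_length := .const _
  length_nonneg _ := by positivity

/-- The analogue of `leftEdge` for the right slope. -/
def rightEdge (R : RandomWindow m) (hδ : 0 < δ) (t : ℝ) : RandomWindow m where
  __ := R
  left ω := R.left ω + R.length ω - |t|
  length _ := δ + 2 * |t|
  bddMeas_left := (R.bddMeas_left.add R.bddMeas_length).sub (.const |t|)
  bddMeas_length := .const _
  length_nonneg _ := by positivity

variable (R : RandomWindow m)

section Measurability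

variable (hm : m ≤ m0) (hT : BddMeas m0 T)
include hm

lemma bddMeas_mass (δ : ℝ) : BddMeas m0 fun ω => R.weight ω * (R.length ω + δ) :=
  (R.bddMeas_weight.mul (R.bddMeas_length.add (.const δ))).mono hm

include hT

lemma bddMeas_hit : BddMeas m0 fun ω => R.hit (T ω) ω :=
  (R.bddMeas_weight.mono hm).mul ((bddMeas_cubeWeight (R.bddMeas_left.mono hm)).mul
    (bddMeas_window (R.bddMeas_left.mono hm) (R.bddMeas_length.mono hm) hT))

lemma bddMeas_smoothHit (δ : ℝ) : BddMeas m0 fun ω => R.smoothHit δ (T ω) ω :=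
  (R.bddMeas_weight.mono hm).mul ((bddMeas_cubeWeight (R.bddMeas_left.mono hm)).mul
    (bddMeas_trapezoid (R.bddMeas_length.mono hm) (hT.sub (R.bddMeas_left.mono hm))))

lemma bddMeas_primitive (δ : ℝ) : BddMeas m0 fun ω => R.primitive δ (T ω) ω :=
  (R.bddMeas_weight.mono hm).mul ((bddMeas_cubeWeight (R.bddMeas_left.mono hm)).mul
    (bddMeas_trapezoidPrimitive (R.bddMeas_length.mono hm) (hT.sub (R.bddMeas_left.mono hm))))

lemma bddMeas_uncurry_smoothHit (δ : ℝ) : BddMeas (m0.prod inferInstance)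
    (Function.uncurry fun ω t => R.smoothHit δ (T ω + t) ω) := by
  simp only [smoothHit, add_sub_right_comm]
  exact (R.bddMeas_weight.mono hm).comp_fst.mul
    ((bddMeas_cubeWeight (R.bddMeas_left.mono hm)).comp_fst.mul
      (bddMeas_trapezoid_add_snd (R.bddMeas_length.mono hm) (hT.sub (R.bddMeas_left.mono hm))))

end Measurability

lemma smoothHit_nonneg (δ y : ℝ) (ω : Ω) : 0 ≤ R.smoothHit δ y ω :=
  mul_nonneg (R.weight_nonneg ω) (mul_nonneg (cubeWeight_nonneg _) (trapezoid_nonneg _ _ _))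

lemma primitive_nonneg (hδ : 0 < δ) (y : ℝ) (ω : Ω) : 0 ≤ R.primitive δ y ω :=
  mul_nonneg (R.weight_nonneg ω)
    (mul_nonneg (cubeWeight_nonneg _) (trapezoidPrimitive_nonneg hδ _ _))

lemma hit_le_smoothHit (hδ : 0 < δ) (y : ℝ) (ω : Ω) : R.hit y ω ≤ R.smoothHit δ y ω := by
  refine mul_le_mul_of_nonneg_left (mul_le_mul_of_nonneg_left ?_ (cubeWeight_nonneg _))
    (R.weight_nonneg ω)
  exact window_le_of_imp (trapezoid_nonneg _ _ _) fun h =>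
    (trapezoid_eq_one hδ (by linarith [h.1]) (by linarith [h.2])).ge

lemma mass_nonneg (μ : Measure Ω) (hδ : 0 ≤ δ) : 0 ≤ R.mass μ δ :=
  integral_nonneg fun ω => mul_nonneg (R.weight_nonneg ω) (add_nonneg (R.length_nonneg ω) hδ)

lemma mass_eq [IsFiniteMeasure μ] (hm : m ≤ m0) (δ : ℝ) :
    R.mass μ δ = (∫ ω, R.weight ω * R.length ω ∂μ) + (∫ ω, R.weight ω ∂μ) * δ := by
  rw [← integral_mul_const, mass]
  simp only [mul_add]
  exact BddMeas.integral_add ((R.bddMeas_weight.mul R.bddMeas_length).mono hm)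
    ((R.bddMeas_weight.mul (.const δ)).mono hm)

lemma integral_weight_mul_length_nonneg (μ : Measure Ω) : 0 ≤ ∫ ω, R.weight ω * R.length ω ∂μ :=
  integral_nonneg fun ω => mul_nonneg (R.weight_nonneg ω) (R.length_nonneg ω)

lemma integral_weight_mul_le_mass [IsFiniteMeasure μ] (hm : m ≤ m0) (δ : ℝ) :
    (∫ ω, R.weight ω ∂μ) * δ ≤ R.mass μ δ := by
  rw [R.mass_eq hm]
  exact le_add_of_nonneg_left (R.integral_weight_mul_length_nonneg μ)

lemma mass_leftEdge (hδ : 0 < δ) (t : ℝ) :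
    (R.leftEdge hδ t).mass μ δ = (∫ ω, R.weight ω ∂μ) * (2 * (δ + |t|)) := by
  rw [← integral_mul_const]
  exact integral_congr_ae (.of_forall fun ω => by simp only [leftEdge]; ring)

lemma mass_rightEdge (hδ : 0 < δ) (t : ℝ) :
    (R.rightEdge hδ t).mass μ δ = (∫ ω, R.weight ω ∂μ) * (2 * (δ + |t|)) := by
  rw [← integral_mul_const]
  exact integral_congr_ae (.of_forall fun ω => by simp only [rightEdge]; ring)

lemma abs_smoothHit_add_sub_le (hδ : 0 < δ) (hδt : δ + |t| ≤ 1) (y : ℝ) (ω : Ω) :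
    |R.smoothHit δ (y + t) ω - R.smoothHit δ y ω| ≤
      8 * min 1 (|t| / δ) * ((R.leftEdge hδ t).hit y ω + (R.rightEdge hδ t).hit y ω) := by
  have slope := abs_trapezoid_add_sub_le hδ (R.length ω) (R.left ω) y t
  have hleft : cubeWeight (R.left ω) ≤ 8 * cubeWeight (R.left ω - δ - |t|) :=
    cubeWeight_le_eight_mul (by linarith)
  have hright : cubeWeight (R.left ω) ≤ 8 * cubeWeight (R.left ω + R.length ω - |t|) :=
    cubeWeight_le_eight_mul (by linarith [R.length_nonneg ω])
  have hw := R.weight_nonneg ω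
  have h₁ := window_nonneg (R.left ω - δ - |t|) (δ + 2 * |t|) y
  have h₂ := window_nonneg (R.left ω + R.length ω - |t|) (δ + 2 * |t|) y
  have hc := cubeWeight_nonneg (R.left ω)
  calc |R.smoothHit δ (y + t) ω - R.smoothHit δ y ω|
      = R.weight ω * (cubeWeight (R.left ω) * |trapezoid δ (R.length ω) (y - R.left ω + t) -
          trapezoid δ (R.length ω) (y - R.left ω)|) := by
        simp only [smoothHit, ← mul_sub, abs_mul, abs_of_nonneg hw, abs_of_nonneg hc,
          add_sub_right_comm]
    _ ≤ R.weight ω * (cubeWeight (R.left ω) * (min 1 (|t| / δ) *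
          (window (R.left ω - δ - |t|) (δ + 2 * |t|) y +
            window (R.left ω + R.length ω - |t|) (δ + 2 * |t|) y))) := by gcongr
    _ = min 1 (|t| / δ) * (R.weight ω *
          (cubeWeight (R.left ω) * window (R.left ω - δ - |t|) (δ + 2 * |t|) y +
            cubeWeight (R.left ω) * window (R.left ω + R.length ω - |t|) (δ + 2 * |t|) y)) := by
        ring
    _ ≤ min 1 (|t| / δ) * (R.weight ω *
          (8 * cubeWeight (R.left ω - δ - |t|) * window (R.left ω - δ - |t|) (δ + 2 * |t|) y +
            8 * cubeWeight (R.left ω + R.length ω - |t|) *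
              window (R.left ω + R.length ω - |t|) (δ + 2 * |t|) y)) := by gcongr
    _ = _ := by
        simp only [hit, leftEdge, rightEdge]
        ring

lemma integral_smoothHit_mul_steinKernel {s : ℝ} (hs : |s| ≤ 1 / 4) (y : ℝ) (ω : Ω) :
    ∫ t, R.smoothHit δ (y + t) ω * steinKernel s t ∂incrementMeasure =
      R.primitive δ y ω - R.primitive δ (y - s) ω := by
  have regroup (t : ℝ) : R.smoothHit δ (y + t) ω * steinKernel s t =
      R.weight ω * cubeWeight (R.left ω) *
        (steinKernel s t * trapezoid δ (R.length ω) (y - R.left ω + t)) := by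
    rw [smoothHit, add_sub_right_comm]
    ring
  simp only [regroup]
  rw [integral_const_mul, integral_steinKernel_mul_trapezoid hs, primitive, primitive,
    sub_right_comm y s]
  ring

section Localization

variable {w y : ℝ} {ω : Ω} (hδ : 0 < δ) (hδ4 : δ ≤ 1 / 4) (hy : |y - w| ≤ 1 / 4)
include hδ hδ4 hy

lemma smoothHit_le (ht : |t| ≤ 1 / 4) :
    R.smoothHit δ (y + t) ω ≤ R.weight ω * (32 + 4 * |w| ^ 3) := by
  rw [abs_le] at hy ht
  refine mul_le_mul_of_nonneg_left ?_ (R.weight_nonneg ω)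
  simpa using cubeWeight_mul_le (trapezoid_nonneg _ _ _) (trapezoid_le_one _ _ _)
    fun h : w + 1 < R.left ω => trapezoid_eq_zero_of_le hδ (l := R.length ω)
      (p := y + t - R.left ω) (by linarith)

lemma primitive_le :
    R.primitive δ y ω ≤ R.weight ω * (R.length ω + δ) * (2 * (32 + 4 * |w| ^ 3)) := by
  rw [abs_le] at hy
  have hlength : trapezoidPrimitive δ (R.length ω) (y - R.left ω) ≤ 2 * (R.length ω + δ) :=
    (trapezoidPrimitive_le hδ (R.length_nonneg ω) _).trans (by linarith [R.length_nonneg ω])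
  calc R.primitive δ y ω ≤ R.weight ω * ((32 + 4 * |w| ^ 3) * (2 * (R.length ω + δ))) :=
        mul_le_mul_of_nonneg_left (cubeWeight_mul_le (trapezoidPrimitive_nonneg hδ _ _) hlength
          fun h => trapezoidPrimitive_eq_zero hδ (by linarith)) (R.weight_nonneg ω)
    _ = _ := by ring

lemma integral_smoothHit_le : ∫ t, R.smoothHit δ (y + t) ω ∂incrementMeasure ≤
    R.weight ω * (R.length ω + δ) * (2 * (32 + 4 * |w| ^ 3)) := by
  rw [abs_le] at hy
  have hlength : ∫ t, trapezoid δ (R.length ω) (y - R.left ω + t) ∂incrementMeasure ≤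
      2 * (R.length ω + δ) :=
    (integral_trapezoid_add_le hδ (R.length_nonneg ω) _).trans (by linarith [R.length_nonneg ω])
  have hfar (h : w + 1 < R.left ω) :
      ∫ t, trapezoid δ (R.length ω) (y - R.left ω + t) ∂incrementMeasure = 0 := by
    refine integral_eq_zero_of_ae ?_
    filter_upwards [ae_incrementMeasure_abs_le] with t ht
    exact trapezoid_eq_zero_of_le hδ (by linarith [(abs_le.1 ht).2])
  simp only [smoothHit, add_sub_right_comm, integral_const_mul]
  calc _ ≤ R.weight ω * ((32 + 4 * |w| ^ 3) * (2 * (R.length ω + δ))) :=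
        mul_le_mul_of_nonneg_left (cubeWeight_mul_le
          (integral_nonneg fun t => trapezoid_nonneg _ _ _) hlength hfar) (R.weight_nonneg ω)
    _ = _ := by ring

end Localization

end RandomWindow

/-- `T` hits every weighted `m`-measurable window with probability at most `L` times its mass. -/
def Concentrates (μ : Measure Ω) (m : MeasurableSpace Ω) (T : Ω → ℝ) (δ L : ℝ) : Prop :=
  ∀ R : RandomWindow m, ∫ ω, R.hit (T ω) ω ∂μ ≤ L * R.mass μ δ

namespace Concentrates

variable [IsProbabilityMeasure μ] (hm : m ≤ m0) (hT : BddMeas m0 T) (hδ : 0 < δ)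
include hm hT hδ

-- Only the two slopes of the trapezoid matter, and each is again a window hit by `T`.
lemma integral_abs_smoothHit_add_sub_le (h : Concentrates μ m T δ L) (hL : 0 ≤ L)
    (hδt : δ + |t| ≤ 1) (R : RandomWindow m) :
    ∫ ω, |R.smoothHit δ (T ω + t) ω - R.smoothHit δ (T ω) ω| ∂μ ≤
      64 * L * |t| * ∫ ω, R.weight ω ∂μ := by
  have hleft := (R.leftEdge hδ t).bddMeas_hit hm hT
  have hright := (R.rightEdge hδ t).bddMeas_hit hm hT
  have hZ : 0 ≤ ∫ ω, R.weight ω ∂μ := integral_nonneg R.weight_nonneg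
  have hits : (∫ ω, (R.leftEdge hδ t).hit (T ω) ω ∂μ) + ∫ ω, (R.rightEdge hδ t).hit (T ω) ω ∂μ ≤
      4 * L * (δ + |t|) * ∫ ω, R.weight ω ∂μ := by
    linarith [R.mass_leftEdge (μ := μ) hδ t ▸ h (R.leftEdge hδ t),
      R.mass_rightEdge (μ := μ) hδ t ▸ h (R.rightEdge hδ t)]
  have hmin : min 1 (|t| / δ) * (δ + |t|) ≤ 2 * |t| := by
    have h₁ := mul_le_mul_of_nonneg_right (min_le_right 1 (|t| / δ)) hδ.le
    have h₂ := mul_le_mul_of_nonneg_right (min_le_left 1 (|t| / δ)) (abs_nonneg t)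
    rw [div_mul_cancel₀ _ hδ.ne'] at h₁
    linarith
  calc _ ≤ ∫ ω, 8 * min 1 (|t| / δ) * ((R.leftEdge hδ t).hit (T ω) ω +
          (R.rightEdge hδ t).hit (T ω) ω) ∂μ :=
        BddMeas.integral_mono ((R.bddMeas_smoothHit hm (hT.add (.const t)) δ).sub
          (R.bddMeas_smoothHit hm hT δ)).abs ((BddMeas.const _).mul (hleft.add hright))
          fun ω => R.abs_smoothHit_add_sub_le hδ hδt (T ω) ω
    _ ≤ 8 * min 1 (|t| / δ) * (4 * L * (δ + |t|) * ∫ ω, R.weight ω ∂μ) := by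
        rw [integral_const_mul, BddMeas.integral_add hleft hright]
        exact mul_le_mul_of_nonneg_left hits (by positivity)
    _ = 32 * (min 1 (|t| / δ) * (δ + |t|)) * (L * ∫ ω, R.weight ω ∂μ) := by ring
    _ ≤ 32 * (2 * |t|) * (L * ∫ ω, R.weight ω ∂μ) := by gcongr
    _ = _ := by ring

end Concentrates

lemma exists_concentrates [IsProbabilityMeasure μ] (hm : m ≤ m0) (hT : BddMeas m0 T)
    (hδ : 0 < δ) : ∃ L, 0 ≤ L ∧ Concentrates μ m T δ L := by
  obtain ⟨K, hK⟩ := hT.2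
  refine ⟨cubeWeight K / δ, div_nonneg (cubeWeight_nonneg _) hδ.le, fun R => ?_⟩
  rw [RandomWindow.mass, ← integral_const_mul]
  refine BddMeas.integral_mono (R.bddMeas_hit hm hT) ((BddMeas.const _).mul (R.bddMeas_mass hm δ))
    fun ω => ?_
  have hmem : cubeWeight (R.left ω) * window (R.left ω) (R.length ω) (T ω) ≤ cubeWeight K := by
    by_cases h : T ω ∈ Set.Icc (R.left ω) (R.left ω + R.length ω)
    · rw [window_of_mem h, mul_one]
      exact cubeWeight_mono (h.1.trans ((le_abs_self _).trans (hK ω)))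
    · rw [window_of_notMem h, mul_zero]
      exact cubeWeight_nonneg K
  have hlength : cubeWeight K ≤ cubeWeight K / δ * (R.length ω + δ) := by
    rw [mul_add, div_mul_cancel₀ _ hδ.ne']
    linarith [mul_nonneg (div_nonneg (cubeWeight_nonneg K) hδ.le) (R.length_nonneg ω)]
  calc R.hit (T ω) ω ≤ R.weight ω * (cubeWeight K / δ * (R.length ω + δ)) :=
        mul_le_mul_of_nonneg_left (hmem.trans hlength) (R.weight_nonneg ω)
    _ = _ := by ring

-- Iterating the improvement of the constant gives `2 * c + L₀ / 2 ^ n` for every `n`.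
lemma concentrates_of_step {c : ℝ} (hc : 0 ≤ c)
    (step : ∀ L, 0 ≤ L → Concentrates μ m T δ L → Concentrates μ m T δ (c + L / 2))
    (hδ : 0 ≤ δ) (hbase : ∃ L, 0 ≤ L ∧ Concentrates μ m T δ L) :
    Concentrates μ m T δ (2 * c) := by
  obtain ⟨L, hL, hbase⟩ := hbase
  have iterate (n : ℕ) : Concentrates μ m T δ (2 * c + L * (1 / 2) ^ n) := by
    induction n with
    | zero =>
      refine fun R => (hbase R).trans (mul_le_mul_of_nonneg_right ?_ (R.mass_nonneg μ hδ))
      simpa using hc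
    | succ n ih =>
      convert step _ (by positivity) ih using 1
      ring
  intro R
  have lim : Filter.Tendsto (fun n : ℕ => (2 * c + L * (1 / 2 : ℝ) ^ n) * R.mass μ δ)
      Filter.atTop (nhds ((2 * c + L * 0) * R.mass μ δ)) :=
    (((tendsto_pow_atTop_nhds_zero_of_lt_one (by norm_num) (by norm_num)).const_mul L).const_add
      (2 * c)).mul_const _
  simpa using ge_of_tendsto' lim fun n => iterate n R

end Windows

/-! ### The concentration inequality for weighted windows -/

lemma mul_le_perturbed_mul_add {s s' : ℝ} (hs : 0 ≤ s) (M N : ℝ) :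
    M * s' ≤ s * (M + N) + |M| * |s - s'| + 1 / 2 * s + 1 / 2 * (s * N ^ 2) := by
  have shift : M * s' - M * s ≤ |M| * |s - s'| := by
    rw [← mul_sub, ← abs_mul, ← abs_neg, ← mul_neg, neg_sub]
    exact le_abs_self _
  nlinarith [mul_nonneg hs (sq_nonneg (N + 1))]

namespace LocalDependence

variable {Ω ι : Type*} [m0 : MeasurableSpace Ω] {μ : Measure Ω} [Fintype ι] [DecidableEq ι]
  {ξ : ι → Ω → ℝ} {A B Bs Cs Ds : ι → Finset ι} {κ : ℕ} {i : ι} {δ L t : ℝ}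

section FarField

variable (H : LocalDependence μ ξ A B Bs Cs Ds κ) (i)
include H

lemma abs_blockSum_univ_sub_le (ω : Ω) :
    |blockSum ξ univ ω - blockSum ξ (Cs i)ᶜ ω| ≤ 1 / 4 := by
  rw [blockSum_compl, sub_sub_cancel]
  exact H.abs_blockSum_le (H.Cs_subset_Ds i) ω

lemma integral_mul_of_near_of_far {f g : Ω → ℝ} (hf : BddMeas (sigmaOf ξ (B i)) f)
    (hg : BddMeas (sigmaOf ξ ((Cs i)ᶜ.biUnion A)) g) :
    ∫ ω, f ω * g ω ∂μ = (∫ ω, f ω ∂μ) * ∫ ω, g ω ∂μ :=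
  BddMeas.integral_mul_of_indep (H.indep_Bs_Cs i) (H.sigmaOf_le _) (H.sigmaOf_le _)
    (hf.mono (sigmaOf_mono ((H.B_subset_Bs i).trans (H.subset_biUnion_A _)))) hg

lemma bddMeas_blockSum_compl_Cs :
    BddMeas (sigmaOf ξ ((Cs i)ᶜ.biUnion A)) (blockSum ξ (Cs i)ᶜ) :=
  H.bddMeas_blockSum_sigmaOf (H.subset_biUnion_A _)

end FarField

section SmoothedWindow

variable [IsProbabilityMeasure μ] (H : LocalDependence μ ξ A B Bs Cs Ds κ)
include H

lemma integral_blockSum_compl_Cs_pow_four_le (i : ι) (hT : ∫ ω, blockSum ξ univ ω ^ 2 ∂μ ≤ 2) :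
    ∫ ω, blockSum ξ (Cs i)ᶜ ω ^ 4 ∂μ ≤ 97 + 360 * lyapunov μ ξ κ := by
  have hξ := H.bddMeas
  refine (BddMeas.integral_pow_four_le_of_abs_sub_le (by fun_prop) (by fun_prop) (fun ω => ?_)
    (H.integral_pow_four_le hT)).trans_eq (by ring)
  rw [abs_sub_comm]
  exact (H.abs_blockSum_univ_sub_le i ω).trans (by norm_num)

lemma integral_mul_cube_far_le {c : ℝ} {f : Ω → ℝ} (hW : ∫ ω, blockSum ξ (Cs i)ᶜ ω ^ 4 ∂μ ≤ c)
    (hf : BddMeas (sigmaOf ξ (B i)) f) (hf₀ : ∀ ω, 0 ≤ f ω) :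
    ∫ ω, f ω * (32 + 4 * |blockSum ξ (Cs i)ᶜ ω| ^ 3) ∂μ ≤ (36 + 4 * c) * ∫ ω, f ω ∂μ := by
  have hξ := H.bddMeas
  have hfar := H.bddMeas_blockSum_compl_Cs i
  rw [H.integral_mul_of_near_of_far i hf (by fun_prop), mul_comm,
    BddMeas.integral_add (by fun_prop) (by fun_prop), integral_const_mul, integral_const,
    probReal_univ, one_smul]
  refine mul_le_mul_of_nonneg_right ?_ (integral_nonneg hf₀)
  linarith [BddMeas.integral_abs_pow_le (by fun_prop) hW (n := 3) (by norm_num)]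

variable (R : RandomWindow (sigmaOf ξ (B i)))

lemma integral_smoothHit_mul_randomKernel {j : ι} (hj : j ∉ Cs i) :
    ∫ t, (∫ ω, R.smoothHit δ (blockSum ξ univ ω + t) ω * randomKernel ξ A t j ω ∂μ)
        ∂incrementMeasure =
      ∫ ω, R.primitive δ (blockSum ξ univ ω) ω * ξ j ω ∂μ := by
  have hξ := H.bddMeas
  have hF := R.bddMeas_primitive (H.sigmaOf_le _) (bddMeas_blockSum (S := univ) hξ) δ
  have hFj : BddMeas (sigmaOf ξ (B i) ⊔ sigmaOf ξ (A j)ᶜ)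
      fun ω => R.primitive δ (blockSum ξ (A j)ᶜ ω) ω :=
    R.bddMeas_primitive le_sup_left ((H.bddMeas_blockSum_sigmaOf subset_rfl).mono le_sup_right) δ
  have taylor (ω : Ω) : ∫ t, R.smoothHit δ (blockSum ξ univ ω + t) ω * randomKernel ξ A t j ω
        ∂incrementMeasure =
      R.primitive δ (blockSum ξ univ ω) ω * ξ j ω
        - ξ j ω * R.primitive δ (blockSum ξ (A j)ᶜ ω) ω := by
    simp only [randomKernel, mul_left_comm _ (ξ j ω)]
    rw [integral_const_mul, R.integral_smoothHit_mul_steinKernel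
      (H.abs_blockSum_le (H.A_subset_Ds j) ω), blockSum_compl]
    ring
  rw [BddMeas.integral_comm ((R.bddMeas_uncurry_smoothHit (H.sigmaOf_le _)
    (bddMeas_blockSum hξ) δ).mul (bddMeas_uncurry_randomKernel hξ))]
  simp only [taylor]
  rw [BddMeas.integral_sub (hF.mul (hξ j))
    ((hξ j).mul (hFj.mono (sup_le (H.sigmaOf_le _) (H.sigmaOf_le _)))),
    H.integral_mul_eq_zero_of_notMem_Cs hj hFj, sub_zero]

lemma integral_smoothHit_mul_blockSum_randomKernel :
    ∫ t, (∫ ω, R.smoothHit δ (blockSum ξ univ ω + t) ω *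
        blockSum (randomKernel ξ A t) (Cs i)ᶜ ω ∂μ) ∂incrementMeasure =
      ∫ ω, R.primitive δ (blockSum ξ univ ω) ω * blockSum ξ (Cs i)ᶜ ω ∂μ := by
  have hξ := H.bddMeas
  have hF := R.bddMeas_primitive (H.sigmaOf_le _) (bddMeas_blockSum (S := univ) hξ) δ
  have hK (j : ι) : BddMeas (m0.prod inferInstance) (Function.uncurry fun ω t =>
      R.smoothHit δ (blockSum ξ univ ω + t) ω * randomKernel ξ A t j ω) :=
    (R.bddMeas_uncurry_smoothHit (H.sigmaOf_le _) (bddMeas_blockSum hξ) δ).mul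
      (bddMeas_uncurry_randomKernel hξ)
  simp only [mul_blockSum]
  simp_rw [BddMeas.integral_sum _ fun j => (hK j).left_section _]
  rw [BddMeas.integral_sum _ fun j => (hK j).integral_left,
    BddMeas.integral_sum _ fun j => hF.mul (hξ j)]
  exact Finset.sum_congr rfl fun j hj =>
    H.integral_smoothHit_mul_randomKernel R (Finset.mem_compl.1 hj)

section MainTerms

variable (hW : ∫ ω, blockSum ξ (Cs i)ᶜ ω ^ 4 ∂μ ≤ 105)
include hW

lemma integral_weight_mul_fluctuation_le (hτ : lyapunov μ ξ κ ≤ 1) (t : ℝ) :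
    ∫ ω, R.weight ω * ((32 + 4 * |blockSum ξ (Cs i)ᶜ ω| ^ 3) *
        blockSum (centredKernel μ ξ A t) (Cs i)ᶜ ω ^ 2) ∂μ ≤
      30000 * (∫ ω, R.weight ω ∂μ) * ∑ j, kernelMajorant μ ξ A Ds j t := by
  have hY := H.localFamily_centredKernel t
  have hfar := H.bddMeas_blockSum_compl_Cs i
  have hN := hY.bddMeas_blockSum_biUnion (S := (Cs i)ᶜ) subset_rfl
  rw [H.integral_mul_of_near_of_far i R.bddMeas_weight (by fun_prop), mul_comm 30000, mul_assoc]
  refine mul_le_mul_of_nonneg_left ((hY.integral_weight_mul_sq_blockSum_le H hW hτ).trans ?_)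
    (integral_nonneg R.weight_nonneg)
  exact mul_le_mul_of_nonneg_left
    (Finset.sum_le_sum fun j _ => H.varianceProxy_centredKernel_le j t) (by norm_num)

variable (hδ : 0 < δ) (hδ4 : δ ≤ 1 / 4)
include hδ hδ4

lemma integral_primitive_mul_blockSum_le :
    ∫ ω, R.primitive δ (blockSum ξ univ ω) ω * blockSum ξ (Cs i)ᶜ ω ∂μ ≤
      7624 * R.mass μ δ := by
  have hξ := H.bddMeas
  have hfar := H.bddMeas_blockSum_compl_Cs i
  have hD := R.bddMeas_mass le_rfl δ
  calc _ ≤ ∫ ω, R.weight ω * (R.length ω + δ) *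
          (64 * |blockSum ξ (Cs i)ᶜ ω| ^ 1 + 8 * blockSum ξ (Cs i)ᶜ ω ^ 4) ∂μ := by
        refine BddMeas.integral_mono ((R.bddMeas_primitive (H.sigmaOf_le _)
          (bddMeas_blockSum hξ) δ).mul (bddMeas_blockSum hξ))
          ((hD.mono (H.sigmaOf_le _)).mul (by fun_prop)) fun ω => ?_
        set W := blockSum ξ (Cs i)ᶜ ω with hWdef
        refine (mul_le_mul_of_nonneg_left (le_abs_self W) (R.primitive_nonneg hδ _ ω)).trans ?_
        refine (mul_le_mul_of_nonneg_right (R.primitive_le hδ hδ4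
          (H.abs_blockSum_univ_sub_le i ω)) (abs_nonneg W)).trans_eq ?_
        rw [← hWdef, ← Even.pow_abs (by decide : Even 4) W]
        ring
    _ = R.mass μ δ * (64 * (∫ ω, |blockSum ξ (Cs i)ᶜ ω| ^ 1 ∂μ)
          + 8 * ∫ ω, blockSum ξ (Cs i)ᶜ ω ^ 4 ∂μ) := by
        rw [H.integral_mul_of_near_of_far i hD (by fun_prop),
          BddMeas.integral_add (by fun_prop) (by fun_prop), integral_const_mul, integral_const_mul,
          RandomWindow.mass]
    _ ≤ R.mass μ δ * 7624 := by
        refine mul_le_mul_of_nonneg_left ?_ (R.mass_nonneg μ hδ.le)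
        linarith [BddMeas.integral_abs_pow_le (by fun_prop) hW (n := 1) (by norm_num)]
    _ = _ := mul_comm _ _

lemma integral_integral_smoothHit_le :
    ∫ t, (∫ ω, R.smoothHit δ (blockSum ξ univ ω + t) ω ∂μ) ∂incrementMeasure ≤
      912 * R.mass μ δ := by
  have hξ := H.bddMeas
  have hD : BddMeas (sigmaOf ξ (B i)) fun ω => R.weight ω * (R.length ω + δ) :=
    R.bddMeas_mass le_rfl δ
  have hS := R.bddMeas_uncurry_smoothHit (H.sigmaOf_le _) (bddMeas_blockSum (S := univ) hξ) δ
  calc _ = ∫ ω, (∫ t, R.smoothHit δ (blockSum ξ univ ω + t) ω ∂incrementMeasure) ∂μ :=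
        BddMeas.integral_comm hS
    _ ≤ ∫ ω, 2 * (R.weight ω * (R.length ω + δ) *
          (32 + 4 * |blockSum ξ (Cs i)ᶜ ω| ^ 3)) ∂μ :=
        BddMeas.integral_mono hS.integral_right
          ((BddMeas.const _).mul ((hD.mono (H.sigmaOf_le _)).mul (by fun_prop))) fun ω =>
          (R.integral_smoothHit_le hδ hδ4 (H.abs_blockSum_univ_sub_le i ω)).trans_eq (by ring)
    _ ≤ 2 * ((36 + 4 * 105) * R.mass μ δ) := by
        rw [integral_const_mul]
        exact mul_le_mul_of_nonneg_left (H.integral_mul_cube_far_le hW hD fun ω =>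
          mul_nonneg (R.weight_nonneg ω) (add_nonneg (R.length_nonneg ω) hδ.le)) zero_le_two
    _ = _ := by ring

lemma meanKernel_mul_integral_smoothHit_le (hτ : lyapunov μ ξ κ ≤ 1) (hL : 0 ≤ L)
    (h : Concentrates μ (sigmaOf ξ (B i)) (blockSum ξ univ) δ L) (ht : |t| ≤ 1 / 4) :
    meanKernel μ ξ A (Cs i)ᶜ t * ∫ ω, R.smoothHit δ (blockSum ξ univ ω) ω ∂μ ≤
      ∫ ω, R.smoothHit δ (blockSum ξ univ ω + t) ω * blockSum (randomKernel ξ A t) (Cs i)ᶜ ω ∂μ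
        + 64 * L * (∫ ω, R.weight ω ∂μ) * (|t| * |meanKernel μ ξ A (Cs i)ᶜ t|)
        + 1 / 2 * ∫ ω, R.smoothHit δ (blockSum ξ univ ω + t) ω ∂μ
        + 15000 * (∫ ω, R.weight ω ∂μ) * ∑ j, kernelMajorant μ ξ A Ds j t := by
  have hξ := H.bddMeas
  have hY := (H.localFamily_centredKernel t).bddMeas H
  have hT : BddMeas m0 (blockSum ξ univ) := by fun_prop
  have hs := R.bddMeas_smoothHit (H.sigmaOf_le _) (hT.add (.const t)) δ
  have hs' := R.bddMeas_smoothHit (H.sigmaOf_le _) hT δ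
  have hw := R.bddMeas_weight.mono (H.sigmaOf_le _)
  have perturbed : meanKernel μ ξ A (Cs i)ᶜ t * ∫ ω, R.smoothHit δ (blockSum ξ univ ω) ω ∂μ ≤
      ∫ ω, R.smoothHit δ (blockSum ξ univ ω + t) ω * blockSum (randomKernel ξ A t) (Cs i)ᶜ ω ∂μ
        + |meanKernel μ ξ A (Cs i)ᶜ t| * ∫ ω, |R.smoothHit δ (blockSum ξ univ ω + t) ω
            - R.smoothHit δ (blockSum ξ univ ω) ω| ∂μ
        + 1 / 2 * ∫ ω, R.smoothHit δ (blockSum ξ univ ω + t) ω ∂μ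
        + 1 / 2 * ∫ ω, R.smoothHit δ (blockSum ξ univ ω + t) ω
            * blockSum (centredKernel μ ξ A t) (Cs i)ᶜ ω ^ 2 ∂μ := by
    simp (disch := fun_prop) only [← integral_const_mul, ← BddMeas.integral_add]
    refine BddMeas.integral_mono (by fun_prop) (by fun_prop) fun ω => ?_
    rw [blockSum_randomKernel (μ := μ)]
    exact mul_le_perturbed_mul_add (R.smoothHit_nonneg _ _ _) _ _
  have fluctuation : ∫ ω, R.smoothHit δ (blockSum ξ univ ω + t) ω
        * blockSum (centredKernel μ ξ A t) (Cs i)ᶜ ω ^ 2 ∂μ ≤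
      30000 * (∫ ω, R.weight ω ∂μ) * ∑ j, kernelMajorant μ ξ A Ds j t := by
    refine (BddMeas.integral_mono (by fun_prop) (by fun_prop) fun ω => ?_).trans
      (H.integral_weight_mul_fluctuation_le R hW hτ t)
    rw [← mul_assoc]
    exact mul_le_mul_of_nonneg_right
      (R.smoothHit_le hδ hδ4 (H.abs_blockSum_univ_sub_le i ω) ht) (sq_nonneg _)
  have smoothness := mul_le_mul_of_nonneg_left
    (h.integral_abs_smoothHit_add_sub_le (H.sigmaOf_le _) hT hδ hL (by linarith : δ + |t| ≤ 1) R)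
    (abs_nonneg (meanKernel μ ξ A (Cs i)ᶜ t))
  linarith

lemma integral_meanKernel_mul_integral_smoothHit_le (hτ : lyapunov μ ξ κ ≤ 1) (hL : 0 ≤ L)
    (h : Concentrates μ (sigmaOf ξ (B i)) (blockSum ξ univ) δ L) :
    (∫ t, meanKernel μ ξ A (Cs i)ᶜ t ∂incrementMeasure)
        * ∫ ω, R.smoothHit δ (blockSum ξ univ ω) ω ∂μ ≤
      8080 * R.mass μ δ + (64 * L + 60000) * (lyapunov μ ξ κ * ∫ ω, R.weight ω ∂μ) := by
  have hξ := H.bddMeas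
  have hZ : 0 ≤ ∫ ω, R.weight ω ∂μ := integral_nonneg R.weight_nonneg
  have hM := bddMeas_meanKernel (μ := μ) (A := A) hξ (Cs i)ᶜ
  have hmajorant := bddMeas_kernelMajorant (μ := μ) (A := A) (D := Ds) hξ
  have hS := R.bddMeas_uncurry_smoothHit (H.sigmaOf_le _) (bddMeas_blockSum (S := univ) hξ) δ
  have htM : Integrable (fun t => |t| * |meanKernel μ ξ A (Cs i)ᶜ t|) incrementMeasure :=
    hM.abs.integrable.bdd_mul (c := 1 / 4) (by fun_prop) (by
      filter_upwards [ae_incrementMeasure_abs_le] with t ht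
      rwa [norm_abs_eq_norm])
  have hSK : BddMeas inferInstance fun t => ∫ ω, R.smoothHit δ (blockSum ξ univ ω + t) ω
      * blockSum (randomKernel ξ A t) (Cs i)ᶜ ω ∂μ :=
    (hS.mul (.sum _ fun j _ => bddMeas_uncurry_randomKernel hξ)).integral_left
  have h₁ := hSK.integrable (μ := incrementMeasure)
  have h₂ := htM.const_mul (64 * L * ∫ ω, R.weight ω ∂μ)
  have h₃ := (hS.integral_left (μ := μ)).integrable (μ := incrementMeasure) |>.const_mul (1 / 2)
  have h₄ := (BddMeas.sum univ fun j _ => hmajorant j).integrable (μ := incrementMeasure)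
    |>.const_mul (15000 * ∫ ω, R.weight ω ∂μ)
  have key := integral_mono_ae (hM.mul (.const _)).integrable (((h₁.add h₂).add h₃).add h₄) (by
    filter_upwards [ae_incrementMeasure_abs_le] with t ht
    exact H.meanKernel_mul_integral_smoothHit_le R hW hδ hδ4 hτ hL h ht)
  rw [integral_mul_const, integral_add' ((h₁.add h₂).add h₃) h₄, integral_add' (h₁.add h₂) h₃,
    integral_add' h₁ h₂, integral_const_mul, integral_const_mul, integral_const_mul,
    H.integral_smoothHit_mul_blockSum_randomKernel, BddMeas.integral_sum _ hmajorant] at key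
  linarith [H.integral_primitive_mul_blockSum_le R hW hδ hδ4,
    H.integral_integral_smoothHit_le R hW hδ hδ4,
    mul_le_mul_of_nonneg_left (H.integral_abs_mul_abs_meanKernel_le (Cs i)ᶜ)
      (by positivity : 0 ≤ 64 * L * ∫ ω, R.weight ω ∂μ),
    mul_le_mul_of_nonneg_left H.sum_integral_kernelMajorant_le
      (by positivity : 0 ≤ 15000 * ∫ ω, R.weight ω ∂μ)]

end MainTerms

lemma concentrates_blockSum_univ (i : ι) (hT : 1 / 2 ≤ ∫ ω, blockSum ξ univ ω ^ 2 ∂μ)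
    (hT' : ∫ ω, blockSum ξ univ ω ^ 2 ∂μ ≤ 2) (hδ : 0 < δ) (hδ4 : δ ≤ 1 / 4)
    (hτδ : 512 * lyapunov μ ξ κ ≤ δ) :
    Concentrates μ (sigmaOf ξ (B i)) (blockSum ξ univ) δ 40000 := by
  have hξ := H.bddMeas
  have hTb : BddMeas m0 (blockSum ξ univ) := by fun_prop
  have hW : ∫ ω, blockSum ξ (Cs i)ᶜ ω ^ 4 ∂μ ≤ 105 := by
    linarith [H.integral_blockSum_compl_Cs_pow_four_le i hT']
  have step (L : ℝ) (hL : 0 ≤ L) (h : Concentrates μ (sigmaOf ξ (B i)) (blockSum ξ univ) δ L) :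
      Concentrates μ (sigmaOf ξ (B i)) (blockSum ξ univ) δ (20000 + L / 2) := by
    intro R
    have hD := R.mass_nonneg μ hδ.le
    have hLD := mul_nonneg hL hD
    have error : lyapunov μ ξ κ * ∫ ω, R.weight ω ∂μ ≤ R.mass μ δ / 512 := by
      have := mul_le_mul_of_nonneg_right hτδ (integral_nonneg R.weight_nonneg (μ := μ))
      linarith [R.integral_weight_mul_le_mass (μ := μ) (H.sigmaOf_le _) δ]
    have main := H.integral_meanKernel_mul_integral_smoothHit_le R hW hδ hδ4 (by linarith) hL h
    have mass_kernel := mul_le_mul_of_nonneg_right (H.le_integral_meanKernel i hT)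
      (integral_nonneg (μ := μ) fun ω => R.smoothHit_nonneg δ (blockSum ξ univ ω) ω)
    have error_mul := mul_le_mul_of_nonneg_left error (by positivity : 0 ≤ 64 * L + 60000)
    have hit_le := BddMeas.integral_mono (μ := μ) (R.bddMeas_hit (H.sigmaOf_le _) hTb)
      (R.bddMeas_smoothHit (H.sigmaOf_le _) hTb δ) fun ω => R.hit_le_smoothHit hδ _ ω
    linarith
  convert concentrates_of_step (by norm_num) step hδ.le
    (exists_concentrates (H.sigmaOf_le _) hTb hδ) using 1
  norm_num

end SmoothedWindow

end LocalDependence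

/-! ### Conditional expectations and random endpoints -/

lemma one_add_pow_three_mul_window_le {x l y w : ℝ} (hl : 0 ≤ l) (hw : |y - w| ≤ 1 / 4) :
    (1 + y) ^ 3 * window x l y ≤ 8 * (cubeWeight x * window x l y) + l * (32 + 4 * |w| ^ 3) := by
  have hbound : 0 ≤ 32 + 4 * |w| ^ 3 := by positivity
  by_cases hy : y ∈ Set.Icc x (x + l)
  · rw [window_of_mem hy, mul_one, mul_one]
    refine (one_add_pow_three_le_cubeWeight y).trans ?_
    rcases le_or_gt y (x + 1) with near | far
    · linarith [cubeWeight_le_eight_mul near, mul_nonneg hl hbound]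
    · have hl₁ : 1 ≤ l := by linarith [hy.2]
      linarith [cubeWeight_le_of_le_add_one (by linarith [(abs_le.1 hw).2] : y ≤ w + 1),
        mul_le_mul_of_nonneg_right hl₁ hbound, cubeWeight_nonneg x]
  · simp only [window_of_notMem hy, mul_zero, zero_add]
    exact mul_nonneg hl hbound

lemma condExp_le_of_forall_setIntegral_le {Ω : Type*} {m m0 : MeasurableSpace Ω} {μ : Measure Ω}
    (hm : m ≤ m0) [SigmaFinite (μ.trim hm)] {f g : Ω → ℝ} (hf : Integrable f μ)
    (hg : Integrable g μ) (hgm : StronglyMeasurable[m] g)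
    (h : ∀ s, MeasurableSet[m] s → μ s < ⊤ → ∫ ω in s, f ω ∂μ ≤ ∫ ω in s, g ω ∂μ) :
    μ[f | m] ≤ᵐ[μ] g := by
  refine ae_le_of_ae_le_trim (hm := hm) (ae_le_of_forall_setIntegral_le
    (integrable_condExp.trim hm stronglyMeasurable_condExp) (hg.trim hm hgm) fun s hs hμs => ?_)
  rw [← setIntegral_trim hm stronglyMeasurable_condExp hs, ← setIntegral_trim hm hgm hs,
    setIntegral_condExp hm hf hs]
  exact h s hs (trim_measurableSet_eq hm hs ▸ hμs)

lemma projIcc_le_and_le_projIcc_iff {K : ℝ} (hK : -K ≤ K) {x x' y : ℝ} (hy : |y| < K) :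
    (Set.projIcc (-K) K hK x : ℝ) ≤ y ∧ y ≤ Set.projIcc (-K) K hK x' ↔ x ≤ y ∧ y ≤ x' := by
  obtain ⟨hy₁, hy₂⟩ := abs_lt.1 hy
  simp only [Set.coe_projIcc, max_le_iff, min_le_iff, le_max_iff, le_min_iff]
  grind

lemma bddMeas_projIcc {Ω : Type*} {m : MeasurableSpace Ω} {K : ℝ} (hK : -K ≤ K) {f : Ω → ℝ}
    (hf : Measurable[m] f) : BddMeas m fun ω => (Set.projIcc (-K) K hK (f ω) : ℝ) :=
  ⟨(continuous_subtype_val.comp continuous_projIcc).measurable.comp hf, K,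
    fun ω => abs_le.2 (Set.projIcc (-K) K hK (f ω)).2⟩

namespace RandomWindow

variable {Ω : Type*} {m m0 : MeasurableSpace Ω} {s : Set Ω} {a b : Ω → ℝ} {K : ℝ}

/-- `hit` with the weight `(1 + y)³` of the theorem, taken at `y` instead of the left endpoint. -/
noncomputable def cubeHit (R : RandomWindow m) (y : ℝ) (ω : Ω) : ℝ :=
  R.weight ω * ((1 + y) ^ 3 * window (R.left ω) (R.length ω) y)

lemma bddMeas_cubeHit (R : RandomWindow m) (hm : m ≤ m0) {T : Ω → ℝ} (hT : BddMeas m0 T) :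
    BddMeas m0 fun ω => R.cubeHit (T ω) ω :=
  (R.bddMeas_weight.mono hm).mul ((((BddMeas.const 1).add hT).pow 3).mul
    (bddMeas_window (R.bddMeas_left.mono hm) (R.bddMeas_length.mono hm) hT))

/-- The random interval `[a, b]` on the event `s`, with both endpoints truncated to `[-K, K]`;
for a random variable with values in `(-K, K)` the truncation is invisible. -/
noncomputable def ofEndpoints (hs : MeasurableSet[m] s) (ha : Measurable[m] a)
    (hb : Measurable[m] b) (hab : ∀ ω, a ω ≤ b ω) (hK : -K ≤ K) : RandomWindow m where
  weight := s.indicator 1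
  left ω := Set.projIcc (-K) K hK (a ω)
  length ω := Set.projIcc (-K) K hK (b ω) - Set.projIcc (-K) K hK (a ω)
  bddMeas_weight := ⟨(@measurable_one _ _ _ m).indicator hs, 1, fun ω => by
    by_cases hω : ω ∈ s <;> simp [hω]⟩
  bddMeas_left := bddMeas_projIcc hK ha
  bddMeas_length := (bddMeas_projIcc hK hb).sub (bddMeas_projIcc hK ha)
  weight_nonneg := Set.indicator_nonneg fun _ _ => zero_le_one
  length_nonneg ω := sub_nonneg.2 (Set.monotone_projIcc hK (hab ω))

variable (hs : MeasurableSet[m] s) (ha : Measurable[m] a) (hb : Measurable[m] b)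
  (hab : ∀ ω, a ω ≤ b ω) (hK : -K ≤ K)

lemma length_ofEndpoints_le (ω : Ω) :
    (ofEndpoints hs ha hb hab hK).length ω ≤ b ω - a ω :=
  (le_abs_self _).trans ((Set.abs_projIcc_sub_projIcc hK).trans_eq
    (abs_of_nonneg (sub_nonneg.2 (hab ω))))

lemma cubeHit_ofEndpoints {T : Ω → ℝ} (hT : ∀ ω, |T ω| < K) (ω : Ω) :
    (ofEndpoints hs ha hb hab hK).cubeHit (T ω) ω = s.indicator (fun ω => (1 + T ω) ^ 3 *
      Set.indicator {ω | a ω ≤ T ω ∧ T ω ≤ b ω} (fun _ => (1 : ℝ)) ω) ω := by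
  have hwindow : window ((ofEndpoints hs ha hb hab hK).left ω)
      ((ofEndpoints hs ha hb hab hK).length ω) (T ω) =
        Set.indicator {ω | a ω ≤ T ω ∧ T ω ≤ b ω} (fun _ => (1 : ℝ)) ω := by
    simp only [ofEndpoints, window, add_sub_cancel, Set.indicator_apply, Set.mem_Icc,
      projIcc_le_and_le_projIcc_iff hK (hT ω), Set.mem_ofPred_eq]
  rw [cubeHit, hwindow]
  by_cases hω : ω ∈ s <;> simp [ofEndpoints, hω]

lemma mass_ofEndpoints {μ : Measure[m0] Ω} (hm : m ≤ m0) (δ : ℝ) :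
    (ofEndpoints hs ha hb hab hK).mass μ δ =
      ∫ ω in s, ((ofEndpoints hs ha hb hab hK).length ω + δ) ∂μ := by
  rw [← integral_indicator (hm s hs), mass]
  refine integral_congr_ae (.of_forall fun ω => ?_)
  by_cases hω : ω ∈ s <;> simp [ofEndpoints, hω]

end RandomWindow

namespace LocalDependence

section Conditioning

variable {Ω ι : Type*} [m0 : MeasurableSpace Ω] {μ : Measure Ω} [IsProbabilityMeasure μ]
  [Fintype ι] [DecidableEq ι] {ξ : ι → Ω → ℝ} {A B Bs Cs Ds : ι → Finset ι} {κ : ℕ} {i : ι}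
  (H : LocalDependence μ ξ A B Bs Cs Ds κ)
include H

lemma lyapunov_pos (i : ι) (hT : 0 < ∫ ω, blockSum ξ univ ω ^ 2 ∂μ) : 0 < lyapunov μ ξ κ := by
  have hnonneg (j : ι) : 0 ≤ ∫ ω, |ξ j ω| ^ 3 ∂μ := integral_nonneg fun _ => by positivity
  refine mul_pos (pow_pos (H.kappa_pos i) 2)
    ((Finset.sum_nonneg fun j _ => hnonneg j).lt_of_ne' fun hsum => hT.ne' ?_)
  have hξ (j : ι) : ∀ᵐ ω ∂μ, ξ j ω = 0 := by
    have := (integral_eq_zero_iff_of_nonneg (fun _ => by positivity)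
      ((H.bddMeas j).abs.pow 3).integrable).1
        ((Finset.sum_eq_zero_iff_of_nonneg fun j _ => hnonneg j).1 hsum j (Finset.mem_univ j))
    filter_upwards [this] with ω hω
    simpa using hω
  refine integral_eq_zero_of_ae ?_
  filter_upwards [ae_all_iff.2 hξ] with ω hω
  simp [blockSum, hω]

variable (R : RandomWindow (sigmaOf ξ (B i)))
  (hT : 1 / 2 ≤ ∫ ω, blockSum ξ univ ω ^ 2 ∂μ) (hT' : ∫ ω, blockSum ξ univ ω ^ 2 ∂μ ≤ 2)
include hT'

lemma integral_cubeHit_le_of_le_lyapunov (hτ : 1 / 2048 ≤ lyapunov μ ξ κ) :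
    ∫ ω, R.cubeHit (blockSum ξ univ ω) ω ∂μ ≤ 11000000 * R.mass μ (16 * lyapunov μ ξ κ) := by
  have hξ := H.bddMeas
  have hw := R.bddMeas_weight.mono (H.sigmaOf_le _)
  have hZ : 0 ≤ ∫ ω, R.weight ω ∂μ := integral_nonneg R.weight_nonneg
  have crude : ∫ ω, R.cubeHit (blockSum ξ univ ω) ω ∂μ ≤
      ∫ ω, R.weight ω * (32 + 4 * |blockSum ξ (Cs i)ᶜ ω| ^ 3) ∂μ := by
    refine BddMeas.integral_mono (R.bddMeas_cubeHit (H.sigmaOf_le _) (bddMeas_blockSum hξ))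
      (by fun_prop) fun ω => mul_le_mul_of_nonneg_left ?_ (R.weight_nonneg ω)
    have hfar := (le_abs_self _).trans (H.abs_blockSum_univ_sub_le i ω)
    by_cases hy : blockSum ξ univ ω ∈ Set.Icc (R.left ω) (R.left ω + R.length ω)
    · rw [window_of_mem hy, mul_one]
      exact (one_add_pow_three_le_cubeWeight _).trans (cubeWeight_le_of_le_add_one (by linarith))
    · rw [window_of_notMem hy, mul_zero]
      positivity
  linarith [mul_le_mul_of_nonneg_right hτ hZ,
    H.integral_mul_cube_far_le (H.integral_blockSum_compl_Cs_pow_four_le i hT')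
      R.bddMeas_weight R.weight_nonneg,
    R.integral_weight_mul_le_mass (μ := μ) (H.sigmaOf_le _) (16 * lyapunov μ ξ κ)]

include hT

lemma integral_cubeHit_le_of_lyapunov_le (hτ : lyapunov μ ξ κ ≤ 1 / 2048) :
    ∫ ω, R.cubeHit (blockSum ξ univ ω) ω ∂μ ≤ 11000000 * R.mass μ (16 * lyapunov μ ξ κ) := by
  have hξ := H.bddMeas
  have hτ₀ := H.lyapunov_pos i (by linarith)
  have hW : ∫ ω, blockSum ξ (Cs i)ᶜ ω ^ 4 ∂μ ≤ 105 := by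
    linarith [H.integral_blockSum_compl_Cs_pow_four_le i hT']
  have hwl := R.bddMeas_weight.mul R.bddMeas_length
  have hwl' := hwl.mono (H.sigmaOf_le _)
  have hhit := R.bddMeas_hit (H.sigmaOf_le (B i)) (bddMeas_blockSum (S := univ) hξ)
  have pointwise : ∫ ω, R.cubeHit (blockSum ξ univ ω) ω ∂μ ≤
      8 * ∫ ω, R.hit (blockSum ξ univ ω) ω ∂μ
        + ∫ ω, R.weight ω * R.length ω * (32 + 4 * |blockSum ξ (Cs i)ᶜ ω| ^ 3) ∂μ := by
    rw [← integral_const_mul, ← BddMeas.integral_add (by fun_prop) (by fun_prop)]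
    refine BddMeas.integral_mono (R.bddMeas_cubeHit (H.sigmaOf_le _) (by fun_prop))
      (by fun_prop) fun ω => ?_
    refine (mul_le_mul_of_nonneg_left (one_add_pow_three_mul_window_le (R.length_nonneg ω)
      (H.abs_blockSum_univ_sub_le i ω)) (R.weight_nonneg ω)).trans_eq ?_
    rw [RandomWindow.hit]
    ring
  have inside := H.concentrates_blockSum_univ i hT hT' (by positivity) (by linarith) le_rfl R
  have outside := H.integral_mul_cube_far_le hW hwl fun ω =>
    mul_nonneg (R.weight_nonneg ω) (R.length_nonneg ω)
  rw [R.mass_eq (H.sigmaOf_le _)] at inside ⊢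
  have hZτ := mul_nonneg (integral_nonneg (μ := μ) R.weight_nonneg) hτ₀.le
  linarith [R.integral_weight_mul_length_nonneg μ]

lemma integral_cubeHit_le :
    ∫ ω, R.cubeHit (blockSum ξ univ ω) ω ∂μ ≤ 11000000 * R.mass μ (16 * lyapunov μ ξ κ) :=
  (le_total (lyapunov μ ξ κ) (1 / 2048)).elim (H.integral_cubeHit_le_of_lyapunov_le R hT hT')
    (H.integral_cubeHit_le_of_le_lyapunov R hT')

end Conditioning

lemma comap_le_sigmaOf_B {Ω ι : Type*} [MeasurableSpace Ω] {μ : Measure Ω} [Fintype ι]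
    [DecidableEq ι] {ξ : ι → Ω → ℝ} {A B Bs Cs Ds : ι → Finset ι} {κ : ℕ}
    (H : LocalDependence μ ξ A B Bs Cs Ds κ) (i : ι) :
    MeasurableSpace.comap (fun ω => (ξ i ω, blockSum ξ (A i) ω, blockSum ξ (B i) ω))
      inferInstance ≤ sigmaOf ξ (B i) :=
  measurable_iff_comap_le.1 ((measurable_sigmaOf (H.A_subset_B i (H.mem_A i))).prodMk
    ((H.bddMeas_blockSum_sigmaOf (H.A_subset_B i)).1.prodMk
      (H.bddMeas_blockSum_sigmaOf subset_rfl).1))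

section OfIndepFun

variable {Ω ι : Type*} {X ξ : ι → Ω → ℝ}

lemma sigmaOf_le_of_measurable {m : MeasurableSpace Ω} {S : Finset ι}
    (h : ∀ k ∈ S, Measurable[m] (ξ k)) : sigmaOf ξ S ≤ m :=
  iSup₂_le fun k hk => (h k hk).comap_le

variable (hξ : ∀ k, Measurable[.comap (X k) inferInstance] (ξ k))
include hξ

lemma sigmaOf_le_comap_pi (S : Finset ι) :
    sigmaOf ξ S ≤ MeasurableSpace.comap (fun ω (j : S) => X j ω) inferInstance :=
  sigmaOf_le_of_measurable fun k hk => (hξ k).mono (measurable_iff_comap_le.1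
    ((measurable_pi_apply (X := fun _ : S => ℝ) ⟨k, hk⟩).comp (comap_measurable _))) le_rfl

lemma sigmaOf_biUnion_le_comap_pi [DecidableEq ι] (A : ι → Finset ι) (S : Finset ι) :
    sigmaOf ξ (S.biUnion A) ≤
      MeasurableSpace.comap (fun ω (l : S) (j : A l) => X j ω) inferInstance := by
  refine sigmaOf_le_of_measurable fun k hk => ?_
  obtain ⟨l, hl, hkl⟩ := Finset.mem_biUnion.1 hk
  exact (hξ k).mono (measurable_iff_comap_le.1
    ((measurable_pi_apply (X := fun _ : A l => ℝ) ⟨k, hkl⟩).comp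
      ((measurable_pi_apply (X := fun l : S => A l → ℝ) ⟨l, hl⟩).comp
        (comap_measurable _)))) le_rfl

variable [MeasurableSpace Ω] {μ : Measure Ω} [Fintype ι] [DecidableEq ι]
  {A B Bs Cs Ds : ι → Finset ι} {κ : ℕ}

lemma of_indepFun (hX : ∀ i, Measurable (X i)) (hA : ∀ i, i ∈ A i) (hAB : ∀ i, A i ⊆ B i)
    (hBBs : ∀ i, B i ⊆ Bs i) (hBsCs : ∀ i, Bs i ⊆ Cs i) (hCsDs : ∀ i, Cs i ⊆ Ds i)
    (h_single : ∀ i, IndepFun (X i) (fun ω (j : ((A i)ᶜ : Finset ι)) => X j ω) μ)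
    (h_A_B : ∀ i, IndepFun (fun ω (j : A i) => X j ω)
      (fun ω (j : ((B i)ᶜ : Finset ι)) => X j ω) μ)
    (h_A_Bs : ∀ i, IndepFun (fun ω (j : A i) => X j ω)
      (fun ω (l : ((Bs i)ᶜ : Finset ι)) (j : A l) => X j ω) μ)
    (h_Bs_Cs : ∀ i, IndepFun (fun ω (l : Bs i) (j : A l) => X j ω)
      (fun ω (l : ((Cs i)ᶜ : Finset ι)) (j : A l) => X j ω) μ)
    (h_Cs_Ds : ∀ i, IndepFun (fun ω (l : Cs i) (j : A l) => X j ω)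
      (fun ω (l : ((Ds i)ᶜ : Finset ι)) (j : A l) => X j ω) μ)
    (hmean : ∀ i, ∫ ω, ξ i ω ∂μ = 0) (hbound : ∀ i ω, |ξ i ω| ≤ 1 / (4 * (κ : ℝ)))
    (hκ : ∀ i, max (Ds i).card (univ.filter fun j => i ∈ Ds j).card ≤ κ) :
    LocalDependence μ ξ A B Bs Cs Ds κ where
  measurable j := (hξ j).mono (hX j).comap_le le_rfl
  mem_A := hA
  A_subset_B := hAB
  B_subset_Bs := hBBs
  Bs_subset_Cs := hBsCs
  Cs_subset_Ds := hCsDs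
  indep_single j := indep_of_indep_of_le ((IndepFun_iff_Indep _ _ _).1 (h_single j))
    (sigmaOf_le_of_measurable fun k hk => Finset.mem_singleton.1 hk ▸ hξ k)
    (sigmaOf_le_comap_pi hξ _)
  indep_A_B j := indep_of_indep_of_le ((IndepFun_iff_Indep _ _ _).1 (h_A_B j))
    (sigmaOf_le_comap_pi hξ _) (sigmaOf_le_comap_pi hξ _)
  indep_A_Bs j := indep_of_indep_of_le ((IndepFun_iff_Indep _ _ _).1 (h_A_Bs j))
    (sigmaOf_le_comap_pi hξ _) (sigmaOf_biUnion_le_comap_pi hξ A _)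
  indep_Bs_Cs j := indep_of_indep_of_le ((IndepFun_iff_Indep _ _ _).1 (h_Bs_Cs j))
    (sigmaOf_biUnion_le_comap_pi hξ A _) (sigmaOf_biUnion_le_comap_pi hξ A _)
  indep_Cs_Ds j := indep_of_indep_of_le ((IndepFun_iff_Indep _ _ _).1 (h_Cs_Ds j))
    (sigmaOf_biUnion_le_comap_pi hξ A _) (sigmaOf_biUnion_le_comap_pi hξ A _)
  integral_eq_zero := hmean
  abs_le := hbound
  card_Ds_le j := (le_max_left _ _).trans (hκ j)
  multiplicity_Ds_le k := (le_max_right _ _).trans (hκ k)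

end OfIndepFun

end LocalDependence

end SteinConcentration

open SteinConcentration in
theorem stmt_13_general {Ω ι : Type*} {m m0 : MeasurableSpace Ω} {μ : Measure Ω}
    [IsProbabilityMeasure μ] [Fintype ι] [DecidableEq ι] {ξ : ι → Ω → ℝ}
    {A B Bs Cs Ds : ι → Finset ι} {κ : ℕ} (H : LocalDependence μ ξ A B Bs Cs Ds κ)
    (hT : 1 / 2 ≤ ∫ ω, blockSum ξ Finset.univ ω ^ 2 ∂μ)
    (hT' : ∫ ω, blockSum ξ Finset.univ ω ^ 2 ∂μ ≤ 2) (i : ι) (hm : m ≤ sigmaOf ξ (B i))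
    {a b : Ω → ℝ} (ha : Measurable[m] a) (hb : Measurable[m] b) (hab : ∀ ω, a ω ≤ b ω) :
    ∀ᵐ ω ∂μ, (μ[fun ω => (1 + blockSum ξ Finset.univ ω) ^ 3 *
        Set.indicator {ω | a ω ≤ blockSum ξ Finset.univ ω ∧ blockSum ξ Finset.univ ω ≤ b ω}
          (fun _ => (1 : ℝ)) ω | m]) ω ≤
      11000000 * (b ω - a ω + 16 * lyapunov μ ξ κ) := by
  have hm0 := hm.trans (H.sigmaOf_le _)
  have hTb : BddMeas m0 (blockSum ξ Finset.univ) := bddMeas_blockSum H.bddMeas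
  obtain ⟨K, hK₀, hTK⟩ : ∃ K : ℝ, -K ≤ K ∧ ∀ ω, |blockSum ξ Finset.univ ω| < K := by
    obtain ⟨K, hK⟩ := hTb.2
    exact ⟨|K| + 1, by linarith [abs_nonneg K], fun ω => by linarith [hK ω, le_abs_self K]⟩
  let R {s} (hs : MeasurableSet[m] s) := RandomWindow.ofEndpoints hs ha hb hab hK₀
  have hf := ((R .univ).bddMeas_cubeHit hm0 hTb).integrable (μ := μ)
  simp only [R, RandomWindow.cubeHit_ofEndpoints _ _ _ _ _ hTK, Set.indicator_univ] at hf
  have hg : BddMeas m fun ω => 11000000 * ((R .univ).length ω + 16 * lyapunov μ ξ κ) :=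
    (BddMeas.const _).mul ((R .univ).bddMeas_length.add (.const _))
  refine (condExp_le_of_forall_setIntegral_le hm0 hf (hg.mono hm0).integrable
    hg.1.stronglyMeasurable fun s hs _ => ?_).mono fun ω hω => ?_
  · rw [integral_const_mul, ← integral_indicator (hm0 s hs)]
    have bound := H.integral_cubeHit_le (RandomWindow.ofEndpoints (hm s hs) (ha.mono hm le_rfl)
      (hb.mono hm le_rfl) hab hK₀) hT hT'
    simp only [RandomWindow.cubeHit_ofEndpoints _ _ _ _ _ hTK,
      RandomWindow.mass_ofEndpoints _ _ _ _ _ (H.sigmaOf_le _)] at bound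
    exact bound
  · exact hω.trans (mul_le_mul_of_nonneg_left (add_le_add_left
      (RandomWindow.length_ofEndpoints_le .univ ha hb hab hK₀ ω) _) (by norm_num))

open SteinConcentration in
theorem stmt_13 :
    ∃ C : ℝ, 0 < C ∧
    ∀ (Ω : Type) [MeasurableSpace Ω] (μ : Measure Ω) [IsProbabilityMeasure μ]
      (ι : Type) [Fintype ι] [DecidableEq ι]
      (X : ι → Ω → ℝ) (A B Bstar Cstar Dstar : ι → Finset ι),
      (∀ i, Measurable (X i)) →
      (∀ i, i ∈ A i) → (∀ i, A i ⊆ B i) → (∀ i, B i ⊆ Bstar i) →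
      (∀ i, Bstar i ⊆ Cstar i) → (∀ i, Cstar i ⊆ Dstar i) →
      (∀ i, IndepFun (X i) (fun ω => fun j : ((A i)ᶜ : Finset ι) => X j.1 ω) μ) →
      (∀ i, IndepFun (fun ω => fun j : (A i : Finset ι) => X j.1 ω)
        (fun ω => fun j : ((B i)ᶜ : Finset ι) => X j.1 ω) μ) →
      (∀ i, IndepFun (fun ω => fun j : (A i : Finset ι) => X j.1 ω)
        (fun ω => fun l : ((Bstar i)ᶜ : Finset ι) =>
          fun j : (A l.1 : Finset ι) => X j.1 ω) μ) →
      (∀ i, IndepFun (fun ω => fun l : (Bstar i : Finset ι) =>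
          fun j : (A l.1 : Finset ι) => X j.1 ω)
        (fun ω => fun l : ((Cstar i)ᶜ : Finset ι) =>
          fun j : (A l.1 : Finset ι) => X j.1 ω) μ) →
      (∀ i, IndepFun (fun ω => fun l : (Cstar i : Finset ι) =>
          fun j : (A l.1 : Finset ι) => X j.1 ω)
        (fun ω => fun l : ((Dstar i)ᶜ : Finset ι) =>
          fun j : (A l.1 : Finset ι) => X j.1 ω) μ) →
    ∀ (κ : ℕ), (κ = Finset.univ.sup fun i => max (Dstar i).card
        (Finset.univ.filter fun j => i ∈ Dstar j).card) →
    ∀ (ξ : ι → Ω → ℝ),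
      (∀ i, ∃ g : ℝ → ℝ, Measurable g ∧ ∀ ω, ξ i ω = g (X i ω)) →
      (∀ i, ∫ ω, ξ i ω ∂μ = 0) →
      (∀ i ω, |ξ i ω| ≤ 1 / (4 * (κ : ℝ))) →
    ∀ (T : Ω → ℝ), (∀ ω, T ω = ∑ j, ξ j ω) →
      (1 / 2 ≤ ∫ ω, (T ω) ^ 2 ∂μ) → (∫ ω, (T ω) ^ 2 ∂μ) ≤ 2 →
    ∀ (i : ι) (ζ : Ω → ℝ × ℝ × ℝ),
      (∀ ω, ζ ω = (ξ i ω, ∑ l ∈ A i, ξ l ω, ∑ l ∈ B i, ξ l ω)) →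
    ∀ (α : ℝ), (α = 16 * (κ : ℝ) ^ 2 * ∑ j, ∫ ω, |ξ j ω| ^ 3 ∂μ) →
    ∀ (a b : ℝ × ℝ × ℝ → ℝ), Measurable a → Measurable b →
      (∀ x, 0 ≤ a x) → (∀ x, a x ≤ b x) →
    ∀ᵐ ω ∂μ,
      (μ[fun ω' => (1 + T ω') ^ 3 *
            Set.indicator {ω'' | a (ζ ω'') ≤ T ω'' ∧ T ω'' ≤ b (ζ ω'')}
              (fun _ => (1 : ℝ)) ω' |
          MeasurableSpace.comap ζ inferInstance]) ω ≤
        C * (b (ζ ω) - a (ζ ω) + α) := by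
  refine ⟨11000000, by norm_num, ?_⟩
  intro Ω _ μ _ ι _ _ X A B Bs Cs Ds hX hA hAB hBBs hBsCs hCsDs h_single h_A_B h_A_Bs h_Bs_Cs
    h_Cs_Ds κ hκ ξ hξ hmean hbound T hT h₁ h₂ i ζ hζ α hα a b ha hb _ hab
  obtain rfl : T = blockSum ξ Finset.univ := funext hT
  obtain rfl : ζ = fun ω => (ξ i ω, blockSum ξ (A i) ω, blockSum ξ (B i) ω) := funext hζ
  have hα' : α = 16 * lyapunov μ ξ κ := hα.trans (mul_assoc _ _ _)
  have hξX (k : ι) : Measurable[.comap (X k) inferInstance] (ξ k) := by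
    obtain ⟨g, hg, hgX⟩ := hξ k
    exact funext hgX ▸ hg.comp (comap_measurable _)
  have H : LocalDependence μ ξ A B Bs Cs Ds κ :=
    .of_indepFun hξX hX hA hAB hBBs hBsCs hCsDs h_single h_A_B h_A_Bs h_Bs_Cs h_Cs_Ds hmean hbound
      fun j => hκ ▸ Finset.le_sup (f := fun i => max (Ds i).card
        (Finset.univ.filter fun j => i ∈ Ds j).card) (Finset.mem_univ j)
  exact hα' ▸ stmt_13_general H h₁ h₂ i (H.comap_le_sigmaOf_B i) (ha.comp (comap_measurable _))
    (hb.comp (comap_measurable _)) fun ω => hab _
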